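/- arXiv:1411.3463 — 10 statements merged into one kernel-verified Lean document; each statement's English description precedes it below -/
import Mathlib

section
/- Fix a positive integer M. Define reals v_i^{(m)}, w_i^{(m)} (i = 1,…,N, m = 0,…,M) and z_i^{(q)} (i = 1,…,N, q = 0,…,M−1) by: v_i^{(0)} = 1 and w_i^{(0)} = 1 for all i; for p = 1,…,M: v_N^{(p)} = w_N^{(p−1)}/q_N, v_i^{(p)} = (e_i·v_{i+1}^{(p)} + z_i^{(p−1)} − w_i^{(p−1)})/q_i for i = 1,…,N−1, w_1^{(p)} = v_1^{(p−1)}/q_1, w_i^{(p)} = (e_{i−1}·w_{i−1}^{(p)} + z_i^{(p−1)} − v_i^{(p−1)})/q_i for i = 2,…,N; and for q = 0,…,M−1: z_1^{(q)} = 2·v_1^{(q)}, z_i^{(q)} = z_{i−1}^{(q)} + 2(v_i^{(q)} − w_{i−1}^{(q)}) for i = 2,…,N. Then for every m = 0,…,M and every i = 1,…,N, v_i^{(m)} equals the (i,i)-entry of (B^⊤B)^{−m} and w_i^{(m)} equals the (i,i)-entry of (BB^⊤)^{−m}. -/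
open Matrix

section Helpers

variable {N : ℕ} {q e : ℕ → ℝ} {B : Matrix (Fin N) (Fin N) ℝ}

lemma bmul_succ (hB : ∀ i j : Fin N, B i j =
      if (j : ℕ) = (i : ℕ) then Real.sqrt (q i)
      else if (j : ℕ) = (i : ℕ) + 1 then Real.sqrt (e i) else 0)
    (Z : Matrix (Fin N) (Fin N) ℝ) (i : ℕ) (hi : i + 1 < N) (j : Fin N) :
    (B * Z) ⟨i, by omega⟩ j = √(q i) * Z ⟨i, by omega⟩ j + √(e i) * Z ⟨i + 1, hi⟩ j := by
  have hne : (⟨i, by omega⟩ : Fin N) ≠ ⟨i + 1, hi⟩ := by simp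
  rw [Matrix.mul_apply, Fintype.sum_eq_add _ _ hne]
  · simp [hB]
  · rintro ⟨k, hk⟩ ⟨h1, h2⟩
    simp only [ne_eq, Fin.mk.injEq] at h1 h2
    simp [hB, h1, h2]

lemma bmul_last (hB : ∀ i j : Fin N, B i j =
      if (j : ℕ) = (i : ℕ) then Real.sqrt (q i)
      else if (j : ℕ) = (i : ℕ) + 1 then Real.sqrt (e i) else 0)
    (Z : Matrix (Fin N) (Fin N) ℝ) (i : ℕ) (hi : i < N) (hl : ¬ i + 1 < N) (j : Fin N) :
    (B * Z) ⟨i, hi⟩ j = √(q i) * Z ⟨i, hi⟩ j := by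
  rw [Matrix.mul_apply, Fintype.sum_eq_single ⟨i, hi⟩]
  · simp [hB]
  · rintro ⟨k, hk⟩ h1
    simp only [ne_eq, Fin.mk.injEq] at h1
    have h2 : ¬ k = i + 1 := by omega
    simp [hB, h1, h2]

lemma btmul_succ (hB : ∀ i j : Fin N, B i j =
      if (j : ℕ) = (i : ℕ) then Real.sqrt (q i)
      else if (j : ℕ) = (i : ℕ) + 1 then Real.sqrt (e i) else 0)
    (Z : Matrix (Fin N) (Fin N) ℝ) (i : ℕ) (hi : i + 1 < N) (j : Fin N) :
    (Bᵀ * Z) ⟨i + 1, hi⟩ j =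
      √(q (i + 1)) * Z ⟨i + 1, hi⟩ j + √(e i) * Z ⟨i, by omega⟩ j := by
  have hne : (⟨i + 1, hi⟩ : Fin N) ≠ ⟨i, by omega⟩ := by simp
  rw [Matrix.mul_apply, Fintype.sum_eq_add _ _ hne]
  · simp [hB]
  · rintro ⟨k, hk⟩ ⟨h1, h2⟩
    simp only [ne_eq, Fin.mk.injEq] at h1 h2
    have h3 : ¬ i + 1 = k := by omega
    have h4 : ¬ i = k := by omega
    simp [hB, h3, h4]

lemma btmul_zero (hB : ∀ i j : Fin N, B i j =
      if (j : ℕ) = (i : ℕ) then Real.sqrt (q i)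
      else if (j : ℕ) = (i : ℕ) + 1 then Real.sqrt (e i) else 0)
    (Z : Matrix (Fin N) (Fin N) ℝ) (hi : 0 < N) (j : Fin N) :
    (Bᵀ * Z) ⟨0, hi⟩ j = √(q 0) * Z ⟨0, hi⟩ j := by
  rw [Matrix.mul_apply, Fintype.sum_eq_single ⟨0, hi⟩]
  · simp [hB]
  · rintro ⟨k, hk⟩ h1
    simp only [ne_eq, Fin.mk.injEq] at h1
    have h3 : ¬ 0 = k := by omega
    simp [hB, h3]

lemma isUnit_det_B (hq : ∀ i, i < N → 0 < q i) (hB : ∀ i j : Fin N, B i j =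
      if (j : ℕ) = (i : ℕ) then Real.sqrt (q i)
      else if (j : ℕ) = (i : ℕ) + 1 then Real.sqrt (e i) else 0) : IsUnit B.det := by
  have hT : B.BlockTriangular id := by
    intro i j hij
    have h : (j : ℕ) < i := hij
    have h1 : ¬ (j : ℕ) = i := by omega
    have h2 : ¬ (j : ℕ) = i + 1 := by omega
    simp [hB, h1, h2]
  rw [Matrix.det_of_isUpperTriangular hT, isUnit_iff_ne_zero]
  refine Finset.prod_ne_zero_iff.mpr fun i _ => ?_
  simpa [hB] using (Real.sqrt_pos.mpr (hq i i.2)).ne'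

lemma intertwine (hU : IsUnit B.det) (m : ℕ) :
    B * (Bᵀ * B)⁻¹ ^ m = (B * Bᵀ)⁻¹ ^ m * B := by
  have hUT : IsUnit (Bᵀ).det := by rwa [Matrix.det_transpose]
  have h1 : B * (Bᵀ * B)⁻¹ = (B * Bᵀ)⁻¹ * B := by
    rw [Matrix.mul_inv_rev, Matrix.mul_inv_rev, ← Matrix.mul_assoc, Matrix.mul_nonsing_inv _ hU,
      Matrix.mul_assoc, Matrix.nonsing_inv_mul _ hU, Matrix.one_mul, Matrix.mul_one]
  induction m with
  | zero => simp
  | succ m ih => rw [pow_succ, ← Matrix.mul_assoc, ih, Matrix.mul_assoc, h1, ← Matrix.mul_assoc,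
      ← pow_succ]

end Helpers

/-- the recurrence of Kimura et al. computes the diagonal entries of
`(BᵀB)^{-m}` and `(BBᵀ)^{-m}` for `m = 0, …, M`. Indices are 0-based: the paper's
1-based `v_i^{(m)}` is `v m (i-1)`, etc. -/
theorem stmt_1 (N : ℕ) (hN : 0 < N) (q e : ℕ → ℝ)
    (hq : ∀ i, i < N → 0 < q i) (he : ∀ i, i + 1 < N → 0 < e i)
    (B : Matrix (Fin N) (Fin N) ℝ)
    (hB : ∀ i j : Fin N, B i j =
      if (j : ℕ) = (i : ℕ) then Real.sqrt (q i)
      else if (j : ℕ) = (i : ℕ) + 1 then Real.sqrt (e i) else 0)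
    (M : ℕ) (hM : 1 ≤ M)
    (v w z : ℕ → ℕ → ℝ)
    (hv0 : ∀ i, i < N → v 0 i = 1)
    (hw0 : ∀ i, i < N → w 0 i = 1)
    (hvN : ∀ p, 1 ≤ p → p ≤ M → v p (N - 1) = w (p - 1) (N - 1) / q (N - 1))
    (hvi : ∀ p, 1 ≤ p → p ≤ M → ∀ i, i + 1 < N →
      v p i = (e i * v p (i + 1) + z (p - 1) i - w (p - 1) i) / q i)
    (hw1 : ∀ p, 1 ≤ p → p ≤ M → w p 0 = v (p - 1) 0 / q 0)
    (hwi : ∀ p, 1 ≤ p → p ≤ M → ∀ i, 0 < i → i < N →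
      w p i = (e (i - 1) * w p (i - 1) + z (p - 1) i - v (p - 1) i) / q i)
    (hz1 : ∀ r, r ≤ M - 1 → z r 0 = 2 * v r 0)
    (hzi : ∀ r, r ≤ M - 1 → ∀ i, 0 < i → i < N →
      z r i = z r (i - 1) + 2 * (v r i - w r (i - 1))) :
    ∀ m, m ≤ M → ∀ i (hi : i < N),
      v m i = ((Bᵀ * B)⁻¹ ^ m) ⟨i, hi⟩ ⟨i, hi⟩ ∧
      w m i = ((B * Bᵀ)⁻¹ ^ m) ⟨i, hi⟩ ⟨i, hi⟩ := by
  have hU := isUnit_det_B hq hB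
  have hUT : IsUnit (Bᵀ).det := by rwa [Matrix.det_transpose]
  have hUA : IsUnit (Bᵀ * B).det := by rw [Matrix.det_mul]; exact hUT.mul hU
  have hUC : IsUnit (B * Bᵀ).det := by rw [Matrix.det_mul]; exact hU.mul hUT
  intro m
  induction m with
  | zero =>
    intro _ i hi
    simp [hv0 i hi, hw0 i hi]
  | succ m ih =>
    intro hm
    have ih := ih (by omega)
    obtain ⟨X, hX⟩ : ∃ X, X = (Bᵀ * B)⁻¹ ^ (m + 1) := ⟨_, rfl⟩
    obtain ⟨U, hUe⟩ : ∃ U, U = (B * Bᵀ)⁻¹ ^ (m + 1) := ⟨_, rfl⟩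
    have hY : B * X = U * B := by rw [hX, hUe]; exact intertwine hU (m + 1)
    have hV : Bᵀ * (B * X) = (Bᵀ * B)⁻¹ ^ m := by
      rw [← Matrix.mul_assoc, hX, pow_succ', ← Matrix.mul_assoc, Matrix.mul_nonsing_inv _ hUA,
        Matrix.one_mul]
    have hW : B * X * Bᵀ = (B * Bᵀ)⁻¹ ^ m := by
      rw [hY, Matrix.mul_assoc, hUe, pow_succ, Matrix.mul_assoc, Matrix.nonsing_inv_mul _ hUC,
        Matrix.mul_one]
    have hXs : Xᵀ = X := by
      rw [hX, Matrix.transpose_pow, Matrix.transpose_nonsing_inv, Matrix.transpose_mul,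
        Matrix.transpose_transpose]
    have hUs : Uᵀ = U := by
      rw [hUe, Matrix.transpose_pow, Matrix.transpose_nonsing_inv, Matrix.transpose_mul,
        Matrix.transpose_transpose]
    rw [← hV, ← hW] at ih
    rw [← hX, ← hUe]
    obtain ⟨Y, hYe⟩ : ∃ Y, Y = B * X := ⟨_, rfl⟩
    have hYU : Y = U * B := hYe.trans hY
    rw [← hYe] at ih
    have hXa : ∀ i j, X i j = X j i := fun i j => congrFun (congrFun hXs j) i
    have hUa : ∀ i j, U i j = U j i := fun i j => congrFun (congrFun hUs j) i
    -- entries of right multiplications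
    have hYB : ∀ i j, (Y * Bᵀ) i j = (B * Yᵀ) j i := fun i j => by
      rw [← Matrix.transpose_apply (B * Yᵀ), Matrix.transpose_mul, Matrix.transpose_transpose]
    have hUB : ∀ i j, Y i j = (Bᵀ * U) j i := fun i j => by
      rw [hYU, ← Matrix.transpose_apply (Bᵀ * U), Matrix.transpose_mul,
        Matrix.transpose_transpose, hUs]
    have sq : ∀ i, i < N → √(q i) * √(q i) = q i := fun i hi =>
      Real.mul_self_sqrt (hq i hi).le
    have se : ∀ i, i + 1 < N → √(e i) * √(e i) = e i := fun i hi =>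
      Real.mul_self_sqrt (he i hi).le
    -- the auxiliary quantity
    have hz : ∀ i (hi : i < N), z m i = 2 * (√(q i) * Y ⟨i, hi⟩ ⟨i, hi⟩) := by
      intro i
      induction i with
      | zero =>
        intro hi
        rw [hz1 m (by omega), (ih 0 hi).1, btmul_zero hB]
      | succ i ihi =>
        intro hi
        rw [hzi m (by omega) (i + 1) (by omega) hi, Nat.add_sub_cancel, ihi (by omega),
          (ih (i + 1) hi).1, (ih i (by omega)).2, hYB, btmul_succ hB, bmul_succ hB _ i hi]
        simp only [Matrix.transpose_apply]
        ring
    have hv' : ∀ k i (hi : i < N), i + k + 1 = N → v (m + 1) i = X ⟨i, hi⟩ ⟨i, hi⟩ := by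
      intro k
      induction k with
      | zero =>
        intro i hi hk
        have h := hvN (m + 1) (by omega) hm
        have : N - 1 = i := by omega
        rw [this, Nat.add_sub_cancel, (ih i hi).2, hYB, bmul_last hB _ i hi (by omega),
          Matrix.transpose_apply, hYe, bmul_last hB _ i hi (by omega), ← mul_assoc, sq i hi,
          mul_div_cancel_left₀ _ (hq i hi).ne'] at h
        exact h
      | succ k ihk =>
        intro i hi hk
        have hi1 : i + 1 < N := by omega
        rw [hvi (m + 1) (by omega) hm i hi1, div_eq_iff (hq i hi).ne', Nat.add_sub_cancel,
          ihk (i + 1) hi1 (by omega), hz i hi, (ih i hi).2, hYB, bmul_succ hB _ i hi1,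
          Matrix.transpose_apply, Matrix.transpose_apply, hYe, bmul_succ hB _ i hi1,
          bmul_succ hB _ i hi1, hXa ⟨i + 1, hi1⟩ ⟨i, hi⟩, ← se i hi1, ← sq i hi]
        simp only [Real.sqrt_mul_self (Real.sqrt_nonneg _)]
        ring
    have hw' : ∀ i (hi : i < N), w (m + 1) i = U ⟨i, hi⟩ ⟨i, hi⟩ := by
      intro i
      induction i with
      | zero =>
        intro hi
        rw [hw1 (m + 1) (by omega) hm, Nat.add_sub_cancel, (ih 0 hi).1, btmul_zero hB, hUB,
          btmul_zero hB, ← mul_assoc, sq 0 hi, mul_div_cancel_left₀ _ (hq 0 hi).ne']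
      | succ i ihi =>
        intro hi
        have hi0 : i < N := by omega
        have s1 := sq (i + 1) hi
        have s2 := se i hi
        rw [hwi (m + 1) (by omega) hm (i + 1) (by omega) hi, div_eq_iff (hq (i + 1) hi).ne',
          Nat.add_sub_cancel, Nat.add_sub_cancel, ihi hi0, hz (i + 1) hi, (ih (i + 1) hi).1,
          btmul_succ hB _ i hi, hUB, hUB, btmul_succ hB _ i hi, btmul_succ hB _ i hi,
          hUa ⟨i + 1, hi⟩ ⟨i, hi0⟩, ← s1, ← s2]
        simp only [Real.sqrt_mul_self (Real.sqrt_nonneg _)]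
        ring
    exact fun i hi => ⟨hv' (N - 1 - i) i hi (by omega), hw' i hi⟩
end

section
/- Define reals v_1,…,v_N by v_N = 1/q_N and v_i = (e_i·v_{i+1} + 1)/q_i for i = N−1,…,1, and reals w_1,…,w_N by w_1 = 1/q_1 and w_i = (e_{i−1}·w_{i−1} + 1)/q_i for i = 2,…,N. Then for every i = 1,…,N, v_i equals the (i,i)-entry of (B^⊤B)^{−1} and w_i equals the (i,i)-entry of (BB^⊤)^{−1}. -/
open Matrix

/-- the M = 1 recurrences compute the diagonal entries of `(BᵀB)⁻¹`
and `(BBᵀ)⁻¹`. Indices are 0-based: the paper's 1-based `v_i` is `v (i-1)`, etc. -/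
theorem stmt_2 (N : ℕ) (hN : 0 < N) (q e : ℕ → ℝ)
    (hq : ∀ i, i < N → 0 < q i) (he : ∀ i, i + 1 < N → 0 < e i)
    (B : Matrix (Fin N) (Fin N) ℝ)
    (hB : ∀ i j : Fin N, B i j =
      if (j : ℕ) = (i : ℕ) then Real.sqrt (q i)
      else if (j : ℕ) = (i : ℕ) + 1 then Real.sqrt (e i) else 0)
    (v w : ℕ → ℝ)
    (hvN : v (N - 1) = 1 / q (N - 1))
    (hvi : ∀ i, i + 1 < N → v i = (e i * v (i + 1) + 1) / q i)
    (hw1 : w 0 = 1 / q 0)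
    (hwi : ∀ i, 0 < i → i < N → w i = (e (i - 1) * w (i - 1) + 1) / q i) :
    ∀ i (hi : i < N),
      v i = (Bᵀ * B)⁻¹ ⟨i, hi⟩ ⟨i, hi⟩ ∧
      w i = (B * Bᵀ)⁻¹ ⟨i, hi⟩ ⟨i, hi⟩ := by
  have hdet : B.det = ∏ i : Fin N, B i i := by
    apply Matrix.det_of_upperTriangular
    intro i j hij
    have h1 : (j : ℕ) < i := hij
    rw [hB, if_neg (by omega), if_neg (by omega)]
  have hdet0 : B.det ≠ 0 := by
    rw [hdet]
    refine Finset.prod_ne_zero_iff.mpr fun i _ => ?_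
    rw [hB, if_pos rfl]
    exact (Real.sqrt_pos.mpr (hq i i.2)).ne'
  have hu : IsUnit B.det := isUnit_iff_ne_zero.mpr hdet0
  obtain ⟨C, hC⟩ : ∃ C, C = B⁻¹ := ⟨_, rfl⟩
  have hBC : B * C = 1 := by rw [hC]; exact Matrix.mul_nonsing_inv B hu
  have hCB : C * B = 1 := by rw [hC]; exact Matrix.nonsing_inv_mul B hu
  have hlow : ∀ i j : Fin N, (j : ℕ) < i → C i j = 0 := by
    intro i j hij
    letI := Matrix.invertibleOfIsUnitDet B hu
    have ht : Matrix.BlockTriangular B id := by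
      intro i j hij
      have h1 : (j : ℕ) < i := hij
      rw [hB, if_neg (by omega), if_neg (by omega)]
    have := Matrix.blockTriangular_inv_of_blockTriangular ht
    rw [hC]
    exact this hij
  have hV : ∀ i, (Bᵀ * B)⁻¹ i i = ∑ j, C i j ^ 2 := by
    intro i
    rw [Matrix.mul_inv_rev, ← Matrix.transpose_nonsing_inv, ← hC, Matrix.mul_apply]
    exact Finset.sum_congr rfl fun j _ => by rw [Matrix.transpose_apply, sq]
  have hW : ∀ i, (B * Bᵀ)⁻¹ i i = ∑ j, C j i ^ 2 := by
    intro i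
    rw [Matrix.mul_inv_rev, ← Matrix.transpose_nonsing_inv, ← hC, Matrix.mul_apply]
    exact Finset.sum_congr rfl fun j _ => by rw [Matrix.transpose_apply, sq]
  -- row and column relations
  have hrow : ∀ (i j : Fin N) (h : (i : ℕ) + 1 < N),
      √(q i) * C i j + √(e i) * C ⟨i + 1, h⟩ j = if i = j then 1 else 0 := by
    intro i j h
    have h1 := congrFun (congrFun hBC i) j
    rw [Matrix.mul_apply, Matrix.one_apply] at h1
    rw [← h1, ← Finset.sum_subset (Finset.subset_univ {i, (⟨i + 1, h⟩ : Fin N)})]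
    · rw [Finset.sum_pair (by simp [Fin.ext_iff]), hB, hB]
      simp
    · intro k _ hk
      simp only [Finset.mem_insert, Finset.mem_singleton, Fin.ext_iff, not_or] at hk
      rw [hB, if_neg hk.1, if_neg hk.2, zero_mul]
  have hrowlast : ∀ (i j : Fin N) (_ : (i : ℕ) + 1 = N),
      √(q i) * C i j = if i = j then 1 else 0 := by
    intro i j h
    have h1 := congrFun (congrFun hBC i) j
    rw [Matrix.mul_apply, Matrix.one_apply] at h1
    rw [← h1, Finset.sum_eq_single i]
    · rw [hB, if_pos rfl]
    · intro k _ hk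
      rw [hB, if_neg (by simpa [Fin.ext_iff] using hk), if_neg (by omega), zero_mul]
    · simp
  have hcol : ∀ (i j k : Fin N) (_ : (k : ℕ) + 1 = j),
      √(q j) * C i j + √(e k) * C i k = if i = j then 1 else 0 := by
    intro i j k h
    have h1 := congrFun (congrFun hCB i) j
    rw [Matrix.mul_apply, Matrix.one_apply] at h1
    rw [← h1, ← Finset.sum_subset (Finset.subset_univ {j, k})]
    · rw [Finset.sum_pair (by rw [Ne, Fin.ext_iff]; omega), hB, hB, if_pos rfl,
        if_neg (by omega), if_pos (by omega)]
      ring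
    · intro l _ hl
      simp only [Finset.mem_insert, Finset.mem_singleton, Fin.ext_iff, not_or] at hl
      rw [hB, if_neg (by omega), if_neg (by omega), mul_zero]
  have hcolfirst : ∀ (i j : Fin N) (_ : (j : ℕ) = 0),
      √(q j) * C i j = if i = j then 1 else 0 := by
    intro i j h
    have h1 := congrFun (congrFun hCB i) j
    rw [Matrix.mul_apply, Matrix.one_apply] at h1
    rw [← h1, Finset.sum_eq_single j]
    · rw [hB, if_pos rfl]; ring
    · intro k _ hk
      rw [Ne, Fin.ext_iff] at hk
      rw [hB, if_neg (by omega), if_neg (by omega), mul_zero]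
    · simp
  have key : ∀ (i : Fin N) (a c : ℝ) (x y : Fin N → ℝ), 0 < a → 0 ≤ c → y i = 0 →
      (∀ j, √a * x j + √c * y j = if i = j then 1 else 0) →
      ∑ j, x j ^ 2 = (c * ∑ j, y j ^ 2 + 1) / a := by
    intro i a c x y ha hc hy h
    rw [eq_div_iff ha.ne', Finset.sum_mul, Finset.mul_sum]
    have h1 : (1 : ℝ) = ∑ j, if i = j then (1 : ℝ) else 0 := by simp
    rw [h1, ← Finset.sum_add_distrib]
    refine Finset.sum_congr rfl fun j _ => ?_
    have h2 := h j
    have sa := Real.sq_sqrt ha.le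
    have sc := Real.sq_sqrt hc
    by_cases hij : i = j
    · subst hij
      rw [if_pos rfl] at h2 ⊢
      rw [hy] at h2 ⊢
      have h3 : √a * x i = 1 := by linarith
      calc x i ^ 2 * a = (√a * x i) ^ 2 := by rw [mul_pow, sa]; ring
        _ = _ := by rw [h3]; ring
    · rw [if_neg hij] at h2 ⊢
      have h3 : √a * x j = - (√c * y j) := by linarith
      calc x j ^ 2 * a = (√a * x j) ^ 2 := by rw [mul_pow, sa]; ring
        _ = _ := by rw [h3, neg_sq, mul_pow, sc]; ring
  have hv : ∀ k i (hi : i < N), i + k + 1 = N → v i = ∑ j, C ⟨i, hi⟩ j ^ 2 := by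
    intro k
    induction k with
    | zero =>
      intro i hi h
      have h0 : N - 1 = i := by omega
      rw [h0] at hvN
      rw [hvN, key ⟨i, hi⟩ (q i) 0 (C ⟨i, hi⟩) 0 (hq i hi) le_rfl rfl]
      · simp
      · intro j
        simpa using hrowlast ⟨i, hi⟩ j h
    | succ k ih =>
      intro i hi h
      have h1 : i + 1 < N := by omega
      rw [hvi i h1, ih (i + 1) h1 (by omega)]
      exact (key ⟨i, hi⟩ (q i) (e i) (C ⟨i, hi⟩) (C ⟨i + 1, h1⟩) (hq i hi) (he i h1).le
        (hlow _ _ (Nat.lt_succ_self i)) (fun j => hrow ⟨i, hi⟩ j h1)).symm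
  have hw : ∀ i (hi : i < N), w i = ∑ j, C j ⟨i, hi⟩ ^ 2 := by
    intro i
    induction i with
    | zero =>
      intro hi
      rw [hw1, key ⟨0, hi⟩ (q 0) 0 (fun j => C j ⟨0, hi⟩) 0 (hq 0 hi) le_rfl rfl]
      · simp
      · intro j
        have := hcolfirst j ⟨0, hi⟩ rfl
        simpa [eq_comm] using this
    | succ i ih =>
      intro hi
      have h1 : i < N := by omega
      rw [hwi (i + 1) (Nat.succ_pos i) hi, Nat.add_sub_cancel, ih h1]
      refine (key ⟨i + 1, hi⟩ (q (i + 1)) (e i) (fun j => C j ⟨i + 1, hi⟩)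
        (fun j => C j ⟨i, h1⟩) (hq _ hi) (he i hi).le
        (hlow _ _ (Nat.lt_succ_self i)) (fun j => ?_)).symm
      have := hcol j ⟨i + 1, hi⟩ ⟨i, h1⟩ rfl
      rw [this]
      simp only [eq_comm]
  intro i hi
  rw [hV, hW]
  exact ⟨hv (N - 1 - i) i hi (by omega), hw i hi⟩
end

section
/- Fix an integer M ≥ 2. For s = 1,…,M and i = 1,…,N, let v_i^{(s)} denote the (i,i)-entry of (B^⊤B)^{−s} and w_i^{(s)} the (i,i)-entry of (BB^⊤)^{−s}. Define g_i^{(r)} by: g_N^{(r)} = 0 for all r ≥ 1; g_i^{(1)} = F_i·v_{i+1}^{(1)} for i = 1,…,N−1; and g_i^{(r)} = F_i·g_{i+1}^{(r)} + B̌_{i+1}·g_i^{(r−1)} + Σ_{k=1}^{r−1} g_{i+1}^{(k)}·g_i^{(r−k)} for i = 1,…,N−1 and r ≥ 2. Define g̃_i^{(r)} by: g̃_1^{(r)} = 0 for all r ≥ 1; g̃_i^{(1)} = F̃_i·w_{i−1}^{(1)} for i = 2,…,N; and g̃_i^{(r)} = F̃_i·g̃_{i−1}^{(r)} + B̌_{i−1}·g̃_i^{(r−1)}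 + Σ_{k=1}^{r−1} g̃_{i−1}^{(k)}·g̃_i^{(r−k)} for i = 2,…,N and r ≥ 2. Then for every s = 2,…,M: v_N^{(s)} = B̌_N·w_N^{(s−1)}; w_1^{(s)} = B̌_1·v_1^{(s−1)}; v_i^{(s)} = F_i·v_{i+1}^{(s)} + B̌_i·w_i^{(s−1)} + 2·Σ_{k=1}^{s−1} g_i^{(k)}·w_i^{(s−k)} for i = 1,…,N−1; and w_i^{(s)} = F̃_i·w_{i−1}^{(s)} + B̌_i·v_i^{(s−1)} + 2·Σ_{k=1}^{s−1} g̃_i^{(k)}·v_i^{(s−k)} for i = 2,…,N. -/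
open Matrix

/-- Power series core: downward elimination in a tridiagonal system. -/
lemma core_ps (N : ℕ) (q e c : ℕ → ℝ) (hq : ∀ i, i < N → 0 < q i)
    (he0 : ∀ i, N ≤ i + 1 → e i = 0)
    (hc : ∀ i, c i * c i = e i * q (i + 1))
    (Y G : ℕ → PowerSeries ℝ) (i : ℕ)
    (hrow : ∀ j, i ≤ j → j + 1 < N →
      PowerSeries.C (c j) * Y j + PowerSeries.C (q (j+1) + e (j+1)) * Y (j+1)
        + PowerSeries.C (c (j+1)) * Y (j+2) = PowerSeries.X * Y (j+1))
    (hG0 : ∀ j, PowerSeries.constantCoeff (G j) = 0)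
    (hGN : G (N - 1) = 0)
    (hG : ∀ j, j + 1 < N → PowerSeries.C (q j) *
      (G j * (PowerSeries.C (q (j+1)) * (1 - G (j+1)) - PowerSeries.X)) =
      PowerSeries.C (e j) * (PowerSeries.C (q (j+1)) * G (j+1) + PowerSeries.X)) :
    ∀ n j, N = j + 1 + n → i ≤ j →
      PowerSeries.C (e j) * Y j + PowerSeries.C (c j) * Y (j+1)
        = - (PowerSeries.C (q j) * (G j * Y j)) := by
  intro n
  induction n with
  | zero =>
    intro j hj hij
    have h1 : e j = 0 := he0 j (by omega)
    have h2 : c j = 0 := by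
      have := hc j
      rw [h1, zero_mul] at this
      exact mul_self_eq_zero.mp this
    have h3 : G j = 0 := by rw [← hGN]; congr 1; omega
    simp [h1, h2, h3]
  | succ n ih =>
    intro j hj hij
    have ih' := ih (j+1) (by omega) (by omega)
    have hr := hrow j hij (by omega)
    have hg := hG j (by omega)
    set D := PowerSeries.C (q (j+1)) * (1 - G (j+1)) - PowerSeries.X with hD
    have hD0 : D ≠ 0 := by
      intro h
      have h2 := congrArg PowerSeries.constantCoeff h
      rw [hD] at h2
      simp [hG0] at h2
      exact absurd h2 (hq _ (by omega)).ne'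
    have hcc : PowerSeries.C (c j) * PowerSeries.C (c j)
        = PowerSeries.C (e j) * PowerSeries.C (q (j+1)) := by
      rw [← map_mul, hc, map_mul]
    rw [map_add] at hr
    have key : D * Y (j+1) = - (PowerSeries.C (c j) * Y j) := by
      rw [hD]; linear_combination hr - ih'
    apply mul_left_cancel₀ hD0
    linear_combination (PowerSeries.C (c j)) * key - (Y j) * hcc + (Y j) * hg
      + PowerSeries.C (e j) * Y j * hD

lemma sum_row {N : ℕ} (q e : ℕ → ℝ) (he0 : ∀ i, N ≤ i + 1 → e i = 0)
    (B : Matrix (Fin N) (Fin N) ℝ)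
    (hB : ∀ i j : Fin N, B i j =
      if (j : ℕ) = (i : ℕ) then Real.sqrt (q i)
      else if (j : ℕ) = (i : ℕ) + 1 then Real.sqrt (e i) else 0)
    (x : Fin N → ℝ) (y : ℕ → ℝ) (hxy : ∀ k : Fin N, x k = y k) (i : Fin N) :
    ∑ k, B i k * x k = Real.sqrt (q i) * y i + Real.sqrt (e i) * y (i + 1) := by
  have h1 : ∀ k : Fin N, B i k * x k =
      (if k = i then Real.sqrt (q i) * y i else 0)
      + (if (k : ℕ) = (i : ℕ) + 1 then Real.sqrt (e i) * y (i+1) else 0) := by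
    intro k
    rw [hB, hxy]
    by_cases h : k = i
    · subst h; simp
    · have h' : (k : ℕ) ≠ i := fun h2 => h (Fin.ext h2)
      by_cases h3 : (k : ℕ) = i + 1
      · simp [h3, h]
      · simp [h, h', h3]
  rw [Finset.sum_congr rfl (fun k _ => h1 k), Finset.sum_add_distrib]
  congr 1
  · simp
  · by_cases hi : (i : ℕ) + 1 < N
    · rw [Finset.sum_eq_single (⟨i + 1, hi⟩ : Fin N)]
      · simp
      · intro b _ hb
        rw [if_neg]
        intro h; exact hb (Fin.ext h)
      · simp
    · rw [he0 i (by omega)]; simp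

lemma sum_col {N : ℕ} (q e : ℕ → ℝ)
    (B : Matrix (Fin N) (Fin N) ℝ)
    (hB : ∀ i j : Fin N, B i j =
      if (j : ℕ) = (i : ℕ) then Real.sqrt (q i)
      else if (j : ℕ) = (i : ℕ) + 1 then Real.sqrt (e i) else 0)
    (x : Fin N → ℝ) (y : ℕ → ℝ) (hxy : ∀ k : Fin N, x k = y k) (i : ℕ) (hi : i + 1 < N) :
    ∑ k, B k ⟨i+1, hi⟩ * x k
      = Real.sqrt (q (i+1)) * y (i+1) + Real.sqrt (e i) * y i := by
  have h1 : ∀ k : Fin N, B k ⟨i+1, hi⟩ * x k =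
      (if k = ⟨i+1, hi⟩ then Real.sqrt (q (i+1)) * y (i+1) else 0)
      + (if k = ⟨i, by omega⟩ then Real.sqrt (e i) * y i else 0) := by
    intro k
    rw [hB, hxy]
    simp only [Fin.ext_iff]
    by_cases h : (k : ℕ) = i + 1
    · simp [h]
    · by_cases h3 : (k : ℕ) = i
      · simp [h3]
      · have h4 : ¬ (i + 1 = (k:ℕ)) := fun h => by omega
        have h5 : ¬ (i = (k:ℕ)) := fun h => by omega
        simp [h, h4, h3, h5]
  rw [Finset.sum_congr rfl (fun k _ => h1 k), Finset.sum_add_distrib]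
  simp

lemma half (N : ℕ) (hN : 0 < N) (q e : ℕ → ℝ)
    (hq : ∀ i, i < N → 0 < q i) (he : ∀ i, 0 ≤ e i)
    (he0 : ∀ i, N ≤ i + 1 → e i = 0)
    (B : Matrix (Fin N) (Fin N) ℝ)
    (hB : ∀ i j : Fin N, B i j =
      if (j : ℕ) = (i : ℕ) then Real.sqrt (q i)
      else if (j : ℕ) = (i : ℕ) + 1 then Real.sqrt (e i) else 0)
    (M : ℕ) (hM : 2 ≤ M)
    (v w : ℕ → ℕ → ℝ)
    (hv : ∀ s, 1 ≤ s → s ≤ M → ∀ i (hi : i < N),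
      v s i = ((Bᵀ * B)⁻¹ ^ s) ⟨i, hi⟩ ⟨i, hi⟩)
    (hw : ∀ s, 1 ≤ s → s ≤ M → ∀ i (hi : i < N),
      w s i = ((B * Bᵀ)⁻¹ ^ s) ⟨i, hi⟩ ⟨i, hi⟩)
    (g : ℕ → ℕ → ℝ)
    (hgN : ∀ r, 1 ≤ r → g r (N - 1) = 0)
    (hg1 : ∀ i, i + 1 < N → g 1 i = e i / q i * v 1 (i + 1))
    (hgr : ∀ r, 2 ≤ r → ∀ i, i + 1 < N →
      g r i = e i / q i * g r (i + 1) + 1 / q (i + 1) * g (r - 1) i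
        + ∑ k ∈ Finset.Icc 1 (r - 1), g k (i + 1) * g (r - k) i) :
    ∀ s, 2 ≤ s → s ≤ M →
      v s (N - 1) = 1 / q (N - 1) * w (s - 1) (N - 1) ∧
      (∀ i, i + 1 < N →
        v s i = e i / q i * v s (i + 1) + 1 / q i * w (s - 1) i
          + 2 * ∑ k ∈ Finset.Icc 1 (s - 1), g k i * w (s - k) i) := by
  -- invertibility
  have htri : B.BlockTriangular id := by
    intro i j hij
    have hij' : (j : ℕ) < i := hij
    rw [hB, if_neg (by omega), if_neg (by omega)]
  have hdet : IsUnit B.det := by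
    rw [Matrix.det_of_isUpperTriangular htri, isUnit_iff_ne_zero]
    refine Finset.prod_ne_zero_iff.mpr fun i _ => ?_
    rw [hB, if_pos rfl]
    exact (Real.sqrt_pos.mpr (hq i i.2)).ne'
  have hdetT : IsUnit (Bᵀ).det := by rwa [Matrix.det_transpose]
  have hBi : B * B⁻¹ = 1 := Matrix.mul_nonsing_inv B hdet
  have hiB : B⁻¹ * B = 1 := Matrix.nonsing_inv_mul B hdet
  have hBTi : Bᵀ * Bᵀ⁻¹ = 1 := Matrix.mul_nonsing_inv _ hdetT
  have hiBT : Bᵀ⁻¹ * Bᵀ = 1 := Matrix.nonsing_inv_mul _ hdetT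
  set A := (Bᵀ * B)⁻¹ with hA
  set C := (B * Bᵀ)⁻¹ with hC
  have hA' : A = B⁻¹ * Bᵀ⁻¹ := by rw [hA, Matrix.mul_inv_rev]
  have hC' : C = Bᵀ⁻¹ * B⁻¹ := by rw [hC, Matrix.mul_inv_rev]
  have hBA : B * A = C * B := by
    rw [hA', hC', ← mul_assoc, hBi, mul_assoc, hiB, one_mul, mul_one]
  have hBAs : ∀ s, B * A ^ s = C ^ s * B := by
    intro s
    exact (SemiconjBy.pow_right (show SemiconjBy B A C from hBA) s)
  have hCB : C * (B * Bᵀ) = 1 := by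
    rw [hC', mul_assoc, ← mul_assoc B⁻¹, hiB, one_mul, hiBT]
  have hBC : B * (Bᵀ * C) = 1 := by
    rw [hC', ← mul_assoc Bᵀ, hBTi, one_mul, hBi]
  have hBAB : ∀ s, B * (A ^ (s+1) * Bᵀ) = C ^ s := by
    intro s
    rw [← mul_assoc, hBAs, mul_assoc, pow_succ, mul_assoc, hCB, mul_one]
  have hBBC : ∀ s, B * (Bᵀ * C ^ (s+1)) = C ^ s := by
    intro s
    rw [pow_succ', ← mul_assoc Bᵀ, ← mul_assoc B, hBC, one_mul]
  -- extension by zero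
  let ex : Matrix (Fin N) (Fin N) ℝ → ℕ → ℕ → ℝ := fun P i j =>
    if h : i < N ∧ j < N then P ⟨i, h.1⟩ ⟨j, h.2⟩ else 0
  have hex : ∀ P (i j : Fin N), P i j = ex P i j := by
    intro P i j; simp [ex]
  have hBT : ∀ i j, Bᵀ i j = B j i := fun i j => rfl
  -- symmetric
  have hAs : ∀ s i j, ex (A^s) i j = ex (A^s) j i := by
    intro s
    have h : (A^s)ᵀ = A^s := by
      rw [Matrix.transpose_pow, hA, Matrix.transpose_nonsing_inv, Matrix.transpose_mul,
        Matrix.transpose_transpose]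
    intro i j
    by_cases h2 : i < N ∧ j < N
    · simp only [ex, dif_pos h2, dif_pos h2.symm]
      conv_lhs => rw [← h]
      rfl
    · simp only [ex, dif_neg h2, dif_neg (fun h => h2 (And.symm h))]
  have hCs : ∀ s i j, ex (C^s) i j = ex (C^s) j i := by
    intro s
    have h : (C^s)ᵀ = C^s := by
      rw [Matrix.transpose_pow, hC, Matrix.transpose_nonsing_inv, Matrix.transpose_mul,
        Matrix.transpose_transpose]
    intro i j
    by_cases h2 : i < N ∧ j < N
    · simp only [ex, dif_pos h2, dif_pos h2.symm]
      conv_lhs => rw [← h]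
      rfl
    · simp only [ex, dif_neg h2, dif_neg (fun h => h2 (And.symm h))]
  -- multiplication rules
  have mulB : ∀ P i j, i < N → j < N → ex (B * P) i j
      = √(q i) * ex P i j + √(e i) * ex P (i+1) j := by
    intro P i j hi hj
    have h := sum_row q e he0 B hB (fun k => P k ⟨j, hj⟩) (fun k => ex P k j)
      (fun k => hex P k ⟨j, hj⟩) ⟨i, hi⟩
    rw [← h, ← Matrix.mul_apply]
    exact (hex _ ⟨i, hi⟩ ⟨j, hj⟩).symm
  have mulBT : ∀ P i j, i < N → j < N → ex (P * Bᵀ) i j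
      = √(q j) * ex P i j + √(e j) * ex P i (j+1) := by
    intro P i j hi hj
    have h := sum_row q e he0 B hB (fun k => P ⟨i, hi⟩ k) (fun k => ex P i k)
      (fun k => hex P ⟨i, hi⟩ k) ⟨j, hj⟩
    rw [← h, ← hex _ ⟨i, hi⟩ ⟨j, hj⟩, Matrix.mul_apply]
    exact Finset.sum_congr rfl fun k _ => mul_comm _ _
  have BTmul : ∀ P i j, i + 1 < N → j < N → ex (Bᵀ * P) (i+1) j
      = √(q (i+1)) * ex P (i+1) j + √(e i) * ex P i j := by
    intro P i j hi hj
    have h := sum_col q e B hB (fun k => P k ⟨j, hj⟩) (fun k => ex P k j)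
      (fun k => hex P k ⟨j, hj⟩) i hi
    rw [← h, ← hex _ ⟨i+1, hi⟩ ⟨j, hj⟩, Matrix.mul_apply]
    rfl
  have Bmul : ∀ P i j, i < N → j + 1 < N → ex (P * B) i (j+1)
      = √(q (j+1)) * ex P i (j+1) + √(e j) * ex P i j := by
    intro P i j hi hj
    have h := sum_col q e B hB (fun k => P ⟨i, hi⟩ k) (fun k => ex P i k)
      (fun k => hex P ⟨i, hi⟩ k) j hj
    rw [← h, ← hex _ ⟨i, hi⟩ ⟨j+1, hj⟩, Matrix.mul_apply]
    exact Finset.sum_congr rfl fun k _ => mul_comm _ _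
  have sq : ∀ i, i < N → √(q i) * √(q i) = q i := fun i hi => Real.mul_self_sqrt (hq i hi).le
  have se : ∀ i, √(e i) * √(e i) = e i := fun i => Real.mul_self_sqrt (he i)
  -- diagonal identity (1)
  have id1 : ∀ s i, i < N → ex (C^s) i i = q i * ex (A^(s+1)) i i
      + 2 * (√(q i) * √(e i)) * ex (A^(s+1)) i (i+1) + e i * ex (A^(s+1)) (i+1) (i+1) := by
    intro s i hi
    rw [← hBAB s, mulB _ _ _ hi hi, mulBT _ _ _ hi hi]
    by_cases hi1 : i + 1 < N
    · rw [mulBT _ _ _ hi1 hi, hAs _ (i+1) i]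
      linear_combination (ex (A^(s+1)) i i) * sq i hi + (ex (A^(s+1)) (i+1) (i+1)) * se i
    · rw [he0 i (by omega)]
      simp
      linear_combination (ex (A^(s+1)) i i) * sq i hi
  have id2 : ∀ s i, i + 1 < N → √(q i) * ex (A^s) i (i+1) + √(e i) * ex (A^s) (i+1) (i+1)
      = √(q (i+1)) * ex (C^s) i (i+1) + √(e i) * ex (C^s) i i := by
    intro s i hi
    rw [← mulB _ _ _ (by omega) hi, hBAs, Bmul _ _ _ (by omega) hi]
  -- lower triangular
  have low : ∀ i, i + 1 < N → ex (B * A) i (i+1) = 0 := by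
    intro i hi
    have h1 : B * A = (B⁻¹)ᵀ := by
      rw [hA', ← mul_assoc, hBi, one_mul, Matrix.transpose_nonsing_inv]
    have : Invertible B := Matrix.invertibleOfIsUnitDet B hdet
    have h2 := Matrix.blockTriangular_inv_of_blockTriangular htri
    rw [h1, ← hex _ ⟨i, by omega⟩ ⟨i+1, hi⟩, Matrix.transpose_apply]
    apply h2
    show (⟨i, _⟩ : Fin N) < ⟨i+1, _⟩
    simp [Fin.lt_def]
  have hone : ∀ i, i < N → ex (C^0) i i = 1 := by
    intro i hi; simp [ex, hi]
  have hzero : ∀ i j, i ≠ j → ex (C^0) i j = 0 := by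
    intro i j hij; simp [ex, hij]
  have hV1 : ∀ i, i < N → q i * ex A i i = e i * ex A (i+1) (i+1) + 1 := by
    intro i hi
    have h1 := id1 0 i hi
    rw [hone i hi, zero_add, pow_one] at h1
    by_cases hi1 : i + 1 < N
    · have h2 := low i hi1
      rw [mulB _ _ _ hi hi1] at h2
      linear_combination -h1 - 2 * √(e i) * h2 + 2 * (ex A (i+1) (i+1)) * se i
    · rw [he0 i (by omega)] at h1 ⊢
      simp at h1 ⊢
      linarith
  -- v, w in terms of ex
  have hv' : ∀ s, 1 ≤ s → s ≤ M → ∀ i, i < N → v s i = ex (A^s) i i := by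
    intro s h1 h2 i hi
    rw [hv s h1 h2 i hi]; exact hex _ ⟨i, hi⟩ ⟨i, hi⟩
  have hw' : ∀ s, 1 ≤ s → s ≤ M → ∀ i, i < N → w s i = ex (C^s) i i := by
    intro s h1 h2 i hi
    rw [hw s h1 h2 i hi]; exact hex _ ⟨i, hi⟩ ⟨i, hi⟩
  -- power series
  let G : ℕ → PowerSeries ℝ := fun j => PowerSeries.mk fun r => if r = 0 then 0 else g r j
  let Y : ℕ → ℕ → PowerSeries ℝ := fun i j =>
    PowerSeries.mk fun s => if s = 0 then 0 else ex (C^s) j i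
  have conv : ∀ (a b : ℕ → ℝ) (n : ℕ), PowerSeries.coeff n
      ((PowerSeries.mk fun r => if r = 0 then 0 else a r) *
       (PowerSeries.mk fun r => if r = 0 then 0 else b r))
      = ∑ k ∈ Finset.Icc 1 (n - 1), a k * b (n - k) := by
    intro a b n
    rw [PowerSeries.coeff_mul,
      Finset.Nat.sum_antidiagonal_eq_sum_range_succ_mk]
    simp only [PowerSeries.coeff_mk]
    symm
    rw [← Finset.sum_subset (s₁ := Finset.Icc 1 (n-1)) (s₂ := Finset.range n.succ)]
    · refine Finset.sum_congr rfl fun k hk => ?_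
      rw [Finset.mem_Icc] at hk
      rw [if_neg (by omega), if_neg (by omega)]
    · intro k hk
      rw [Finset.mem_Icc] at hk
      rw [Finset.mem_range]; omega
    · intro k hk hk2
      rw [Finset.mem_Icc] at hk2
      rw [Finset.mem_range] at hk
      by_cases h : k = 0
      · simp [h]
      · rw [if_pos (show n - k = 0 by omega), mul_zero]
  have hGN : G (N-1) = 0 := by
    ext r
    simp only [G, PowerSeries.coeff_mk, map_zero]
    split_ifs with h
    · rfl
    · exact hgN r (by omega)
  have hg1' : ∀ j, j + 1 < N → q j * g 1 j = e j * ex A (j+1) (j+1) := by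
    intro j hj
    have := (hq j (by omega)).ne'
    rw [hg1 j hj, hv' 1 le_rfl (by omega) _ hj, pow_one]
    field_simp
  have hG : ∀ j, j + 1 < N → PowerSeries.C (q j) *
      (G j * (PowerSeries.C (q (j+1)) * (1 - G (j+1)) - PowerSeries.X)) =
      PowerSeries.C (e j) * (PowerSeries.C (q (j+1)) * G (j+1) + PowerSeries.X) := by
    intro j hj
    have hqj := (hq j (by omega)).ne'
    have hqj1 := (hq (j+1) (by omega)).ne'
    have e1 : PowerSeries.C (q j) *
      (G j * (PowerSeries.C (q (j+1)) * (1 - G (j+1)) - PowerSeries.X))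
      = PowerSeries.C (q j * q (j+1)) * G j - PowerSeries.C (q j * q (j+1)) * (G (j+1) * G j)
        - PowerSeries.C (q j) * (PowerSeries.X * G j) := by
      rw [map_mul]; ring
    have e2 : PowerSeries.C (e j) * (PowerSeries.C (q (j+1)) * G (j+1) + PowerSeries.X)
      = PowerSeries.C (e j * q (j+1)) * G (j+1) + PowerSeries.C (e j) * PowerSeries.X := by
      rw [map_mul]; ring
    rw [e1, e2]
    ext r
    simp only [map_sub, map_add, PowerSeries.coeff_C_mul]
    rw [show PowerSeries.coeff r (G (j+1) * G j) = _ from conv (fun r => g r (j+1)) (fun r => g r j) r]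
    rcases r with _ | _ | r
    · simp [G]
    · simp only [zero_add, PowerSeries.coeff_succ_X_mul, PowerSeries.coeff_one_X]
      have h := hV1 (j+1) hj
      have h3 := hg1' j hj
      have h4 : q (j+1) * g 1 (j+1) = e (j+1) * ex A (j+2) (j+2) := by
        by_cases hj2 : j + 2 < N
        · exact hg1' (j+1) hj2
        · rw [he0 (j+1) (by omega), zero_mul]
          rw [show j + 1 = N - 1 by omega, hgN 1 le_rfl, mul_zero]
      simp [G]
      have hz : PowerSeries.coeff 1 (PowerSeries.X * PowerSeries.mk
          fun r => if r = 0 then (0:ℝ) else g r j) = 0 := by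
        rw [show (1:ℕ) = 0 + 1 from rfl, PowerSeries.coeff_succ_X_mul]; simp
      try rw [hz]
      linear_combination q (j+1) * h3 + e j * h - e j * h4
    · simp only [G, PowerSeries.coeff_succ_X_mul, PowerSeries.coeff_mk, PowerSeries.coeff_X]
      have h := hgr (r+1+1) (by omega) j hj
      simp only [Nat.add_sub_cancel] at h ⊢
      rw [if_neg (by omega), if_neg (by omega), if_neg (by omega), if_neg (by omega)]
      rw [h]
      field_simp
      ring
  have hmain : ∀ s i, i + 1 < N → e i * ex (C^(s+1)) i i
      + √(e i) * √(q (i+1)) * ex (C^(s+1)) (i+1) i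
      = - (q i * ∑ k ∈ Finset.Icc 1 s, g k i * ex (C^(s+1-k)) i i) := by
    intro s i hi
    have hq0 : ∀ i, i + 1 < N → √(q (i+1)) * √(q (i+1)) = q (i+1) := fun i h => sq _ h
    have h := core_ps N q e (fun i => √(e i) * √(q (i+1))) hq he0 (by
        intro k
        by_cases hk : k + 1 < N
        · show √(e k) * √(q (k+1)) * (√(e k) * √(q (k+1))) = _
          linear_combination (√(q (k+1)) * √(q (k+1))) * se k + e k * hq0 k hk
        · simp [he0 k (by omega)]) (Y i) G i (by
        intro j hij hj
        ext s
        rw [map_add, map_add]; simp only [PowerSeries.coeff_C_mul]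
        rcases s with _ | s
        · simp [Y]
        · simp only [Y, PowerSeries.coeff_succ_X_mul, PowerSeries.coeff_mk]
          rw [if_neg (by omega), if_neg (by omega), if_neg (by omega)]
          have hr : (if s = 0 then 0 else ex (C^s) (j+1) i) = ex (C^s) (j+1) i := by
            split_ifs with h
            · rw [h, hzero _ _ (by omega)]
            · rfl
          rw [hr]
          conv_rhs => rw [← hBBC s]
          rw [mulB _ _ _ hj (by omega), BTmul _ _ _ hj (by omega)]
          by_cases hj2 : j + 1 + 1 < N
          · rw [BTmul _ _ _ hj2 (by omega)]
            linear_combination -(ex (C^(s+1)) (j+1) i) * sq (j+1) hj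
              - (ex (C^(s+1)) (j+1) i) * se (j+1)
          · rw [he0 (j+1) (by omega)]
            simp
            linear_combination -(ex (C^(s+1)) (j+1) i) * sq (j+1) hj)
      (by intro j; simp [G]) hGN hG (N - (i+1)) i (by omega) le_rfl
    have h2 := congrArg (PowerSeries.coeff (s+1)) h
    simp only [map_add, map_neg, PowerSeries.coeff_C_mul] at h2
    rw [show PowerSeries.coeff (s+1) (G i * Y i i) = _ from
      conv (fun r => g r i) (fun r => ex (C^r) i i) (s+1)] at h2
    simpa [Y] using h2
  intro s hs2 hsM
  obtain ⟨s, rfl⟩ : ∃ t, s = t + 1 := ⟨s - 1, by omega⟩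
  simp only [Nat.add_sub_cancel]
  constructor
  · have h := id1 s (N-1) (by omega)
    rw [he0 (N-1) (by omega)] at h
    have hqn := (hq (N-1) (by omega)).ne'
    rw [hv' _ (by omega) hsM _ (by omega), hw' _ (by omega) (by omega) _ (by omega), h]
    simp
    field_simp
  · intro i hi
    have hqi := (hq i (by omega)).ne'
    have h1 := id1 s i (by omega)
    have h2 := id2 (s+1) i hi
    have h3 := hmain s i hi
    rw [hCs _ (i+1) i] at h3
    have hsum : ∑ k ∈ Finset.Icc 1 s, g k i * w (s + 1 - k) i
        = ∑ k ∈ Finset.Icc 1 s, g k i * ex (C^(s+1-k)) i i := by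
      refine Finset.sum_congr rfl fun k hk => ?_
      rw [Finset.mem_Icc] at hk
      rw [hw' _ (by omega) (by omega) _ (by omega)]
    rw [hsum, hv' _ (by omega) hsM _ (by omega), hv' _ (by omega) hsM _ hi,
      hw' _ (by omega) (by omega) _ (by omega)]
    field_simp
    linear_combination -h1 - 2 * √(e i) * h2 - 2 * h3 + 2 * (ex (A^(s+1)) (i+1) (i+1)) * se i
      - 2 * (ex (C^(s+1)) i i) * se i

lemma submatrix_pow' {N : ℕ} (P : Matrix (Fin N) (Fin N) ℝ) (f : Fin N ≃ Fin N) (s : ℕ) :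
    (P.submatrix f f) ^ s = (P ^ s).submatrix f f := by
  induction s with
  | zero => simp
  | succ n ih => rw [pow_succ, pow_succ, ih, Matrix.submatrix_mul_equiv]

open Matrix

/-- the subtraction-free recurrence of Yamashita–Kimura–Nakamura for the
diagonal entries of `(BᵀB)^{-s}` and `(BBᵀ)^{-s}`, `s = 2, …, M`. Indices are 0-based:
the paper's 1-based `v_i^{(s)}` is `v s (i-1)`; `B̌_i = 1/q_{i}` is `1 / q (i-1)`;
`F_i = e_i/q_i` is `e (i-1) / q (i-1)`; `F̃_i = e_{i-1}/q_i` is `e (i-2) / q (i-1)`. -/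
theorem stmt_3 (N : ℕ) (hN : 0 < N) (q e : ℕ → ℝ)
    (hq : ∀ i, i < N → 0 < q i) (he : ∀ i, i + 1 < N → 0 < e i)
    (B : Matrix (Fin N) (Fin N) ℝ)
    (hB : ∀ i j : Fin N, B i j =
      if (j : ℕ) = (i : ℕ) then Real.sqrt (q i)
      else if (j : ℕ) = (i : ℕ) + 1 then Real.sqrt (e i) else 0)
    (M : ℕ) (hM : 2 ≤ M)
    (v w : ℕ → ℕ → ℝ)
    (hv : ∀ s, 1 ≤ s → s ≤ M → ∀ i (hi : i < N),
      v s i = ((Bᵀ * B)⁻¹ ^ s) ⟨i, hi⟩ ⟨i, hi⟩)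
    (hw : ∀ s, 1 ≤ s → s ≤ M → ∀ i (hi : i < N),
      w s i = ((B * Bᵀ)⁻¹ ^ s) ⟨i, hi⟩ ⟨i, hi⟩)
    (g gt : ℕ → ℕ → ℝ)
    (hgN : ∀ r, 1 ≤ r → g r (N - 1) = 0)
    (hg1 : ∀ i, i + 1 < N → g 1 i = e i / q i * v 1 (i + 1))
    (hgr : ∀ r, 2 ≤ r → ∀ i, i + 1 < N →
      g r i = e i / q i * g r (i + 1) + 1 / q (i + 1) * g (r - 1) i
        + ∑ k ∈ Finset.Icc 1 (r - 1), g k (i + 1) * g (r - k) i)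
    (hgt1' : ∀ r, 1 ≤ r → gt r 0 = 0)
    (hgt1 : ∀ i, 0 < i → i < N → gt 1 i = e (i - 1) / q i * w 1 (i - 1))
    (hgtr : ∀ r, 2 ≤ r → ∀ i, 0 < i → i < N →
      gt r i = e (i - 1) / q i * gt r (i - 1) + 1 / q (i - 1) * gt (r - 1) i
        + ∑ k ∈ Finset.Icc 1 (r - 1), gt k (i - 1) * gt (r - k) i) :
    ∀ s, 2 ≤ s → s ≤ M →
      v s (N - 1) = 1 / q (N - 1) * w (s - 1) (N - 1) ∧
      w s 0 = 1 / q 0 * v (s - 1) 0 ∧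
      (∀ i, i + 1 < N →
        v s i = e i / q i * v s (i + 1) + 1 / q i * w (s - 1) i
          + 2 * ∑ k ∈ Finset.Icc 1 (s - 1), g k i * w (s - k) i) ∧
      (∀ i, 0 < i → i < N →
        w s i = e (i - 1) / q i * w s (i - 1) + 1 / q i * v (s - 1) i
          + 2 * ∑ k ∈ Finset.Icc 1 (s - 1), gt k i * v (s - k) i) := by
  -- normalise the unused superdiagonal values to zero
  have hB1 : ∀ i j : Fin N, B i j =
      if (j : ℕ) = (i : ℕ) then Real.sqrt (q i)
      else if (j : ℕ) = (i : ℕ) + 1 then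
        Real.sqrt ((fun k => if k + 1 < N then e k else 0) (i : ℕ)) else 0 := by
    intro i j
    rw [hB]
    by_cases h1 : (j : ℕ) = i
    · simp [h1]
    · by_cases h2 : (j : ℕ) = i + 1
      · have h3 : (i : ℕ) + 1 < N := by omega
        simp [h2, h3]
      · simp [h1, h2]
  have H1 := half N hN q (fun k => if k + 1 < N then e k else 0) hq
    (by intro i; split_ifs with h
        · exact (he i h).le
        · exact le_rfl)
    (by intro i hi; rw [if_neg (by omega)]) B hB1 M hM v w hv hw g hgN
    (by intro i hi; rw [if_pos hi]; exact hg1 i hi)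
    (by intro r hr i hi; rw [if_pos hi]; exact hgr r hr i hi)
  let B' : Matrix (Fin N) (Fin N) ℝ := Bᵀ.submatrix Fin.revPerm Fin.revPerm
  have hBB : B'ᵀ * B' = (B * Bᵀ).submatrix Fin.revPerm Fin.revPerm := by
    simp only [B', Matrix.transpose_submatrix, Matrix.transpose_transpose,
      Matrix.submatrix_mul_equiv]
  have hBB' : B' * B'ᵀ = (Bᵀ * B).submatrix Fin.revPerm Fin.revPerm := by
    simp only [B', Matrix.transpose_submatrix, Matrix.transpose_transpose,
      Matrix.submatrix_mul_equiv]
  have hrev : ∀ i (hi : i < N), Fin.revPerm (⟨i, hi⟩ : Fin N) = ⟨N - 1 - i, by omega⟩ := by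
    intro i hi
    apply Fin.ext
    simp [Fin.val_rev]
    omega
  have H2 := half N hN (fun i => q (N - 1 - i)) (fun k => if k + 1 < N then e (N - 2 - k) else 0)
    (by intro i hi; exact hq _ (by omega))
    (by intro i; split_ifs with h
        · exact (he _ (by omega)).le
        · exact le_rfl)
    (by intro i hi; rw [if_neg (by omega)]) B'
    (by
      rintro ⟨i, hi⟩ ⟨j, hj⟩
      show B (Fin.revPerm ⟨j, hj⟩) (Fin.revPerm ⟨i, hi⟩) = _
      rw [hrev, hrev, hB]
      dsimp only
      by_cases h1 : j = i
      · subst h1; simp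
      · by_cases h2 : j = i + 1
        · subst h2
          rw [if_neg (by omega), if_pos (by omega), if_neg (by omega), if_pos rfl, if_pos hj]
          congr 2; omega
        · rw [if_neg (by omega), if_neg (by omega), if_neg h1, if_neg h2])
    M hM (fun s i => w s (N - 1 - i)) (fun s i => v s (N - 1 - i))
    (by
      intro s h1 h2 i hi
      rw [hw s h1 h2 _ (by omega), hBB, Matrix.inv_submatrix_equiv, submatrix_pow',
        Matrix.submatrix_apply, hrev])
    (by
      intro s h1 h2 i hi
      rw [hv s h1 h2 _ (by omega), hBB', Matrix.inv_submatrix_equiv, submatrix_pow',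
        Matrix.submatrix_apply, hrev])
    (fun r i => gt r (N - 1 - i))
    (by
      intro r hr
      rw [Nat.sub_self]; exact hgt1' r hr)
    (by
      intro i hi
      rw [if_pos hi, hgt1 _ (by omega) (by omega), show N - 1 - i - 1 = N - 2 - i by omega,
        show N - 1 - (i + 1) = N - 2 - i by omega])
    (by
      intro r hr i hi
      rw [if_pos hi, hgtr r hr _ (by omega) (by omega), show N - 1 - i - 1 = N - 2 - i by omega,
        show N - 1 - (i + 1) = N - 2 - i by omega])
  intro s hs hsM
  obtain ⟨a1, a2⟩ := H1 s hs hsM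
  obtain ⟨b1, b2⟩ := H2 s hs hsM
  refine ⟨a1, ?_, ?_, ?_⟩
  · simpa using b1
  · intro i hi
    have := a2 i hi
    rwa [if_pos hi] at this
  · intro i h0 hi
    have := b2 (N - 1 - i) (by omega)
    rwa [if_pos (by omega), show N - 1 - (N - 1 - i) = i by omega,
      show N - 2 - (N - 1 - i) = i - 1 by omega,
      show N - 1 - (N - 1 - i + 1) = i - 1 by omega] at this
end

section
/- Define reals h_i^{(p)} (i = 1,…,N, p ≥ 1) by: h_1^{(1)} = 1/q_1; h_i^{(1)} = F̃_i·h_{i−1}^{(1)} + 1/q_i for i = 2,…,N; h_1^{(p)} = 0 for p ≥ 2; and h_i^{(p)} = F̃_i·(h_{i−1}^{(p)} + p·h_{i−1}^{(1)}·h_{i−1}^{(p−1)}) + Σ_{k=1}^{p−2} C(p,k)·h_{i−1}^{(k)}·h_i^{(p−k)} for i = 2,…,N and p ≥ 2, where C(p,k) is the binomial coefficient. Define H_i^{(p)} by H_i^{(1)} = h_i^{(1)} and H_i^{(p)} = h_i^{(p)} + Σ_{k=1}^{p−1} C(p−1,k)·h_i^{(k)}·H_i^{(p−k)} for p ≥ 2.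 Then for every positive integer p, Tr((B^⊤B)^{−p}) = (1/(p−1)!)·Σ_{i=1}^{N} H_i^{(p)}. -/
open Matrix PowerSeries

lemma aux_prod {ι : Type*} (s : Finset ι) (f : ι → PowerSeries ℝ)
    (hf : ∀ i ∈ s, constantCoeff (f i) ≠ 0) :
    d⁄dX ℝ (∏ i ∈ s, f i) = (∏ i ∈ s, f i) * ∑ i ∈ s, d⁄dX ℝ (f i) * (f i)⁻¹ := by
  classical
  induction s using Finset.induction_on with
  | empty => simp
  | insert a s ha ih =>
    rw [Finset.prod_insert ha, Finset.sum_insert ha, Derivation.leibniz,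
      ih (fun i hi => hf i (Finset.mem_insert_of_mem hi))]
    have := PowerSeries.mul_inv_cancel (f a) (hf a (Finset.mem_insert_self _ _))
    simp only [smul_eq_mul]
    linear_combination (-(∏ i ∈ s, f i) * d⁄dX ℝ (f a)) * this

lemma aux_logd {ι κ : Type*} (s : Finset ι) (t : Finset κ) (f : ι → PowerSeries ℝ)
    (g : κ → PowerSeries ℝ)
    (hf : ∀ i ∈ s, constantCoeff (f i) ≠ 0) (hg : ∀ i ∈ t, constantCoeff (g i) ≠ 0)
    (hfg : ∏ i ∈ s, f i = ∏ i ∈ t, g i) :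
    ∑ i ∈ s, d⁄dX ℝ (f i) * (f i)⁻¹ = ∑ i ∈ t, d⁄dX ℝ (g i) * (g i)⁻¹ := by
  have h1 := aux_prod s f hf
  rw [hfg, aux_prod t g hg] at h1
  refine (mul_left_cancel₀ ?_ h1).symm
  rw [Finset.prod_ne_zero_iff]
  intro i hi h0
  exact hg i hi (by simp [h0])

/-- upper bidiagonal product formula -/
lemma aux_bidiag {R : Type*} [CommRing R] {N : ℕ} (a b d : ℕ → R) (C : Matrix (Fin N) (Fin N) R)
    (hC : ∀ i j : Fin N, C i j = if (j : ℕ) = i then a i else if (j : ℕ) = i + 1 then b i else 0)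
    (i j : Fin N) :
    (Cᵀ * (Matrix.diagonal fun k : Fin N => d k) * C) i j =
      if (i : ℕ) = j then a i * a i * d i +
          (if (i : ℕ) = 0 then 0 else b (i - 1) * b (i - 1) * d (i - 1))
      else if (j : ℕ) = i + 1 then a i * b i * d i
      else if (i : ℕ) = j + 1 then a j * b j * d j else 0 := by
  have e1 : (Cᵀ * (Matrix.diagonal fun k : Fin N => d k) * C) i j =
      ∑ k ∈ Finset.range N, (if (i : ℕ) = k then a k else if (i : ℕ) = k + 1 then b k else 0) * d k
        * (if (j : ℕ) = k then a k else if (j : ℕ) = k + 1 then b k else 0) := by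
    rw [← Fin.sum_univ_eq_sum_range (fun k => (if (i : ℕ) = k then a k else
      if (i : ℕ) = k + 1 then b k else 0) * d k
        * (if (j : ℕ) = k then a k else if (j : ℕ) = k + 1 then b k else 0)) N, Matrix.mul_apply]
    refine Finset.sum_congr rfl fun k _ => ?_
    rw [Matrix.mul_diagonal, Matrix.transpose_apply, hC, hC]
  rw [e1]
  have hi := i.2
  have hj := j.2
  generalize (i : ℕ) = i at *
  generalize (j : ℕ) = j at *
  clear e1 hC
  have e2 : ∀ k, (if i = k then a k else if i = k + 1 then b k else 0) * d k
        * (if j = k then a k else if j = k + 1 then b k else 0) =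
      (if i = k then a i * d i * (if j = i then a i else if j = i + 1 then b i else 0) else 0) +
      (if i = 0 then 0 else if i - 1 = k then b (i-1) * d (i-1) *
        (if j = i-1 then a (i-1) else if j = i then b (i-1) else 0) else 0) := by
    intro k
    rcases i with _ | i
    · by_cases h : 0 = k
      · subst h; simp
      · simp [h]
    · simp only [Nat.add_sub_cancel, Nat.succ_ne_zero, if_false, Nat.add_right_cancel_iff]
      by_cases h : i = k
      · subst h; simp
      · by_cases h' : i + 1 = k
        · subst h'; simp
        · simp [h, h']
  simp only [e2, Finset.sum_add_distrib]
  rcases i with _ | i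
  · simp only [Finset.sum_ite_eq, Finset.mem_range, hi, if_true]
    split_ifs <;> first | omega | contradiction | (subst_vars; simp; try ring)
  · simp only [Nat.add_sub_cancel, Nat.succ_ne_zero, if_false, Finset.sum_ite_eq, Finset.mem_range,
      hi, if_true, show i < N by omega]
    clear e2
    split_ifs with h1 h2 h3 h4 h5 <;> first | omega | contradiction | (subst_vars; ring)

lemma aux_trace {N : ℕ} (M : Matrix (Fin N) (Fin N) ℝ) (hM : M.IsHermitian)
    (h0 : ∀ i, hM.eigenvalues i ≠ 0) (p : ℕ) :
    Matrix.trace (M⁻¹ ^ p) = ∑ i, (hM.eigenvalues i)⁻¹ ^ p := by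
  have hs := hM.spectral_theorem
  set l := hM.eigenvalues
  have hinv : M⁻¹ = Unitary.conjStarAlgAut ℝ _ hM.eigenvectorUnitary
      (diagonal fun i => (l i)⁻¹) := by
    apply Matrix.inv_eq_right_inv
    conv_lhs => enter [1]; rw [hs]
    rw [← map_mul, Matrix.diagonal_mul_diagonal]
    simp [h0]
  rw [hinv, ← map_pow, Unitary.conjStarAlgAut_apply, Matrix.trace_mul_cycle]
  simp [Matrix.diagonal_pow, Matrix.trace]

lemma aux_eig (l : ℝ) (hl : l ≠ 0) :
    PowerSeries.X * (d⁄dX ℝ (X - C l) * (X - C l)⁻¹) =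
      - (PowerSeries.mk fun p => if p = 0 then 0 else l⁻¹ ^ p) := by
  have hc : constantCoeff (X - C l : PowerSeries ℝ) ≠ 0 := by simpa using hl
  have hE : (PowerSeries.mk fun p => if p = 0 then 0 else l⁻¹ ^ p) * (X - C l) = - X := by
    ext p
    rw [mul_sub, map_sub, coeff_mul_C]
    rcases p with _ | p
    · simp
    · rw [coeff_succ_mul_X]
      rcases p with _ | p
      · simp [hl]
      · simp [coeff_X, pow_succ]; field_simp; simp
  have h1 := PowerSeries.mul_inv_cancel _ hc
  have h2 : d⁄dX ℝ (X - C l) = 1 := by simp [derivative_C, derivative_X]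
  rw [h2]
  linear_combination (-(PowerSeries.mk fun p => if p = 0 then 0 else l⁻¹ ^ p)) * h1 + (X - C l : PowerSeries ℝ)⁻¹ * hE

/-- generating function of `h` -/
noncomputable def auxG (h : ℕ → ℕ → ℝ) (i : ℕ) : PowerSeries ℝ :=
  PowerSeries.mk fun p => if p = 0 then 0 else h p i / (p.factorial : ℝ)

/-- generating function of `H` -/
noncomputable def auxK (H : ℕ → ℕ → ℝ) (i : ℕ) : PowerSeries ℝ :=
  PowerSeries.mk fun p => if p = 0 then 0 else H p i / ((p - 1).factorial : ℝ)

lemma auxG_const (h : ℕ → ℕ → ℝ) (i : ℕ) : constantCoeff (auxG h i) = 0 := by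
  simp [auxG, ← coeff_zero_eq_constantCoeff_apply]

lemma auxG_rec (h : ℕ → ℕ → ℝ) (i : ℕ) (F r : ℝ) (h1 : h 1 (i + 1) = F * h 1 i + r)
    (hp : ∀ p, 2 ≤ p → h p (i + 1) = F * (h p i + p * h 1 i * h (p - 1) i)
        + ∑ k ∈ Finset.Icc 1 (p - 2), (p.choose k : ℝ) * h k i * h (p - k) (i + 1)) :
    (auxG h (i + 1) - C r * X) * (1 - auxG h i) = C F * auxG h i := by
  set T : PowerSeries ℝ := PowerSeries.mk fun p => if p < 2 then 0 else h p (i + 1) / (p.factorial : ℝ)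
    with hT
  have hGT : auxG h (i + 1) = T + C (h 1 (i + 1)) * X := by
    ext p
    rcases p with _ | _ | p
    · simp [auxG, hT]
    · simp [auxG, hT]
    · simp [auxG, hT, coeff_X]
  have key : T = auxG h i * T + C F * (auxG h i - C (h 1 i) * X + C (h 1 i) * (X * auxG h i)) := by
    ext p
    rcases p with _ | _ | p
    · simp [auxG, hT]
    · simp [auxG, hT, coeff_mul, Finset.Nat.antidiagonal_succ, coeff_succ_X_mul]
    · rw [map_add, coeff_C_mul, map_add, map_sub, coeff_C_mul, coeff_C_mul, coeff_succ_X_mul,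
        coeff_mul, Finset.Nat.sum_antidiagonal_eq_sum_range_succ_mk]
      have hs : ∑ k ∈ Finset.range (p + 2).succ, coeff k (auxG h i) * coeff (p + 2 - k) T =
          ∑ k ∈ Finset.Icc 1 p, h k i / (k.factorial : ℝ) * (h (p + 2 - k) (i + 1) /
            ((p + 2 - k).factorial : ℝ)) := by
        symm
        have : ∀ k ∈ Finset.Icc 1 p, h k i / (k.factorial : ℝ) * (h (p + 2 - k) (i + 1) /
            ((p + 2 - k).factorial : ℝ)) = coeff k (auxG h i) * coeff (p + 2 - k) T := by
          intro k hk
          rw [Finset.mem_Icc] at hk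
          simp only [auxG, hT, coeff_mk]
          rw [if_neg (by omega), if_neg (by omega)]
        rw [Finset.sum_congr rfl this]
        apply Finset.sum_subset
        · intro k hk
          rw [Finset.mem_Icc] at hk
          rw [Finset.mem_range]; omega
        · intro k hk hk'
          rw [Finset.mem_range] at hk
          rw [Finset.mem_Icc] at hk'
          simp only [auxG, hT, coeff_mk]
          rcases Nat.eq_zero_or_pos k with h0 | h0
          · simp [h0]
          · rw [if_pos (show p + 2 - k < 2 by omega), mul_zero]
      rw [hs]
      have hc := hp (p + 2) (by omega)
      simp only [hT, auxG, coeff_mk, coeff_X, if_neg (show ¬ (p + 2 < 2) by omega),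
        if_neg (show ¬ (p + 1 = 0) by omega), if_neg (show ¬ (p + 1 + 1 = 0) by omega),
        if_neg (show ¬ (p + 1 + 1 = 1) by omega), if_neg (show ¬ (p + 1 + 1 < 2) by omega)]
      rw [show p + 1 + 1 = p + 2 from rfl, hc, add_div, add_comm, show p + 2 - 2 = p by omega,
        Finset.sum_div]
      congr 1
      · refine Finset.sum_congr rfl fun k hk => ?_
        rw [Finset.mem_Icc] at hk
        rw [Nat.cast_choose ℝ (show k ≤ p + 2 by omega)]
        have a1 : ((p + 2).factorial : ℝ) ≠ 0 := by positivity
        have a2 : (k.factorial : ℝ) ≠ 0 := by positivity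
        have a3 : ((p + 2 - k).factorial : ℝ) ≠ 0 := by positivity
        field_simp
      · rw [show p + 2 - 1 = p + 1 by omega, Nat.factorial_succ (p + 1)]
        have a1 : ((p + 1).factorial : ℝ) ≠ 0 := by positivity
        have a2 : (p : ℝ) + 2 ≠ 0 := by positivity
        push_cast
        field_simp
        ring
  have hC : (C (h 1 (i + 1)) : PowerSeries ℝ) = C F * C (h 1 i) + C r := by
    rw [h1, map_add, map_mul]
  rw [hGT, hC]
  linear_combination key

lemma auxK_eq (h H : ℕ → ℕ → ℝ) (i : ℕ) (h1 : H 1 i = h 1 i)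
    (hp : ∀ p, 2 ≤ p → H p i = h p i +
      ∑ k ∈ Finset.Icc 1 (p - 1), ((p - 1).choose k : ℝ) * h k i * H (p - k) i) :
    auxK H i * (1 - auxG h i) = X * d⁄dX ℝ (auxG h i) := by
  have key : auxK H i = X * d⁄dX ℝ (auxG h i) + auxG h i * auxK H i := by
    ext p
    rcases p with _ | p
    · simp [auxG, auxK]
    · rw [map_add, coeff_succ_X_mul, coeff_derivative,
        coeff_mul, Finset.Nat.sum_antidiagonal_eq_sum_range_succ_mk]
      have hs : ∑ k ∈ Finset.range (p + 1).succ, coeff k (auxG h i) * coeff (p + 1 - k) (auxK H i) =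
          ∑ k ∈ Finset.Icc 1 p, h k i / (k.factorial : ℝ) * (H (p + 1 - k) i /
            ((p - k).factorial : ℝ)) := by
        symm
        have : ∀ k ∈ Finset.Icc 1 p, h k i / (k.factorial : ℝ) * (H (p + 1 - k) i /
            ((p - k).factorial : ℝ)) = coeff k (auxG h i) * coeff (p + 1 - k) (auxK H i) := by
          intro k hk
          rw [Finset.mem_Icc] at hk
          simp only [auxG, auxK, coeff_mk]
          rw [if_neg (by omega), if_neg (by omega), show p + 1 - k - 1 = p - k by omega]
        rw [Finset.sum_congr rfl this]
        apply Finset.sum_subset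
        · intro k hk
          rw [Finset.mem_Icc] at hk
          rw [Finset.mem_range]; omega
        · intro k hk hk'
          rw [Finset.mem_range] at hk
          rw [Finset.mem_Icc] at hk'
          simp only [auxG, auxK, coeff_mk]
          rcases Nat.eq_zero_or_pos k with h0 | h0
          · simp [h0]
          · rw [if_pos (show p + 1 - k = 0 by omega), mul_zero]
      rw [hs]
      have hc : H (p + 1) i = h (p + 1) i +
          ∑ k ∈ Finset.Icc 1 p, (p.choose k : ℝ) * h k i * H (p + 1 - k) i := by
        rcases p with _ | p
        · simp [h1]
        · exact hp (p + 1 + 1) (by omega)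
      simp only [auxG, auxK, coeff_mk, if_neg (show ¬ (p + 1 = 0) by omega), Nat.add_sub_cancel]
      rw [hc, add_div, Finset.sum_div]
      congr 1
      · rw [Nat.factorial_succ]
        have a1 : (p.factorial : ℝ) ≠ 0 := by positivity
        push_cast
        field_simp
      · refine Finset.sum_congr rfl fun k hk => ?_
        rw [Finset.mem_Icc] at hk
        rw [Nat.cast_choose ℝ hk.2]
        have a1 : (p.factorial : ℝ) ≠ 0 := by positivity
        have a2 : (k.factorial : ℝ) ≠ 0 := by positivity
        have a3 : ((p - k).factorial : ℝ) ≠ 0 := by positivity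
        field_simp
  linear_combination key

theorem stmt_4 (N : ℕ) (hN : 0 < N) (q e : ℕ → ℝ)
    (hq : ∀ i, i < N → 0 < q i) (he : ∀ i, i + 1 < N → 0 < e i)
    (B : Matrix (Fin N) (Fin N) ℝ)
    (hB : ∀ i j : Fin N, B i j =
      if (j : ℕ) = (i : ℕ) then Real.sqrt (q i)
      else if (j : ℕ) = (i : ℕ) + 1 then Real.sqrt (e i) else 0)
    (h H : ℕ → ℕ → ℝ)
    (hh1a : h 1 0 = 1 / q 0)
    (hh1b : ∀ i, 0 < i → i < N → h 1 i = e (i - 1) / q i * h 1 (i - 1) + 1 / q i)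
    (hhp0 : ∀ p, 2 ≤ p → h p 0 = 0)
    (hhp : ∀ p, 2 ≤ p → ∀ i, 0 < i → i < N →
      h p i = e (i - 1) / q i * (h p (i - 1) + p * h 1 (i - 1) * h (p - 1) (i - 1))
        + ∑ k ∈ Finset.Icc 1 (p - 2), (p.choose k : ℝ) * h k (i - 1) * h (p - k) i)
    (hH1 : ∀ i, i < N → H 1 i = h 1 i)
    (hHp : ∀ p, 2 ≤ p → ∀ i, i < N →
      H p i = h p i + ∑ k ∈ Finset.Icc 1 (p - 1), ((p - 1).choose k : ℝ) * h k i * H (p - k) i) :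
    ∀ p, 1 ≤ p →
      Matrix.trace ((Bᵀ * B)⁻¹ ^ p)
        = 1 / (Nat.factorial (p - 1) : ℝ) * ∑ i ∈ Finset.range N, H p i := by
  -- pivots
  obtain ⟨D, hD⟩ : ∃ D : ℕ → PowerSeries ℝ, ∀ i, D i = C (q i) * (1 - auxG h i) := ⟨_, fun _ => rfl⟩
  have hDc : ∀ i, i < N → constantCoeff (D i) ≠ 0 := by
    intro i hi
    rw [hD, map_mul, map_sub, auxG_const]
    simpa using (hq i hi).ne'
  have hD0 : D 0 = C (q 0) - X := by
    have hG : auxG h 0 = C (1 / q 0) * X := by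
      ext p
      rcases p with _ | _ | p
      · simp [auxG]
      · simp [auxG, hh1a]
      · simp [auxG, coeff_X, hhp0]
    have : (C (q 0) : PowerSeries ℝ) * C (1 / q 0) = 1 := by
      rw [← map_mul, mul_one_div_cancel (hq 0 hN).ne', map_one]
    rw [hD, hG]
    linear_combination (-X) * this
  have hDs : ∀ i, i + 1 < N → D (i + 1) + C (q i * e i) * (D i)⁻¹ = C (q (i + 1)) + C (e i) - X := by
    intro i hi
    have hr := auxG_rec h i (e i / q (i + 1)) (1 / q (i + 1)) (hh1b (i + 1) (by omega) hi)
      (fun p hp => hhp p hp (i + 1) (by omega) hi)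
    have hinv := PowerSeries.mul_inv_cancel (D i) (hDc i (by omega))
    have hq1 := (hq (i + 1) hi).ne'
    have c1 : (C (q (i + 1)) : PowerSeries ℝ) * C (1 / q (i + 1)) = 1 := by
      rw [← map_mul, mul_one_div_cancel hq1, map_one]
    have c2 : (C (q (i + 1)) : PowerSeries ℝ) * C (e i / q (i + 1)) = C (e i) := by
      rw [← map_mul, mul_div_cancel₀ _ hq1]
    have hDne : D i ≠ 0 := fun h0 => hDc i (by omega) (by simp [h0])
    apply mul_right_cancel₀ hDne
    rw [map_mul]
    have e1 : D (i + 1) * D i = (C (q (i + 1)) - X) * D i - C (q i) * C (e i) * auxG h i := by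
      rw [hD, hD]
      linear_combination (- C (q i) * C (q (i+1))) * hr - C (q i) * auxG h i * c2
        - C (q i) * (1 - auxG h i) * X * c1
    have e2 := hD i
    linear_combination e1 + C (q i) * C (e i) * hinv - C (e i) * e2
  -- factorization
  set M := Bᵀ * B with hM
  have hMentry := fun i j => aux_bidiag (fun i => Real.sqrt (q i)) (fun i => Real.sqrt (e i))
    (fun _ => (1 : ℝ)) B hB i j
  simp only [Matrix.diagonal_one, Matrix.mul_one, mul_one, ← hM] at hMentry
  let L : Matrix (Fin N) (Fin N) (PowerSeries ℝ) := Matrix.of fun i j =>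
    if (j : ℕ) = i then 1 else if (j : ℕ) = i + 1 then
      C (Real.sqrt (q i) * Real.sqrt (e i)) * (D i)⁻¹ else 0
  have hLentry := fun i j => aux_bidiag (fun _ => (1 : PowerSeries ℝ))
    (fun i => C (Real.sqrt (q i) * Real.sqrt (e i)) * (D i)⁻¹) (fun i => - D i) L (fun i j => rfl) i j
  have hfac : M.charmatrix.map (Polynomial.coeToPowerSeries.ringHom (R := ℝ)) =
      Lᵀ * (Matrix.diagonal fun k : Fin N => - D k) * L := by
    ext1 i j
    rw [hLentry, Matrix.map_apply, Matrix.charmatrix_apply, hMentry, Matrix.diagonal_apply]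
    have hi := i.2
    have hj := j.2
    simp only [Fin.ext_iff]
    generalize (i : ℕ) = i at *
    generalize (j : ℕ) = j at *
    have hoff : ∀ k, k < N → 1 * (C (Real.sqrt (q k) * Real.sqrt (e k)) * (D k)⁻¹) * (- D k) =
        - (C (Real.sqrt (q k) * Real.sqrt (e k)) : PowerSeries ℝ) := by
      intro k hk
      have hinv := PowerSeries.mul_inv_cancel (D k) (hDc k hk)
      linear_combination (- C (Real.sqrt (q k) * Real.sqrt (e k))) * hinv
    rw [map_sub, Polynomial.coeToPowerSeries.ringHom_apply,
      Polynomial.coeToPowerSeries.ringHom_apply, Polynomial.coe_C]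
    by_cases hij : i = j
    · subst hij
      simp only [if_true, Polynomial.coe_X]
      rcases i with _ | i
      · simp only [if_true, add_zero]
        rw [Real.mul_self_sqrt (hq 0 hN).le, hD0]
        ring
      · simp only [Nat.succ_ne_zero, if_false, Nat.add_sub_cancel]
        rw [Real.mul_self_sqrt (hq _ hi).le, Real.mul_self_sqrt (he _ hi).le, map_add]
        have hinv := PowerSeries.mul_inv_cancel (D i) (hDc i (by omega))
        have hsq : (C (Real.sqrt (q i) * Real.sqrt (e i)) : PowerSeries ℝ) *
            C (Real.sqrt (q i) * Real.sqrt (e i)) = C (q i * e i) := by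
          rw [← map_mul, mul_mul_mul_comm, Real.mul_self_sqrt (hq _ (by omega)).le,
            Real.mul_self_sqrt (he _ hi).le]
        have hds := hDs i hi
        linear_combination hds + (D i)⁻¹ * (D i)⁻¹ * D i * hsq + C (q i * e i) * (D i)⁻¹ * hinv
    · simp only [if_neg hij, Polynomial.coe_zero, zero_sub]
      split_ifs with h1 h2
      · rw [hoff i hi]
      · rw [hoff j hj]
      · simp
  have hMH : M.IsHermitian := by
    have := Matrix.isHermitian_conjTranspose_mul_self B
    rwa [Matrix.conjTranspose_eq_transpose_of_trivial] at this
  have hdetL : L.det = 1 := by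
    rw [Matrix.det_of_isUpperTriangular]
    · simp [L]
    · intro i j hij
      have : (j : ℕ) < i := hij
      simp only [L, Matrix.of_apply]
      rw [if_neg (by omega), if_neg (by omega)]
  have hprod : ∏ i : Fin N, (X - C (hMH.eigenvalues i) : PowerSeries ℝ) =
      ∏ i : Fin N, (- D i) := by
    have h1 := congrArg Matrix.det hfac
    rw [Matrix.det_mul, Matrix.det_mul, Matrix.det_transpose, hdetL, Matrix.det_diagonal, one_mul,
      mul_one] at h1
    rw [← h1]
    have h2 := congrArg (Polynomial.coeToPowerSeries.ringHom (R := ℝ)) hMH.charpoly_eq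
    rw [Matrix.charpoly, RingHom.map_det, RingHom.mapMatrix_apply] at h2
    rw [h2, map_prod]
    simp
  have hDc' : ∀ i ∈ (Finset.univ : Finset (Fin N)), constantCoeff (- D i) ≠ 0 := by
    intro i _
    rw [map_neg, neg_ne_zero]
    exact hDc i i.2
  have hl0 : ∀ i, hMH.eigenvalues i ≠ 0 := by
    have h1 := congrArg (constantCoeff (R := ℝ)) hprod
    rw [map_prod, map_prod] at h1
    have h2 := Finset.prod_ne_zero_iff.2 hDc'
    rw [← h1, Finset.prod_ne_zero_iff] at h2
    intro i
    simpa using h2 i (Finset.mem_univ i)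
  have hlog := aux_logd Finset.univ Finset.univ _ _
    (fun i _ => by simpa using hl0 i) hDc' hprod
  have hlog2 := congrArg (fun t => X * t) hlog
  simp only [Finset.mul_sum] at hlog2
  have hK : ∀ i : Fin N, X * (d⁄dX ℝ (- D i) * (- D i)⁻¹) = - auxK H i := by
    intro i
    have hk := auxK_eq h H i (hH1 i i.2) (fun p hp => hHp p hp i i.2)
    have hinv := PowerSeries.mul_inv_cancel (- D i) (hDc' i (Finset.mem_univ i))
    have hd : d⁄dX ℝ (- D i) = C (q i) * d⁄dX ℝ (auxG h i) := by
      rw [hD, map_neg, Derivation.leibniz]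
      simp
    rw [hd]
    have e2 := hD i
    linear_combination (-C (q i) * (- D i)⁻¹) * hk - auxK H i * hinv - (auxK H i * (- D i)⁻¹) * e2
  rw [Finset.sum_congr rfl (fun i _ => hK i),
    Finset.sum_congr rfl (fun i _ => aux_eig _ (hl0 i))] at hlog2
  intro p hp
  have hcoef := congrArg (coeff p) hlog2
  rw [map_sum, map_sum] at hcoef
  simp only [map_neg, Finset.sum_neg_distrib, neg_inj, auxK, coeff_mk,
    if_neg (show ¬ p = 0 by omega)] at hcoef
  rw [aux_trace M hMH hl0 p, hcoef, Finset.mul_sum,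
    Fin.sum_univ_eq_sum_range (fun i => H p i / ((p - 1).factorial : ℝ)) N]
  refine Finset.sum_congr rfl fun i _ => ?_
  ring
end

section
/- Define reals h̃_i^{(p)} (i = 1,…,N, p ≥ 1) by: h̃_N^{(1)} = 1/q_N; h̃_i^{(1)} = F_i·h̃_{i+1}^{(1)} + 1/q_i for i = 1,…,N−1; h̃_N^{(p)} = 0 for p ≥ 2; and h̃_i^{(p)} = F_i·(h̃_{i+1}^{(p)} + p·h̃_{i+1}^{(1)}·h̃_{i+1}^{(p−1)}) + Σ_{k=1}^{p−2} C(p,k)·h̃_{i+1}^{(k)}·h̃_i^{(p−k)} for i = 1,…,N−1 and p ≥ 2, where C(p,k) is the binomial coefficient. Define H̃_i^{(p)} by H̃_i^{(1)} = h̃_i^{(1)} and H̃_i^{(p)} = h̃_i^{(p)} + Σ_{k=1}^{p−1} C(p−1,k)·h̃_i^{(k)}·H̃_i^{(p−k)} for p ≥ 2. Then for every positive integer p, Tr((BB^⊤)^{−p}) = (1/(p−1)!)·Σ_{i=1}^{N} H̃_i^{(p)}. -/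
open Matrix

namespace BidiagTrace

open PowerSeries

/-- the generating series of `h^{(n)} / n!`, `n ≥ 1` -/
noncomputable def aser (h : ℕ → ℝ) : PowerSeries ℝ :=
  PowerSeries.mk fun n => if n = 0 then 0 else h n / (n.factorial : ℝ)

/-- the generating series of `H^{(n)} / (n-1)!`, `n ≥ 1` -/
noncomputable def cser (h : ℕ → ℝ) : PowerSeries ℝ :=
  PowerSeries.mk fun n => if n = 0 then 0 else h n / ((n - 1).factorial : ℝ)

lemma coeff_aser_zero (h : ℕ → ℝ) : coeff 0 (aser h) = 0 := by simp [aser]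

lemma coeff_aser_succ (h : ℕ → ℝ) (n : ℕ) :
    coeff (n + 1) (aser h) = h (n + 1) / ((n + 1).factorial : ℝ) := by simp [aser]

lemma coeff_cser_zero (h : ℕ → ℝ) : coeff 0 (cser h) = 0 := by simp [cser]

lemma coeff_cser_succ (h : ℕ → ℝ) (n : ℕ) :
    coeff (n + 1) (cser h) = h (n + 1) / (n.factorial : ℝ) := by simp [cser]

lemma coeff_mul_zero' (f g : PowerSeries ℝ) (hf : coeff 0 f = 0) (hg : coeff 0 g = 0) (n : ℕ) :
    coeff (n + 1) (f * g) = ∑ k ∈ Finset.range n, coeff (k + 1) f * coeff (n - k) g := by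
  rw [coeff_mul, Finset.Nat.sum_antidiagonal_eq_sum_range_succ_mk, Finset.sum_range_succ,
    Finset.sum_range_succ']
  simp [hf, hg]

lemma sum_Icc_shift (f : ℕ → ℝ) (m : ℕ) :
    ∑ k ∈ Finset.Icc 1 m, f k = ∑ k ∈ Finset.range m, f (k + 1) := by
  have : Finset.Icc 1 m = Finset.Ico 1 (m + 1) := by ext; simp only [Finset.mem_Icc, Finset.mem_Ico]; omega
  rw [this, Finset.sum_Ico_eq_sum_range]
  simp [add_comm]

lemma aser_rec (q e : ℝ) (hq : q ≠ 0) (h h' : ℕ → ℝ)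
    (h1 : h 1 = e / q * h' 1 + 1 / q)
    (hp : ∀ p, 2 ≤ p → h p = e / q * (h' p + p * h' 1 * h' (p - 1))
        + ∑ k ∈ Finset.Icc 1 (p - 2), (p.choose k : ℝ) * h' k * h (p - k)) :
    C q * (aser h * (1 - aser h')) = C e * aser h' + X * (1 - aser h') := by
  have key : C q * aser h =
      C q * (aser h' * aser h) + C e * aser h' + X - X * aser h' := by
    ext n
    rcases n with _ | _ | m
    · simp [aser, coeff_zero_eq_constantCoeff]
    · simp only [map_add, map_sub, coeff_C_mul, coeff_aser_succ,
        coeff_mul_zero' _ _ (coeff_aser_zero h') (coeff_aser_zero h), coeff_succ_X_mul,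
        coeff_aser_zero, coeff_X]
      simp [h1]
      field_simp
    · have := hp (m + 2) (by omega)
      simp only [map_add, map_sub, coeff_C_mul, coeff_aser_succ,
        coeff_mul_zero' _ _ (coeff_aser_zero h') (coeff_aser_zero h), coeff_succ_X_mul,
        coeff_X]
      rw [Finset.sum_range_succ]
      have e1 : m + 1 - m = 0 + 1 := by omega
      rw [e1, coeff_aser_succ]
      have hs : ∑ k ∈ Finset.range m, h' (k + 1) / ((k + 1).factorial : ℝ)
            * coeff (m + 1 - k) (aser h)
          = (∑ k ∈ Finset.Icc 1 m, ((m + 2).choose k : ℝ) * h' k * h (m + 2 - k))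
            / ((m + 2).factorial : ℝ) := by
        rw [sum_Icc_shift, Finset.sum_div]
        refine Finset.sum_congr rfl fun k hk => ?_
        have hk' := Finset.mem_range.1 hk
        obtain ⟨d, rfl⟩ : ∃ d, m = k + d := ⟨m - k, by omega⟩
        have e2 : k + d + 1 - k = d + 1 := by omega
        have e3 : k + d + 2 - (k + 1) = d + 1 := by omega
        rw [e2, e3, coeff_aser_succ, Nat.choose_eq_factorial_div_factorial (by omega), e3,
          Nat.cast_div]
        · have := Nat.factorial_ne_zero (k + 1)
          have := Nat.factorial_ne_zero (d + 1)
          have := Nat.factorial_ne_zero (k + d + 2)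
          push_cast
          field_simp
        · have := Nat.factorial_mul_factorial_dvd_factorial (n := k + d + 2) (k := k + 1) (by omega)
          rwa [e3] at this
        · positivity
      rw [hs]
      simp only [Nat.add_sub_cancel] at this
      rw [this, h1]
      have f1 : ((m + 1 + 1).factorial : ℝ) = (m + 2) * ((m + 1).factorial : ℝ) := by
        rw [Nat.factorial_succ]; push_cast; ring
      have f2 : ((m + 1).factorial : ℝ) ≠ 0 := by positivity
      have f3 : (m : ℝ) + 2 ≠ 0 := by positivity
      have e5 : m + 2 - 1 = m + 1 := rfl
      rw [e5, f1]
      simp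
      field_simp
      ring
  linear_combination key

lemma cser_rec (h H : ℕ → ℝ) (h1 : H 1 = h 1)
    (hp : ∀ p, 2 ≤ p → H p = h p
        + ∑ k ∈ Finset.Icc 1 (p - 1), ((p - 1).choose k : ℝ) * h k * H (p - k)) :
    X * derivative ℝ (aser h) = cser H * (1 - aser h) := by
  have key : cser H = X * derivative ℝ (aser h) + aser h * cser H := by
    ext n
    rcases n with _ | n
    · have h0 := coeff_aser_zero h
      rw [coeff_zero_eq_constantCoeff_apply] at h0
      simp [coeff_cser_zero, h0]
    · have hn : H (n + 1) = h (n + 1)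
        + ∑ k ∈ Finset.Icc 1 n, (n.choose k : ℝ) * h k * H (n + 1 - k) := by
        rcases n with _ | n
        · simp [h1]
        · exact hp (n + 2) (by omega)
      simp only [map_add, coeff_aser_succ, coeff_cser_succ, coeff_succ_X_mul,
        coeff_mul_zero' _ _ (coeff_aser_zero h) (coeff_cser_zero H), coeff_derivative]
      have hs : ∑ k ∈ Finset.range n, h (k + 1) / ((k + 1).factorial : ℝ)
            * coeff (n - k) (cser H)
          = (∑ k ∈ Finset.Icc 1 n, (n.choose k : ℝ) * h k * H (n + 1 - k))
            / (n.factorial : ℝ) := by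
        rw [sum_Icc_shift, Finset.sum_div]
        refine Finset.sum_congr rfl fun k hk => ?_
        have hk' := Finset.mem_range.1 hk
        obtain ⟨d, rfl⟩ : ∃ d, n = k + 1 + d := ⟨n - k - 1, by omega⟩
        have e2 : k + 1 + d - k = d + 1 := by omega
        have e3 : k + 1 + d + 1 - (k + 1) = d + 1 := by omega
        have e4 : k + 1 + d - (k + 1) = d := by omega
        rw [e2, e3, coeff_cser_succ, Nat.choose_eq_factorial_div_factorial (by omega), e4,
          Nat.cast_div]
        · have := Nat.factorial_ne_zero (k + 1)
          have := Nat.factorial_ne_zero d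
          have := Nat.factorial_ne_zero (k + 1 + d)
          push_cast
          field_simp
        · have := Nat.factorial_mul_factorial_dvd_factorial (n := k + 1 + d) (k := k + 1) (by omega)
          rwa [e4] at this
        · positivity
      rw [hs, hn, Nat.factorial_succ]
      have f2 : (n.factorial : ℝ) ≠ 0 := by positivity
      push_cast
      field_simp
  linear_combination -key

lemma logderiv_prod {ι : Type*} (s : Finset ι) (f c : ι → PowerSeries ℝ)
    (h : ∀ i ∈ s, X * derivative ℝ (f i) = c i * f i) :
    X * derivative ℝ (∏ i ∈ s, f i) = (∑ i ∈ s, c i) * ∏ i ∈ s, f i := by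
  classical
  induction s using Finset.induction_on with
  | empty => simp
  | insert a s ha ih =>
    have h1 := ih fun i hi => h i (Finset.mem_insert_of_mem hi)
    have h2 := h a (Finset.mem_insert_self _ _)
    rw [Finset.prod_insert ha, Finset.sum_insert ha, Derivation.leibniz]
    simp only [smul_eq_mul]
    linear_combination (f a) * h1 + (∏ i ∈ s, f i) * h2

lemma sum_bidiag {R : Type*} [CommRing R] {N : ℕ} (i : Fin N) (x y : R) (f : Fin N → R) :
    ∑ j : Fin N, (if (j : ℕ) = (i : ℕ) then x else if (j : ℕ) = (i : ℕ) + 1 then y else 0) * f j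
      = x * f i + if h : (i : ℕ) + 1 < N then y * f ⟨i + 1, h⟩ else 0 := by
  have : ∀ j : Fin N, (if (j : ℕ) = (i : ℕ) then x else if (j : ℕ) = (i : ℕ) + 1 then y else 0) * f j
      = (if j = i then x * f j else 0) + (if (j : ℕ) = (i : ℕ) + 1 then y * f j else 0) := by
    intro j
    by_cases h : j = i
    · subst h; simp
    · have : (j : ℕ) ≠ i := fun h' => h (Fin.ext h')
      simp [h, this]
  rw [Finset.sum_congr rfl fun j _ => this j, Finset.sum_add_distrib]
  simp only [Finset.sum_ite_eq', Finset.mem_univ, if_true]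
  congr 1
  split_ifs with h
  · rw [Finset.sum_eq_single ⟨i + 1, h⟩]
    · simp
    · intro b _ hb
      rw [if_neg]
      intro h'; exact hb (Fin.ext h')
    · simp
  · refine Finset.sum_eq_zero fun j _ => if_neg ?_
    have := j.2
    omega

/-- determinant of the charmatrix through the bidiagonal factorization -/
lemma det_factor {N : ℕ} (D s : ℕ → PowerSeries ℝ) (M : Matrix (Fin N) (Fin N) (PowerSeries ℝ))
    (hD : ∀ i, i < N → constantCoeff (D i) ≠ 0)
    (hlast : ∀ i : Fin N, (i : ℕ) + 1 = N → M i i = D i)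
    (hdiag : ∀ i : Fin N, (i : ℕ) + 1 < N → M i i * D (i + 1) = D i * D (i + 1) + s i ^ 2)
    (hup : ∀ i j : Fin N, (j : ℕ) = i + 1 → M i j = s i)
    (hlo : ∀ i j : Fin N, (i : ℕ) = j + 1 → M i j = s j)
    (hz : ∀ i j : Fin N, (i : ℕ) ≠ j → (j : ℕ) ≠ i + 1 → (i : ℕ) ≠ j + 1 → M i j = 0) :
    M.det = ∏ i ∈ Finset.range N, D i := by
  let W : Matrix (Fin N) (Fin N) (PowerSeries ℝ) := Matrix.of fun i j =>
    if (j : ℕ) = (i : ℕ) then D i else if (j : ℕ) = (i : ℕ) + 1 then s i else 0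
  let V : Matrix (Fin N) (Fin N) (PowerSeries ℝ) := Matrix.of fun j k =>
    if (j : ℕ) = (k : ℕ) then 1 else if (j : ℕ) = (k : ℕ) + 1 then s k * (D j)⁻¹ else 0
  have hWV : M = W * V := by
    ext1 i k
    rw [Matrix.mul_apply]
    simp only [W, Matrix.of_apply]
    rw [sum_bidiag]
    simp only [V, Matrix.of_apply]
    have hi := i.2
    have hk := k.2
    by_cases h1 : (i : ℕ) = k
    · have : i = k := Fin.ext h1
      subst this
      by_cases h2 : (i : ℕ) + 1 < N
      · have h3 := hdiag i h2
        have h4 := PowerSeries.mul_inv_cancel _ (hD _ h2)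
        simp [h2]
        linear_combination (D (i + 1))⁻¹ * h3 + (D i - M i i) * h4
      · simp [h2, hlast i (by omega)]
    · by_cases h2 : (k : ℕ) = i + 1
      · have h3 : (i : ℕ) + 1 < N := by omega
        have h4 : (i : ℕ) ≠ k + 1 := by omega
        simp [h1, h3, h4, ← h2, hup i k h2]
      · by_cases h3 : (i : ℕ) = k + 1
        · have h5 : (i : ℕ) + 1 ≠ k := by omega
          have h4 := PowerSeries.mul_inv_cancel _ (hD _ hi)
          have h6 : ¬ ((i : ℕ) + 1 = k + 1) := by omega
          rw [hlo i k h3]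
          simp only [h1, h3.symm, h5, h6, if_false, if_true]
          simp
          linear_combination (-s k) * h4
        · have h5 : (i : ℕ) + 1 ≠ k := by omega
          simp [h1, h3, h5, hz i k h1 h2 h3]
  have hW : W.det = ∏ i ∈ Finset.range N, D i := by
    rw [Matrix.det_of_upperTriangular, ← Fin.prod_univ_eq_prod_range]
    · simp [W]
    · intro i j hij
      have : (j : ℕ) < i := hij
      simp only [W, Matrix.of_apply]
      rw [if_neg (by omega), if_neg (by omega)]
  have hV : V.det = 1 := by
    rw [Matrix.det_of_lowerTriangular]
    · simp [V]
    · intro i j hij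
      have : (i : ℕ) < j := hij
      simp only [V, Matrix.of_apply]
      rw [if_neg (by omega), if_neg (by omega)]
  rw [hWV, Matrix.det_mul, hW, hV, mul_one]

lemma trace_inv_pow_aux {N : ℕ} (A U V : Matrix (Fin N) (Fin N) ℝ) (l : Fin N → ℝ)
    (h0 : ∀ i, l i ≠ 0) (hVU : V * U = 1) (hA : A = U * Matrix.diagonal l * V) (p : ℕ) :
    Matrix.trace (A⁻¹ ^ p) = ∑ i, (l i)⁻¹ ^ p := by
  have hUV : U * V = 1 := mul_eq_one_comm.1 hVU
  have hmul : ∀ a b : Fin N → ℝ, (U * Matrix.diagonal a * V) * (U * Matrix.diagonal b * V)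
      = U * Matrix.diagonal (fun i => a i * b i) * V := by
    intro a b
    calc (U * Matrix.diagonal a * V) * (U * Matrix.diagonal b * V)
        = U * Matrix.diagonal a * (V * U) * Matrix.diagonal b * V := by
          simp only [Matrix.mul_assoc]
      _ = _ := by
          rw [hVU, Matrix.mul_one, Matrix.mul_assoc U, Matrix.diagonal_mul_diagonal]
  have hinv : A⁻¹ = U * Matrix.diagonal (fun i => (l i)⁻¹) * V := by
    apply Matrix.inv_eq_right_inv
    rw [hA, hmul]
    simp [h0, hUV]
  have hpow : A⁻¹ ^ p = U * Matrix.diagonal (fun i => (l i)⁻¹ ^ p) * V := by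
    induction p with
    | zero => simp [hUV]
    | succ p ih =>
      rw [pow_succ, ih, hinv, hmul]
      simp only [pow_succ]
  rw [hpow, Matrix.trace_mul_comm, ← Matrix.mul_assoc, hVU, Matrix.one_mul, Matrix.trace_diagonal]

lemma trace_inv_pow {N : ℕ} (A : Matrix (Fin N) (Fin N) ℝ) (hA : A.IsHermitian)
    (h0 : ∀ i, hA.eigenvalues i ≠ 0) (p : ℕ) :
    Matrix.trace (A⁻¹ ^ p) = ∑ i, (hA.eigenvalues i)⁻¹ ^ p := by
  refine trace_inv_pow_aux A hA.eigenvectorUnitary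
    (star (hA.eigenvectorUnitary : Matrix (Fin N) (Fin N) ℝ)) _ h0 (by simp) ?_ p
  have := hA.spectral_theorem
  rw [Unitary.conjStarAlgAut_apply] at this
  simpa using this

/-- the geometric series `∑_{p ≥ 1} l^{-p} X^p` -/
noncomputable def gser (l : ℝ) : PowerSeries ℝ :=
  PowerSeries.mk fun n => if n = 0 then 0 else l⁻¹ ^ n

lemma gser_spec (l : ℝ) (hl : l ≠ 0) :
    X * derivative ℝ (X - C l : PowerSeries ℝ) = (-gser l) * (X - C l) := by
  have : X = C l * gser l - X * gser l := by
    ext n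
    rcases n with _ | _ | n
    · have h0 : coeff 0 (gser l) = 0 := by simp [gser]
      rw [coeff_zero_eq_constantCoeff_apply] at h0
      simp [h0]
    · simp only [map_sub, coeff_C_mul, coeff_succ_X_mul, gser, coeff_mk, coeff_X]
      simp [hl]
    · simp only [map_sub, coeff_C_mul, coeff_succ_X_mul, gser, coeff_mk, coeff_X]
      simp
      field_simp
      ring
  have hd : derivative ℝ (X - C l : PowerSeries ℝ) = 1 := by
    simp
  rw [hd]
  linear_combination this

end BidiagTrace

open BidiagTrace PowerSeries in

/-- the formula `Tr((BBᵀ)^{-p}) = (1/(p-1)!) Σ_i H̃_i^{(p)}`.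
Indices are 0-based: the paper's 1-based `h̃_i^{(p)}` is `ht p (i-1)`;
`F_i = e_i/q_i` is `e (i-1) / q (i-1)`. -/
theorem stmt_5 (N : ℕ) (hN : 0 < N) (q e : ℕ → ℝ)
    (hq : ∀ i, i < N → 0 < q i) (he : ∀ i, i + 1 < N → 0 < e i)
    (B : Matrix (Fin N) (Fin N) ℝ)
    (hB : ∀ i j : Fin N, B i j =
      if (j : ℕ) = (i : ℕ) then Real.sqrt (q i)
      else if (j : ℕ) = (i : ℕ) + 1 then Real.sqrt (e i) else 0)
    (ht Ht : ℕ → ℕ → ℝ)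
    (hht1a : ht 1 (N - 1) = 1 / q (N - 1))
    (hht1b : ∀ i, i + 1 < N → ht 1 i = e i / q i * ht 1 (i + 1) + 1 / q i)
    (hhtp0 : ∀ p, 2 ≤ p → ht p (N - 1) = 0)
    (hhtp : ∀ p, 2 ≤ p → ∀ i, i + 1 < N →
      ht p i = e i / q i * (ht p (i + 1) + p * ht 1 (i + 1) * ht (p - 1) (i + 1))
        + ∑ k ∈ Finset.Icc 1 (p - 2), (p.choose k : ℝ) * ht k (i + 1) * ht (p - k) i)
    (hHt1 : ∀ i, i < N → Ht 1 i = ht 1 i)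
    (hHtp : ∀ p, 2 ≤ p → ∀ i, i < N →
      Ht p i = ht p i
        + ∑ k ∈ Finset.Icc 1 (p - 1), ((p - 1).choose k : ℝ) * ht k i * Ht (p - k) i) :
    ∀ p, 1 ≤ p →
      Matrix.trace ((B * Bᵀ)⁻¹ ^ p)
        = 1 / (Nat.factorial (p - 1) : ℝ) * ∑ i ∈ Finset.range N, Ht p i := by
  intro p hp
  set D : ℕ → PowerSeries ℝ := fun i => C (q i) * (aser (fun p => ht p i) - 1) with hDdef
  have hD0 : ∀ i, PowerSeries.constantCoeff (D i) = - q i := by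
    intro i
    have h0 := coeff_aser_zero (fun p => ht p i)
    rw [PowerSeries.coeff_zero_eq_constantCoeff_apply] at h0
    simp [D, h0]
  set A := B * Bᵀ with hAdef
  have hA : A.IsHermitian := by
    have := Matrix.isHermitian_mul_conjTranspose_self B
    simpa [A, Matrix.conjTranspose_eq_transpose_of_trivial] using this
  have hAe : ∀ i k : Fin N, A i k = Real.sqrt (q i) * B k i +
      if h : (i : ℕ) + 1 < N then Real.sqrt (e i) * B k ⟨i + 1, h⟩ else 0 := by
    intro i k
    rw [hAdef, Matrix.mul_apply]
    simp only [Matrix.transpose_apply]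
    rw [← sum_bidiag i _ _ (fun j => B k j)]
    simp only [hB i]
  have hrec : ∀ i, i + 1 < N → C (q i) * (aser (fun p => ht p i) *
      (1 - aser (fun p => ht p (i + 1)))) = C (e i) * aser (fun p => ht p (i + 1)) +
        X * (1 - aser (fun p => ht p (i + 1))) := by
    intro i hi
    exact aser_rec (q i) (e i) (hq i (by omega)).ne' _ _ (hht1b i hi) (fun p hp => hhtp p hp i hi)
  have hlastD : D (N - 1) = X - C (q (N - 1)) := by
    have hqN := (hq (N - 1) (by omega)).ne'
    have : aser (fun p => ht p (N - 1)) = C (1 / q (N - 1)) * X := by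
      ext n
      rcases n with _ | _ | n
      · simp [coeff_aser_zero]
      · simp [coeff_aser_succ, coeff_X, hht1a]
      · simp [coeff_aser_succ, coeff_X, hhtp0 (n + 2)]
    simp only [D, this]
    have h2 : C (q (N - 1)) * C (1 / q (N - 1)) = (1 : PowerSeries ℝ) := by
      rw [← map_mul, mul_one_div_cancel hqN, map_one]
    linear_combination X * h2
  set s : ℕ → ℝ := fun i => Real.sqrt (e i) * Real.sqrt (q (i + 1)) with hs
  have hdet := det_factor D (fun i => - C (s i))
    (Matrix.of fun i j => (if i = j then X else 0) - C (A i j))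
    (fun i hi => by rw [hD0]; exact neg_ne_zero.2 (hq i hi).ne')
    (by
      intro i hi
      have h1 : (i : ℕ) = N - 1 := by omega
      have h2 : ¬ ((i : ℕ) + 1 < N) := by omega
      have h3 := Real.mul_self_sqrt (hq i i.2).le
      simp only [Matrix.of_apply, if_true, hAe, h2, dif_neg, not_false_iff, hB, h3, add_zero]
      rw [h1, hlastD])
    (by
      intro i hi
      have h1 := hrec i hi
      have h3 := Real.mul_self_sqrt (hq i i.2).le
      have h4 := Real.mul_self_sqrt (he i hi).le
      have h5 := Real.mul_self_sqrt (hq (i + 1) hi).le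
      have h6 : s i ^ 2 = e i * q (i + 1) := by
        simp only [s]
        rw [mul_pow, Real.sq_sqrt (he i hi).le, Real.sq_sqrt (hq (i + 1) hi).le]
      have h7 : A i i = q i + e i := by
        simp [hAe, hi, hB, h3, h4]
      simp only [Matrix.of_apply, if_true, h7, neg_sq, ← map_pow, h6, D, map_add, map_mul]
      linear_combination (C (q (i + 1)) : PowerSeries ℝ) * h1)
    (by
      intro i j hij
      have h1 : (i : ℕ) + 1 < N := by omega
      have h2 : i ≠ j := fun h => by subst h; omega
      have h3 : (i : ℕ) ≠ j := by omega
      have h4 : (i : ℕ) ≠ j + 1 := by omega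
      simp only [Matrix.of_apply, h2, if_false, zero_sub, hAe, hB, h1, dif_pos, h3, h4, hij,
        if_true, mul_zero, zero_add, s]
      simp
      intro h
      omega)
    (by
      intro i j hij
      have h2 : i ≠ j := fun h => by subst h; omega
      have h3 : (i : ℕ) ≠ j := by omega
      have h4 : (i : ℕ) + 1 ≠ j := by omega
      have h5 : (i : ℕ) + 1 ≠ j + 1 := by omega
      simp only [Matrix.of_apply, h2, if_false, zero_sub, hAe, hB, h3, h4, h5, ← hij,
        if_true, mul_zero, s]
      simp [mul_comm])
    (by
      intro i j h3 h4 h5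
      have h2 : i ≠ j := fun h => h3 (by rw [h])
      have h6 : (i : ℕ) + 1 ≠ j := by omega
      have h7 : (i : ℕ) + 1 ≠ j + 1 := by omega
      simp [Matrix.of_apply, h2, hAe, hB, h3, h5, h6])
  have hchar : (∏ i, (X - C (hA.eigenvalues i) : PowerSeries ℝ))
      = ∏ i ∈ Finset.range N, D i := by
    rw [← hdet]
    have h1 := congrArg (Polynomial.coeToPowerSeries.ringHom (R := ℝ)) hA.charpoly_eq
    rw [Matrix.charpoly, RingHom.map_det, map_prod] at h1
    simp only [map_sub, Polynomial.coeToPowerSeries.ringHom_apply, Polynomial.coe_X,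
      Polynomial.coe_C] at h1
    refine Eq.trans ?_ (h1.symm.trans ?_)
    · simp
    · congr 1
      ext1 i j
      by_cases h : i = j
      · subst h
        simp [Matrix.charmatrix_apply]
      · simp [Matrix.charmatrix_apply, h]
  have hlam : ∀ i, hA.eigenvalues i ≠ 0 := by
    have h1 := congrArg PowerSeries.constantCoeff hchar
    simp only [map_prod, hD0, map_sub, constantCoeff_X, constantCoeff_C, zero_sub] at h1
    have h2 : ∏ i ∈ Finset.range N, (- q i) ≠ 0 :=
      Finset.prod_ne_zero_iff.2 fun i hi => neg_ne_zero.2 (hq i (Finset.mem_range.1 hi)).ne'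
    rw [← h1, Finset.prod_ne_zero_iff] at h2
    intro i
    exact neg_ne_zero.1 (h2 i (Finset.mem_univ _))
  have hP0 : ∏ i ∈ Finset.range N, D i ≠ 0 := by
    refine Finset.prod_ne_zero_iff.2 fun i hi h => ?_
    have := hD0 i
    rw [h, map_zero] at this
    have := hq i (Finset.mem_range.1 hi)
    linarith
  have hl1 := logderiv_prod Finset.univ (fun i => (X - C (hA.eigenvalues i) : PowerSeries ℝ))
    (fun i => - gser (hA.eigenvalues i)) (fun i _ => gser_spec _ (hlam i))
  have hl2 := logderiv_prod (Finset.range N) D (fun i => - cser (fun p => Ht p i)) (by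
    intro i hi
    have hi := Finset.mem_range.1 hi
    have h1 := cser_rec (fun p => ht p i) (fun p => Ht p i) (hHt1 i hi)
      (fun p hp => hHtp p hp i hi)
    have h2 : derivative ℝ (D i) = C (q i) * derivative ℝ (aser fun p => ht p i) := by
      simp only [D]
      rw [Derivation.leibniz]
      simp
    rw [h2]
    simp only [D]
    linear_combination (C (q i) : PowerSeries ℝ) * h1)
  rw [hchar, hl2] at hl1
  have hfin := mul_right_cancel₀ hP0 hl1
  simp only [Finset.sum_neg_distrib, neg_inj] at hfin
  have hc := congrArg (PowerSeries.coeff p) hfin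
  have hp0 : p ≠ 0 := by omega
  simp only [map_sum, cser, gser, coeff_mk, hp0, if_false] at hc
  rw [trace_inv_pow A hA hlam p, ← hc, Finset.mul_sum]
  refine Finset.sum_congr rfl fun i _ => ?_
  ring
end

section
/- Let W = (BB^⊤)^{−1} with entries W_{i,j}. Define g̃_i^{(r)} by: g̃_1^{(r)} = 0 for all r ≥ 1; g̃_i^{(1)} = F̃_i·W_{i−1,i−1} for i = 2,…,N; and g̃_i^{(r)} = F̃_i·g̃_{i−1}^{(r)} + B̌_{i−1}·g̃_i^{(r−1)} + Σ_{k=1}^{r−1} g̃_{i−1}^{(k)}·g̃_i^{(r−k)} for i = 2,…,N and r ≥ 2. Then for every i = 1,…,N and every integer M ≥ 2, g̃_i^{(M)} = Σ_{j_1=1}^{i−1} ⋯ Σ_{j_{M−1}=1}^{i−1} W_{i,j_1}·W_{j_1,j_2}·⋯·W_{j_{M−2},j_{M−1}}·W_{j_{M−1},i}. -/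
open Matrix

/-- weighted walks from `a` to `b` with `n` interior points, all `< i` -/
noncomputable def walkT {N : ℕ} (W : Matrix (Fin N) (Fin N) ℝ) (i : ℕ) :
    ℕ → Fin N → Fin N → ℝ
  | 0, a, b => W a b
  | n + 1, a, b => ∑ x : Fin N, if (x : ℕ) < i then W a x * walkT W i n x b else 0

theorem walkT_first {N : ℕ} (W : Matrix (Fin N) (Fin N) ℝ) (p : Fin N) (n : ℕ) :
    ∀ a b, walkT W (p + 1) n a b = walkT W p n a b +
      ∑ k ∈ Finset.range n, walkT W p k a p * walkT W (p + 1) (n - 1 - k) p b := by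
  induction n with
  | zero => intro a b; simp [walkT]
  | succ n ih =>
    intro a b
    have h1 : walkT W (p + 1) (n + 1) a b =
        (∑ x : Fin N, if (x : ℕ) < p then W a x * walkT W (p + 1) n x b else 0)
          + W a p * walkT W (p + 1) n p b := by
      rw [walkT]
      have : W a p * walkT W (p + 1) n p b =
          ∑ x : Fin N, if x = p then W a x * walkT W (p + 1) n x b else 0 := by simp
      rw [this, ← Finset.sum_add_distrib]
      apply Finset.sum_congr rfl
      intro x _
      rcases lt_trichotomy (x : ℕ) p with h | h | h
      · have h' : x ≠ p := fun h' => by simp [h'] at h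
        simp [h, h', Nat.lt_succ_of_lt h]
      · have h' : x = p := Fin.ext h
        simp [h']
      · have h' : x ≠ p := fun h' => by simp [h'] at h
        have h2 : ¬ (x : ℕ) < p + 1 := by omega
        have h3 : ¬ (x : ℕ) < p := by omega
        rw [if_neg h2, if_neg h3, if_neg h', add_zero]
    rw [h1, Finset.sum_range_succ', walkT]
    have h2 : (∑ x : Fin N, if (x : ℕ) < p then W a x * walkT W (p + 1) n x b else 0)
        = (∑ x : Fin N, if (x : ℕ) < p then W a x * walkT W p n x b else 0) +
          ∑ k ∈ Finset.range n,
            walkT W p (k + 1) a p * walkT W (p + 1) (n + 1 - 1 - (k + 1)) p b := by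
      simp only [walkT, Finset.sum_mul]
      rw [Finset.sum_comm, ← Finset.sum_add_distrib]
      apply Finset.sum_congr rfl
      intro x _
      split_ifs with h
      · rw [ih, mul_add, Finset.mul_sum]
        congr 1
        apply Finset.sum_congr rfl
        intro k _
        rw [show n + 1 - 1 - (k + 1) = n - 1 - k by omega]
        ring
      · simp
    rw [h2]
    simp [walkT]
    ring

theorem walkT_chain {N : ℕ} (W : Matrix (Fin N) (Fin N) ℝ) (i : ℕ) (b : Fin N) (n : ℕ) :
    ∀ a, walkT W i n a b =
      ∑ j : Fin n → Fin N, if (∀ k, (j k : ℕ) < i) then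
        (∏ k ∈ Finset.range (n + 1),
          W (if k = 0 then a else if h : 1 ≤ k ∧ k ≤ n then j ⟨k - 1, by omega⟩ else b)
            (if h : 1 ≤ k + 1 ∧ k + 1 ≤ n then j ⟨k + 1 - 1, by omega⟩ else b)) else 0 := by
  induction n with
  | zero => intro a; simp [walkT]
  | succ n ih =>
    intro a
    rw [← (Fin.consEquiv (fun _ : Fin (n + 1) => Fin N)).sum_comp, Fintype.sum_prod_type, walkT]
    apply Finset.sum_congr rfl
    intro x _
    split_ifs with hx
    · rw [ih, Finset.mul_sum]
      apply Finset.sum_congr rfl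
      intro j _
      have : (∀ k, ((Fin.consEquiv (fun _ : Fin (n + 1) => Fin N)) (x, j) k : ℕ) < i) ↔
          ∀ k, (j k : ℕ) < i := by
        rw [Fin.forall_fin_succ]; simp [Fin.consEquiv, hx]
      rw [if_congr this rfl rfl]
      split_ifs with hj
      · rw [Finset.prod_range_succ' _ (n + 1), mul_comm]
        congr 1
        · apply Finset.prod_congr rfl
          intro k hk
          have hk' : k < n + 1 := Finset.mem_range.1 hk
          have e1 : ∀ (m : ℕ) (hm : m < n), (Fin.consEquiv (fun _ : Fin (n + 1) => Fin N)) (x, j)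
              ⟨m + 1, by omega⟩ = j ⟨m, hm⟩ := fun m hm => rfl
          congr 1
          · rcases k with _ | k
            · simp [Fin.consEquiv]
            · have : k + 1 ≤ n := by omega
              simp [this, e1 k (by omega)]
          · by_cases h : k + 1 ≤ n
            · simp [h, e1 k (by omega)]
            · simp [h]
      · simp
    · symm
      apply Finset.sum_eq_zero
      intro j _
      rw [if_neg]
      intro h
      exact hx (by simpa [Fin.consEquiv] using h 0)

theorem walkT_right {N : ℕ} (W : Matrix (Fin N) (Fin N) ℝ) (f : ℝ) (i p : Fin N)
    (h : ∀ x : Fin N, (x : ℕ) < i → W x i = -f * W x p) (n : ℕ) :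
    ∀ a : Fin N, (a : ℕ) < i → walkT W i n a i = -f * walkT W i n a p := by
  induction n with
  | zero => intro a ha; exact h a ha
  | succ n ih =>
    intro a ha
    simp only [walkT, Finset.mul_sum]
    apply Finset.sum_congr rfl
    intro x _
    split_ifs with hx
    · rw [ih x hx]; ring
    · simp

theorem walkT_both {N : ℕ} (W : Matrix (Fin N) (Fin N) ℝ) (f : ℝ) (i p : Fin N)
    (hs : ∀ x y, W x y = W y x)
    (h : ∀ x : Fin N, (x : ℕ) < i → W x i = -f * W x p) (n : ℕ) :
    walkT W i (n + 1) i i = f ^ 2 * walkT W i (n + 1) p p := by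
  simp only [walkT, Finset.mul_sum]
  apply Finset.sum_congr rfl
  intro x _
  split_ifs with hx
  · rw [walkT_right W f i p h n x hx, hs i x, h x hx, hs x p]; ring
  · simp

theorem W_facts (N : ℕ) (q e : ℕ → ℝ)
    (hq : ∀ i, i < N → 0 < q i) (he : ∀ i, i + 1 < N → 0 < e i)
    (B : Matrix (Fin N) (Fin N) ℝ)
    (hB : ∀ i j : Fin N, B i j =
      if (j : ℕ) = (i : ℕ) then Real.sqrt (q i)
      else if (j : ℕ) = (i : ℕ) + 1 then Real.sqrt (e i) else 0)
    (W : Matrix (Fin N) (Fin N) ℝ) (hW : W = (B * Bᵀ)⁻¹) :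
    (∀ x y, W x y = W y x) ∧
    (∀ i : Fin N, (i : ℕ) = 0 → W i i = 1 / q i) ∧
    (∀ i p : Fin N, (i : ℕ) = p + 1 →
      (∀ x : Fin N, (x : ℕ) < i → W x i = -(Real.sqrt (e p) / Real.sqrt (q i)) * W x p) ∧
      W i i = e p / q i * W p p + 1 / q i) := by
  have hsq : ∀ i : Fin N, 0 < Real.sqrt (q i) := fun i => Real.sqrt_pos.2 (hq i i.2)
  have hT : B.BlockTriangular id := by
    intro i j hij
    have : (j : ℕ) < i := hij
    rw [hB, if_neg (by omega), if_neg (by omega)]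
  have hdet : IsUnit B.det := by
    rw [Matrix.det_of_upperTriangular hT, isUnit_iff_ne_zero, Finset.prod_ne_zero_iff]
    intro i _
    rw [hB, if_pos rfl]
    exact (hsq i).ne'
  haveI : Invertible B := Matrix.invertibleOfIsUnitDet B hdet
  have hC : B⁻¹.BlockTriangular id := Matrix.blockTriangular_inv_of_blockTriangular hT
  have hsymm : Wᵀ = W := by
    rw [hW, Matrix.transpose_nonsing_inv]; simp
  have hs : ∀ x y, W x y = W y x := fun x y => by
    conv_lhs => rw [← hsymm]
    rfl
  have hBW : Bᵀ * W = B⁻¹ := by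
    rw [hW, Matrix.mul_inv_rev, ← Matrix.mul_assoc, Matrix.mul_nonsing_inv, Matrix.one_mul]
    rwa [Matrix.det_transpose]
  have hCii : ∀ i : Fin N, B⁻¹ i i = 1 / Real.sqrt (q i) := by
    intro i
    have h1 : (B⁻¹ * B) i i = 1 := by rw [Matrix.nonsing_inv_mul _ hdet]; simp
    rw [Matrix.mul_apply, Finset.sum_eq_single i] at h1
    · rw [hB, if_pos rfl] at h1
      rw [eq_div_iff (hsq i).ne', h1]
    · intro k _ hk
      rcases lt_or_gt_of_ne hk with h | h
      · rw [hC h, zero_mul]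
      · rw [hT h, mul_zero]
    · simp
  have hrow0 : ∀ i : Fin N, (i : ℕ) = 0 → ∀ x, Real.sqrt (q i) * W i x = B⁻¹ i x := by
    intro i hi x
    rw [← hBW, Matrix.mul_apply, Finset.sum_eq_single i]
    · rw [Matrix.transpose_apply, hB, if_pos rfl]
    · intro k _ hk
      have : (k : ℕ) ≠ i := fun h => hk (Fin.ext h)
      rw [Matrix.transpose_apply, hB, if_neg (by omega), if_neg (by omega), zero_mul]
    · simp
  have hrow : ∀ i p : Fin N, (i : ℕ) = p + 1 → ∀ x,
      Real.sqrt (e p) * W p x + Real.sqrt (q i) * W i x = B⁻¹ i x := by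
    intro i p hi x
    have hne : p ≠ i := fun h => by rw [h] at hi; omega
    rw [← hBW, Matrix.mul_apply, Fintype.sum_eq_add p i hne]
    · rw [Matrix.transpose_apply, Matrix.transpose_apply, hB p i, hB i i, if_pos rfl,
        if_neg (by omega), if_pos hi]
    · intro k ⟨hk1, hk2⟩
      have h1 : (k : ℕ) ≠ p := fun h => hk1 (Fin.ext h)
      have h2 : (k : ℕ) ≠ i := fun h => hk2 (Fin.ext h)
      rw [Matrix.transpose_apply, hB, if_neg (by omega), if_neg (by omega), zero_mul]
  refine ⟨hs, ?_, ?_⟩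
  · intro i hi
    have h := hrow0 i hi i
    rw [hCii] at h
    have h2 := Real.mul_self_sqrt (hq i i.2).le
    have h3 := hsq i
    rw [← h2]
    field_simp at h ⊢
    linarith
  · intro i p hi
    have key : ∀ x : Fin N, (x : ℕ) < i →
        W x i = -(Real.sqrt (e p) / Real.sqrt (q i)) * W x p := by
      intro x hx
      have h := hrow i p hi x
      rw [hC (show id x < id i from hx)] at h
      rw [hs x i, hs x p]
      have h3 := hsq i
      field_simp
      linarith
    refine ⟨key, ?_⟩
    have h := hrow i p hi i
    rw [hCii, key p (by omega)] at h
    have h2 := Real.mul_self_sqrt (hq i i.2).le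
    have h4 := Real.mul_self_sqrt (he p (by have := i.2; omega)).le
    have h3 := hsq i
    rw [← h2, ← h4]
    field_simp at h ⊢
    linarith

/-- matrix-theoretic interpretation of the quantities `g̃_i^{(M)}`:
`g̃_i^{(M)} = Σ_{j_1<i} ⋯ Σ_{j_{M-1}<i} W_{i,j_1} W_{j_1,j_2} ⋯ W_{j_{M-1},i}`,
where `W = (BBᵀ)⁻¹`. Indices are 0-based: the paper's 1-based `g̃_i^{(r)}` is
`gt r (i-1)`; `B̌_i = 1/q_i` is `1 / q (i-1)`; `F̃_i = e_{i-1}/q_i` is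
`e (i-2) / q (i-1)`; the paper's range `1 ≤ j_k ≤ i-1` becomes `(j k : ℕ) < i`.
The chain product is encoded via the sequence `c` with `c 0 = c M = i` and
`c t = j_t` for `1 ≤ t ≤ M-1`. -/
theorem stmt_6 (N : ℕ) (hN : 0 < N) (q e : ℕ → ℝ)
    (hq : ∀ i, i < N → 0 < q i) (he : ∀ i, i + 1 < N → 0 < e i)
    (B : Matrix (Fin N) (Fin N) ℝ)
    (hB : ∀ i j : Fin N, B i j =
      if (j : ℕ) = (i : ℕ) then Real.sqrt (q i)
      else if (j : ℕ) = (i : ℕ) + 1 then Real.sqrt (e i) else 0)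
    (W : Matrix (Fin N) (Fin N) ℝ) (hW : W = (B * Bᵀ)⁻¹)
    (gt : ℕ → ℕ → ℝ)
    (hgt0 : ∀ r, 1 ≤ r → gt r 0 = 0)
    (hgt1 : ∀ i (h1 : 0 < i) (h2 : i < N),
      gt 1 i = e (i - 1) / q i * W ⟨i - 1, by omega⟩ ⟨i - 1, by omega⟩)
    (hgtr : ∀ r, 2 ≤ r → ∀ i, 0 < i → i < N →
      gt r i = e (i - 1) / q i * gt r (i - 1) + 1 / q (i - 1) * gt (r - 1) i
        + ∑ k ∈ Finset.Icc 1 (r - 1), gt k (i - 1) * gt (r - k) i) :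
    ∀ i (hi : i < N), ∀ M, 2 ≤ M →
      gt M i =
        ∑ j ∈ Finset.univ.filter (fun j : Fin (M - 1) → Fin N => ∀ k, (j k : ℕ) < i),
          (fun c : ℕ → Fin N => ∏ k ∈ Finset.range M, W (c k) (c (k + 1)))
            (fun t => if h : 1 ≤ t ∧ t ≤ M - 1 then j ⟨t - 1, by omega⟩ else ⟨i, hi⟩) := by
  obtain ⟨hs, hW0, hWf⟩ := W_facts N q e hq he B hB W hW
  have hboth : ∀ i p : Fin N, (i : ℕ) = p + 1 → ∀ n,
      walkT W i (n + 1) i i = e p / q i * walkT W i (n + 1) p p := by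
    intro i p hi n
    rw [walkT_both W _ i p hs (hWf i p hi).1 n, div_pow, Real.sq_sqrt (hq i i.2).le,
      Real.sq_sqrt (he p (by have := i.2; omega)).le]
  -- main induction
  have main : ∀ p (hp : p + 1 < N), ∀ n, gt (n + 1) (p + 1) =
      e p / q (p + 1) * walkT W (p + 1) n ⟨p, by omega⟩ ⟨p, by omega⟩ := by
    intro p
    induction p with
    | zero =>
      intro hp n
      have K0 : walkT W 0 0 ⟨0, by omega⟩ ⟨0, by omega⟩ = 1 / q 0 := hW0 ⟨0, by omega⟩ rfl
      have K1 : ∀ n, walkT W 0 (n + 1) ⟨0, by omega⟩ ⟨0, by omega⟩ = 0 := by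
        intro n; simp [walkT]
      induction n with
      | zero => simpa [walkT] using hgt1 1 (by omega) hp
      | succ n ih =>
        have := hgtr (n + 2) (by omega) 1 (by omega) hp
        have hf := walkT_first W ⟨0, by omega⟩ (n + 1) ⟨0, by omega⟩ ⟨0, by omega⟩
        rw [Finset.sum_range_succ', K1, Finset.sum_eq_zero (fun k _ => by rw [K1, zero_mul]), K0]
          at hf
        rw [Finset.sum_eq_zero (fun k hk => by
          rw [hgt0 k (Finset.mem_Icc.1 hk).1, zero_mul])] at this
        simp only [Nat.sub_self] at this
        rw [hgt0 _ (by omega)] at this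
        simp only [Nat.add_sub_cancel, Nat.sub_zero, zero_add] at hf this ih ⊢
        rw [show n + 1 + 1 = n + 2 from rfl, this, hf, show n + 2 - 1 = n + 1 from rfl, ih]
        ring
    | succ p ihp =>
      intro hp n
      have K0 : walkT W (p + 1) 0 ⟨p + 1, by omega⟩ ⟨p + 1, by omega⟩
          = gt 1 (p + 1) + 1 / q (p + 1) := by
        rw [hgt1 (p + 1) (by omega) (by omega)]
        exact (hWf ⟨p + 1, by omega⟩ ⟨p, by omega⟩ rfl).2
      have K1 : ∀ n, walkT W (p + 1) (n + 1) ⟨p + 1, by omega⟩ ⟨p + 1, by omega⟩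
          = gt (n + 2) (p + 1) := by
        intro n
        rw [ihp (by omega) (n + 1)]
        exact hboth ⟨p + 1, by omega⟩ ⟨p, by omega⟩ rfl n
      induction n using Nat.strong_induction_on with
      | _ n ih =>
      rcases n with _ | n
      · simpa [walkT] using hgt1 (p + 2) (by omega) hp
      · have := hgtr (n + 2) (by omega) (p + 2) (by omega) hp
        have hf := walkT_first W ⟨p + 1, by omega⟩ (n + 1) ⟨p + 1, by omega⟩ ⟨p + 1, by omega⟩
        have hsum : ∑ k ∈ Finset.Icc 1 (n + 2 - 1), gt k (p + 2 - 1) * gt (n + 2 - k) (p + 2)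
            = ∑ k ∈ Finset.range (n + 1), gt (k + 1) (p + 1) * (e (p + 1) / q (p + 2) *
              walkT W (p + 2) (n - k) ⟨p + 1, by omega⟩ ⟨p + 1, by omega⟩) := by
          rw [show Finset.Icc 1 (n + 2 - 1) = Finset.Ico 1 (n + 2) by ext; simp; omega,
            Finset.sum_Ico_eq_sum_range]
          apply Finset.sum_congr rfl
          intro k hk
          have hk' := Finset.mem_range.1 hk
          rw [← ih (n - k) (by omega), show 1 + k = k + 1 by omega,
            show n + 2 - (k + 1) = n - k + 1 by omega]
          rfl
        rw [hsum] at this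
        rw [Finset.sum_range_succ', K1, K0] at hf
        rw [Finset.sum_range_succ'] at this
        simp only [K1] at hf
        have hn := ih n (by omega)
        rw [show n + 2 - 1 = n + 1 from rfl, show p + 2 - 1 = p + 1 from rfl,
          show p + 2 = p + 1 + 1 from rfl, hn] at this
        rw [show n + 1 + 1 = n + 2 from rfl, this]
        change _ = e (p + 1) / q (p + 1 + 1) * walkT W (p + 1 + 1) (n + 1) _ _
        rw [hf, mul_add, mul_add, Finset.mul_sum]
        have hc : ∀ k, gt (k + 1 + 1) (p + 1) * (e (p + 1) / q (p + 2) *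
              walkT W (p + 2) (n - (k + 1)) ⟨p + 1, by omega⟩ ⟨p + 1, by omega⟩) =
            e (p + 1) / q (p + 1 + 1) * (gt (k + 2) (p + 1) *
              walkT W (p + 1 + 1) (n + 1 - 1 - (k + 1)) ⟨p + 1, by omega⟩ ⟨p + 1, by omega⟩) := by
          intro k
          rw [show n + 1 - 1 = n from rfl]; ring
        rw [Finset.sum_congr rfl (fun k _ => hc k)]
        simp only [Nat.add_sub_cancel, Nat.sub_zero, zero_add]
        ring
  intro i hi M hM
  obtain ⟨n, rfl⟩ : ∃ n, M = n + 2 := ⟨M - 2, by omega⟩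
  have hgw : gt (n + 2) i = walkT W i (n + 1) ⟨i, hi⟩ ⟨i, hi⟩ := by
    rcases i with _ | p
    · rw [hgt0 _ (by omega)]; simp [walkT]
    · rw [main p hi (n + 1)]
      exact (hboth ⟨p + 1, hi⟩ ⟨p, by omega⟩ rfl n).symm
  rw [hgw, walkT_chain, Finset.sum_filter]
  change _ = ∑ j : Fin (n + 1) → Fin N, _
  apply Finset.sum_congr rfl
  intro j _
  refine if_congr Iff.rfl ?_ rfl
  apply Finset.prod_congr rfl
  intro k hk
  congr 1
  rcases k with _ | k
  · simp
  · rw [if_neg (by omega)]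
    rfl
end

section
/- Define h_i^{(p)} by: h_1^{(1)} = 1/q_1; h_i^{(1)} = F̃_i·h_{i−1}^{(1)} + 1/q_i for i = 2,…,N; h_1^{(p)} = 0 for p ≥ 2; and h_i^{(p)} = F̃_i·(h_{i−1}^{(p)} + p·h_{i−1}^{(1)}·h_{i−1}^{(p−1)}) + Σ_{k=1}^{p−2} C(p,k)·h_{i−1}^{(k)}·h_i^{(p−k)} for i = 2,…,N and p ≥ 2. Define g̃_i^{(r)} by: g̃_1^{(r)} = 0 for all r ≥ 1; g̃_i^{(1)} = F̃_i·W_{i−1,i−1} for i = 2,…,N, where W = (BB^⊤)^{−1}; and g̃_i^{(r)} = F̃_i·g̃_{i−1}^{(r)} + B̌_{i−1}·g̃_i^{(r−1)} + Σ_{k=1}^{r−1} g̃_{i−1}^{(k)}·g̃_i^{(r−k)} for i = 2,…,N and r ≥ 2. Then for every i = 1,…,N and every integer M ≥ 2, h_i^{(M)} = M!·g̃_i^{(M)}. -/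
open Matrix

theorem col_aux (N : ℕ) (q e : ℕ → ℝ) (hq : ∀ i, i < N → 0 < q i)
    (B : Matrix (Fin N) (Fin N) ℝ)
    (hB : ∀ i j : Fin N, B i j =
      if (j : ℕ) = (i : ℕ) then Real.sqrt (q i)
      else if (j : ℕ) = (i : ℕ) + 1 then Real.sqrt (e i) else 0) :
    B⁻¹ * B = 1 := by
  apply Matrix.nonsing_inv_mul
  have hT : B.BlockTriangular id := by
    intro i j hij
    have hij' : (j : ℕ) < i := hij
    rw [hB, if_neg (by omega), if_neg (by omega)]
  rw [Matrix.det_of_upperTriangular hT, isUnit_iff_ne_zero, Finset.prod_ne_zero_iff]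
  intro i _
  rw [hB, if_pos rfl]
  exact (Real.sqrt_pos.2 (hq i i.2)).ne'

theorem col_zero (N : ℕ) (q e : ℕ → ℝ)
    (B C : Matrix (Fin N) (Fin N) ℝ)
    (hB : ∀ i j : Fin N, B i j =
      if (j : ℕ) = (i : ℕ) then Real.sqrt (q i)
      else if (j : ℕ) = (i : ℕ) + 1 then Real.sqrt (e i) else 0)
    (hC : C * B = 1) (k : Fin N) (h0 : 0 < N) :
    C k ⟨0, h0⟩ * √(q 0) = if (k : ℕ) = 0 then 1 else 0 := by
  have h1 := congrFun (congrFun hC k) ⟨0, h0⟩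
  rw [Matrix.mul_apply, Finset.sum_eq_single ⟨0, h0⟩, hB, if_pos rfl, Matrix.one_apply] at h1
  · rw [h1]; simp [Fin.ext_iff]
  · intro j _ hj
    have : (j : ℕ) ≠ 0 := fun hh => hj (Fin.ext hh)
    rw [hB, if_neg (by simpa using this.symm), if_neg (by simp), mul_zero]
  · simp

theorem col_succ (N : ℕ) (q e : ℕ → ℝ)
    (B C : Matrix (Fin N) (Fin N) ℝ)
    (hB : ∀ i j : Fin N, B i j =
      if (j : ℕ) = (i : ℕ) then Real.sqrt (q i)
      else if (j : ℕ) = (i : ℕ) + 1 then Real.sqrt (e i) else 0)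
    (hC : C * B = 1) (k : Fin N) (i : ℕ) (hi : i + 1 < N) :
    C k ⟨i + 1, hi⟩ * √(q (i + 1)) + C k ⟨i, by omega⟩ * √(e i)
      = if (k : ℕ) = i + 1 then 1 else 0 := by
  have h1 := congrFun (congrFun hC k) ⟨i + 1, hi⟩
  rw [Matrix.mul_apply, Matrix.one_apply] at h1
  have h2 : ∀ j : Fin N, C k j * B j ⟨i + 1, hi⟩ =
      (if j = ⟨i + 1, hi⟩ then C k j * √(q j) else 0) +
      (if j = ⟨i, by omega⟩ then C k j * √(e j) else 0) := by
    intro j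
    rw [hB]
    simp only [Fin.ext_iff]
    by_cases a : (j : ℕ) = i + 1
    · rw [if_pos a.symm, if_pos a, if_neg (by omega), add_zero]
    · by_cases b : (j : ℕ) = i
      · rw [if_neg (by omega), if_pos (by omega), if_neg a, if_pos b, zero_add]
      · rw [if_neg (by omega), if_neg (by omega), if_neg a, if_neg b]; simp
  rw [Finset.sum_congr rfl (fun j _ => h2 j), Finset.sum_add_distrib] at h1
  simp only [Finset.sum_ite_eq', Finset.mem_univ, if_true] at h1
  rw [h1]; simp [Fin.ext_iff]

theorem low_zero (N : ℕ) (q e : ℕ → ℝ) (hq : ∀ i, i < N → 0 < q i)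
    (B C : Matrix (Fin N) (Fin N) ℝ)
    (hB : ∀ i j : Fin N, B i j =
      if (j : ℕ) = (i : ℕ) then Real.sqrt (q i)
      else if (j : ℕ) = (i : ℕ) + 1 then Real.sqrt (e i) else 0)
    (hC : C * B = 1) (k : Fin N) (i : ℕ) (hi : i < k) :
    C k ⟨i, by omega⟩ = 0 := by
  induction i with
  | zero =>
    have h1 := col_zero N q e B C hB hC k (by omega)
    rw [if_neg (by omega)] at h1
    exact (mul_eq_zero.1 h1).resolve_right (Real.sqrt_pos.2 (hq 0 (by omega))).ne'
  | succ i ih =>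
    have h1 := col_succ N q e B C hB hC k i (by omega)
    rw [if_neg (by omega), ih (by omega), zero_mul, add_zero] at h1
    exact (mul_eq_zero.1 h1).resolve_right (Real.sqrt_pos.2 (hq (i + 1) (by omega))).ne'

theorem W_diag (N : ℕ) (q e : ℕ → ℝ)
    (hq : ∀ i, i < N → 0 < q i) (he : ∀ i, i + 1 < N → 0 < e i)
    (B : Matrix (Fin N) (Fin N) ℝ)
    (hB : ∀ i j : Fin N, B i j =
      if (j : ℕ) = (i : ℕ) then Real.sqrt (q i)
      else if (j : ℕ) = (i : ℕ) + 1 then Real.sqrt (e i) else 0)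
    (W : Matrix (Fin N) (Fin N) ℝ) (hW : W = (B * Bᵀ)⁻¹)
    (h : ℕ → ℕ → ℝ)
    (hh1a : h 1 0 = 1 / q 0)
    (hh1b : ∀ i, 0 < i → i < N → h 1 i = e (i - 1) / q i * h 1 (i - 1) + 1 / q i)
    (i : ℕ) (hi : i < N) : W ⟨i, hi⟩ ⟨i, hi⟩ = h 1 i := by
  have hC := col_aux N q e hq B hB
  have hWC : ∀ j, W j j = ∑ k, B⁻¹ k j ^ 2 := by
    intro j
    rw [hW, Matrix.mul_inv_rev, ← Matrix.transpose_nonsing_inv, Matrix.mul_apply]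
    exact Finset.sum_congr rfl fun k _ => by rw [Matrix.transpose_apply, sq]
  generalize B⁻¹ = C at hC hWC
  induction i with
  | zero =>
    have hq0 := hq 0 hi
    rw [hh1a, eq_div_iff hq0.ne', hWC, Finset.sum_mul,
      Finset.sum_congr rfl (g := fun k : Fin N => if k = ⟨0, hi⟩ then (1 : ℝ) else 0)]
    · simp
    · intro k _
      have h1 := col_zero N q e B C hB hC k hi
      rw [← Real.sq_sqrt hq0.le, ← mul_pow, h1]
      simp [Fin.ext_iff]
  | succ i ih =>
    have hq0 := hq _ hi
    have he0 := he i hi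
    have ih := ih (by omega)
    rw [hh1b (i + 1) (by omega) hi, Nat.add_sub_cancel, ← ih]
    have key : W ⟨i + 1, hi⟩ ⟨i + 1, hi⟩ * q (i + 1) = W ⟨i, by omega⟩ ⟨i, by omega⟩ * e i + 1 := by
      have h3 : (1 : ℝ) = ∑ k : Fin N, if k = ⟨i + 1, hi⟩ then (1 : ℝ) else 0 := by simp
      rw [hWC, hWC, Finset.sum_mul, Finset.sum_mul, h3, ← Finset.sum_add_distrib]
      refine Finset.sum_congr rfl fun k _ => ?_
      have h1 := col_succ N q e B C hB hC k i hi
      have sq1 := Real.sq_sqrt hq0.le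
      have sq2 := Real.sq_sqrt he0.le
      by_cases hk : (k : ℕ) = i + 1
      · have h4 := low_zero N q e hq B C hB hC k i (by omega)
        rw [if_pos hk, h4, zero_mul, add_zero] at h1
        rw [if_pos (Fin.ext hk), h4, ← sq1, ← mul_pow, h1]; norm_num
      · rw [if_neg hk] at h1
        rw [if_neg (fun hh => hk (congrArg Fin.val hh)), ← sq1, ← sq2, ← mul_pow, ← mul_pow,
          eq_neg_of_add_eq_zero_left h1]
        ring
    field_simp
    linarith

/-- the relationship `h_i^{(M)} = M! · g̃_i^{(M)}` for `M ≥ 2`.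
Indices are 0-based: the paper's 1-based `h_i^{(p)}` is `h p (i-1)`,
`g̃_i^{(r)}` is `gt r (i-1)`; `B̌_i = 1/q_i` is `1 / q (i-1)`;
`F̃_i = e_{i-1}/q_i` is `e (i-2) / q (i-1)`; `W = (BBᵀ)⁻¹`. -/
theorem stmt_7 (N : ℕ) (hN : 0 < N) (q e : ℕ → ℝ)
    (hq : ∀ i, i < N → 0 < q i) (he : ∀ i, i + 1 < N → 0 < e i)
    (B : Matrix (Fin N) (Fin N) ℝ)
    (hB : ∀ i j : Fin N, B i j =
      if (j : ℕ) = (i : ℕ) then Real.sqrt (q i)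
      else if (j : ℕ) = (i : ℕ) + 1 then Real.sqrt (e i) else 0)
    (W : Matrix (Fin N) (Fin N) ℝ) (hW : W = (B * Bᵀ)⁻¹)
    (h : ℕ → ℕ → ℝ)
    (hh1a : h 1 0 = 1 / q 0)
    (hh1b : ∀ i, 0 < i → i < N → h 1 i = e (i - 1) / q i * h 1 (i - 1) + 1 / q i)
    (hhp0 : ∀ p, 2 ≤ p → h p 0 = 0)
    (hhp : ∀ p, 2 ≤ p → ∀ i, 0 < i → i < N →
      h p i = e (i - 1) / q i * (h p (i - 1) + p * h 1 (i - 1) * h (p - 1) (i - 1))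
        + ∑ k ∈ Finset.Icc 1 (p - 2), (p.choose k : ℝ) * h k (i - 1) * h (p - k) i)
    (gt : ℕ → ℕ → ℝ)
    (hgt0 : ∀ r, 1 ≤ r → gt r 0 = 0)
    (hgt1 : ∀ i (h1 : 0 < i) (h2 : i < N),
      gt 1 i = e (i - 1) / q i * W ⟨i - 1, by omega⟩ ⟨i - 1, by omega⟩)
    (hgtr : ∀ r, 2 ≤ r → ∀ i, 0 < i → i < N →
      gt r i = e (i - 1) / q i * gt r (i - 1) + 1 / q (i - 1) * gt (r - 1) i
        + ∑ k ∈ Finset.Icc 1 (r - 1), gt k (i - 1) * gt (r - k) i) :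
    ∀ i, i < N → ∀ M, 2 ≤ M → h M i = (Nat.factorial M : ℝ) * gt M i := by
  have hWd := W_diag N q e hq he B hB W hW h hh1a hh1b
  have hg1 : ∀ i, i < N → h 1 i = gt 1 i + 1 / q i := by
    intro i hi
    rcases Nat.eq_zero_or_pos i with rfl | h0
    · rw [hh1a, hgt0 1 le_rfl, zero_add]
    · rw [hh1b i h0 hi, hgt1 i h0 hi, hWd]
  intro i
  induction i with
  | zero =>
    intro _ M hM
    rw [hhp0 M hM, hgt0 M (by omega), mul_zero]
  | succ i ih =>
    intro hi M
    have ih := ih (by omega)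
    induction M using Nat.strong_induction_on with
    | _ M ihM =>
    intro hM
    obtain ⟨m, rfl⟩ : ∃ m, M = m + 2 := ⟨M - 2, by omega⟩
    have G1 : gt 1 (i + 1) = e i / q (i + 1) * h 1 i := by
      rw [hgt1 (i + 1) (by omega) hi, ← hWd i (by omega)]; rfl
    -- normalised quantities
    have A : ∀ k, 1 ≤ k → h k i = (Nat.factorial k : ℝ) * (gt k i + if k = 1 then 1 / q i else 0) := by
      intro k hk
      by_cases h1 : k = 1
      · subst h1; simp [hg1 i (by omega)]
      · rw [if_neg h1, add_zero]; exact ih k (by omega)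
    have G : gt (m + 2) (i + 1) = e i / q (i + 1) * gt (m + 2) i +
        ∑ k ∈ Finset.Icc 1 (m + 1), (gt k i + if k = 1 then 1 / q i else 0) * gt (m + 2 - k) (i + 1) := by
      rw [hgtr (m + 2) hM (i + 1) (by omega) hi]
      simp only [add_mul, Finset.sum_add_distrib, ite_mul, zero_mul]
      rw [Finset.sum_ite_eq' (Finset.Icc 1 (m + 1)) 1, if_pos (by simp)]
      simp only [Nat.add_sub_cancel, show m + 2 - 1 = m + 1 from rfl]
      ring
    rw [G, Finset.sum_Icc_succ_top (by omega), hhp (m + 2) hM (i + 1) (by omega) hi]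
    simp only [Nat.add_sub_cancel, show m + 2 - 1 = m + 1 from rfl,
      show m + 2 - (m + 1) = 1 by omega]
    have S : ∑ k ∈ Finset.Icc 1 m, ((m + 2).choose k : ℝ) * h k i * h (m + 2 - k) (i + 1) =
        ((m + 2).factorial : ℝ) * ∑ k ∈ Finset.Icc 1 m,
          (gt k i + if k = 1 then 1 / q i else 0) * gt (m + 2 - k) (i + 1) := by
      rw [Finset.mul_sum]
      refine Finset.sum_congr rfl fun k hk => ?_
      rw [Finset.mem_Icc] at hk
      rw [A k hk.1, ihM (m + 2 - k) (by omega) (by omega),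
        ← Nat.choose_mul_factorial_mul_factorial (show k ≤ m + 2 by omega)]
      push_cast
      ring
    rw [S, G1, ih (m + 2) hM, A (m + 1) (by omega), Nat.factorial_succ (m + 1)]
    push_cast
    ring
end

section
/- Define g̃_i^{(1)} and G̃_i^{(1)} by: g̃_1^{(1)} = 0, G̃_1^{(1)} = B̌_1, g̃_i^{(1)} = F̃_i·G̃_{i−1}^{(1)} and G̃_i^{(1)} = g̃_i^{(1)} + B̌_i for i = 2,…,N. For M ≥ 2 define g̃_i^{(M)} by g̃_1^{(M)} = 0 and g̃_i^{(M)} = F̃_i·g̃_{i−1}^{(M)} + G̃_{i−1}^{(1)}·g̃_i^{(M−1)} + Σ_{k=2}^{M−1} g̃_{i−1}^{(k)}·g̃_i^{(M−k)} for i = 2,…,N, and define G̃_i^{(M)} = M·g̃_i^{(M)} + G̃_i^{(1)}·G̃_i^{(M−1)} + Σ_{k=2}^{M−1} g̃_i^{(k)}·G̃_i^{(M−k)} for i = 1,…,N. Then for every positive integer M, J_M(B) = Σ_{i=1}^{N} G̃_i^{(M)}. -/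
open Matrix

namespace Aux8

open PowerSeries Finset

lemma conv_coeff (a b : ℕ → ℝ) (ha : a 0 = 0) (hb : b 0 = 0) (M : ℕ) (hM : 2 ≤ M) :
    PowerSeries.coeff M (PowerSeries.mk a * PowerSeries.mk b) =
      a 1 * b (M - 1) + ∑ k ∈ Finset.Icc 2 (M - 1), a k * b (M - k) := by
  rw [PowerSeries.coeff_mul, Finset.Nat.sum_antidiagonal_eq_sum_range_succ_mk]
  simp only [PowerSeries.coeff_mk]
  obtain ⟨m, rfl⟩ : ∃ m, M = m + 2 := ⟨M - 2, by omega⟩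
  rw [Finset.sum_range_succ, Finset.range_eq_Ico, Finset.sum_eq_sum_Ico_succ_bot (by omega),
    Finset.sum_eq_sum_Ico_succ_bot (by omega)]
  simp only [ha, hb, Nat.sub_self, zero_mul, mul_zero, zero_add, add_zero]
  congr 1

lemma conv_coeff_one (a b : ℕ → ℝ) (ha : a 0 = 0) (hb : b 0 = 0) :
    PowerSeries.coeff 1 (PowerSeries.mk a * PowerSeries.mk b) = 0 := by
  rw [PowerSeries.coeff_mul, Finset.Nat.sum_antidiagonal_eq_sum_range_succ_mk]
  simp [Finset.sum_range_succ, ha, hb]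

lemma conv_coeff_zero (a b : ℕ → ℝ) (ha : a 0 = 0) :
    PowerSeries.coeff 0 (PowerSeries.mk a * PowerSeries.mk b) = 0 := by
  rw [PowerSeries.coeff_mul]
  simp [ha]

/-- product of lower and upper bidiagonal matrices -/
lemma bidiag_mul {R : Type*} [CommRing R] {N : ℕ} (a b c d : ℕ → R) (i j : Fin N) :
    (∑ k : Fin N, (if (i : ℕ) = k then a k else if (i : ℕ) = (k : ℕ) + 1 then b k else 0) *
      (if (j : ℕ) = k then c k else if (j : ℕ) = (k : ℕ) + 1 then d k else 0)) =
    if (i : ℕ) = j then a i * c i + (if (i : ℕ) = 0 then 0 else b (i - 1) * d (i - 1))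
    else if (j : ℕ) = i + 1 then a i * d i
    else if (i : ℕ) = j + 1 then b j * c j else 0 := by
  obtain ⟨i, hi⟩ := i
  obtain ⟨j, hj⟩ := j
  simp only
  rw [Fin.sum_univ_eq_sum_range (fun k => (if i = k then a k else if i = k + 1 then b k else 0) *
      (if j = k then c k else if j = k + 1 then d k else 0)) N]
  have h1 : ∀ k ∈ range N, (if i = k then a k else if i = k + 1 then b k else 0) *
      (if j = k then c k else if j = k + 1 then d k else 0) =
      (if i = k then a k * (if j = k then c k else if j = k + 1 then d k else 0) else 0) +
      (if i - 1 = k then (if i = 0 then 0 else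
        b k * (if j = k then c k else if j = k + 1 then d k else 0)) else 0) := by
    intro k _
    by_cases h : i = k
    · subst h
      by_cases h0 : i = 0
      · simp [h0]
      · simp [show i - 1 ≠ i by omega]
    · by_cases h0 : i = 0
      · simp [h0, show ¬ (0 = k) by omega]
      · by_cases h2 : i = k + 1
        · subst h2; simp
        · simp [h, h2, show ¬ (i - 1 = k) by omega]
  rw [Finset.sum_congr rfl h1, Finset.sum_add_distrib, Finset.sum_ite_eq, Finset.sum_ite_eq,
    if_pos (show i ∈ range N from mem_range.2 hi),
    if_pos (show i - 1 ∈ range N from mem_range.2 (by omega))]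
  clear h1
  cases i with
  | zero => 
    by_cases h : j = 0
    · subst h; simp
    · simp [h, Ne.symm h]
  | succ i =>
    simp only [Nat.add_sub_cancel, Nat.add_eq_zero_iff, one_ne_zero, and_false, if_false]
    by_cases hij : i + 1 = j
    · subst hij; simp
    · by_cases h2 : j = i + 1 + 1
      · subst h2
        simp [show i + 1 + 1 ≠ i by omega]
      · by_cases h3 : i = j
        · subst h3; simp [show i ≠ i + 1 + 1 by omega]
        · simp [hij, h2, h3, Ne.symm hij, Ne.symm h3]

lemma map_deriv_mul {N : ℕ} (D : Derivation ℝ (ℝ⟦X⟧) (ℝ⟦X⟧))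
    (L W : Matrix (Fin N) (Fin N) (ℝ⟦X⟧)) :
    (L * W).map D = L.map D * W + L * W.map D := by
  ext1 i j
  simp only [Matrix.map_apply, Matrix.mul_apply, Matrix.add_apply, map_sum, Derivation.leibniz,
    smul_eq_mul, ← Finset.sum_add_distrib]
  exact Finset.sum_congr rfl fun k _ => by ring

/-- logarithmic derivative of an upper triangular matrix -/
lemma trace_upper {N : ℕ} (D : Derivation ℝ (ℝ⟦X⟧) (ℝ⟦X⟧))
    (W V : Matrix (Fin N) (Fin N) (ℝ⟦X⟧)) (u : Fin N → ℝ⟦X⟧)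
    (hW : W.BlockTriangular id) (hV : V * W = 1) (hu : ∀ i, u i * W i i = 1) :
    (V * W.map D).trace = ∑ i, u i * D (W i i) := by
  have : Invertible W := invertibleOfLeftInverse W V hV
  have hVt : V.BlockTriangular id := by
    have := blockTriangular_inv_of_blockTriangular hW
    rwa [inv_eq_left_inv hV] at this
  have key : ∀ (Y : Matrix (Fin N) (Fin N) (ℝ⟦X⟧)), Y.BlockTriangular id → ∀ i,
      (V * Y) i i = V i i * Y i i := by
    intro Y hY i
    rw [Matrix.mul_apply]
    apply Finset.sum_eq_single i
    · intro k _ hk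
      rcases lt_or_gt_of_ne hk with h | h
      · rw [hVt (show id k < id i from h), zero_mul]
      · rw [hY (show id i < id k from h), mul_zero]
    · simp
  have hWD : (W.map D).BlockTriangular id := by
    intro i j h
    rw [Matrix.map_apply, hW h, map_zero]
  rw [Matrix.trace]
  refine Finset.sum_congr rfl fun i _ => ?_
  rw [Matrix.diag_apply, key _ hWD]
  have h1 := key W hW i
  rw [hV, one_apply_eq] at h1
  have : V i i = u i := by
    calc V i i = V i i * (u i * W i i) := by rw [hu, mul_one]
      _ = u i * (V i i * W i i) := by ring
      _ = u i := by rw [← h1, mul_one]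
  rw [this]; rfl

/-- logarithmic derivative of a product of lower and upper triangular -/
lemma trace_LW {N : ℕ} (D : Derivation ℝ (ℝ⟦X⟧) (ℝ⟦X⟧))
    (L W V : Matrix (Fin N) (Fin N) (ℝ⟦X⟧)) (u : Fin N → ℝ⟦X⟧)
    (hL : Lᵀ.BlockTriangular id) (hL1 : ∀ i, L i i = 1)
    (hW : W.BlockTriangular id) (hV : V * (L * W) = 1) (hu : ∀ i, u i * W i i = 1) :
    (V * (L * W).map D).trace = ∑ i, u i * D (W i i) := by
  have hVW : (V * L) * W = 1 := by rw [Matrix.mul_assoc]; exact hV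
  have hWV : (W * V) * L = 1 := by
    have : W * (V * L) = 1 := mul_eq_one_comm.mp hVW
    rw [Matrix.mul_assoc]; exact this
  have hLt : (W * V)ᵀ * Lᵀ = 1 := by
    rw [← Matrix.transpose_mul, mul_eq_one_comm.mp hWV, Matrix.transpose_one]
  have h1 := trace_upper D W (V * L) u hW hVW hu
  have h2 := trace_upper D Lᵀ (W * V)ᵀ (fun _ => 1) hL hLt (by intro i; simp [hL1])
  have h3 : (V * (L.map D * W)).trace = 0 := by
    have e1 : (V * (L.map D * W)).trace = ((W * V) * L.map D).trace := by
      rw [← Matrix.mul_assoc, Matrix.trace_mul_comm, ← Matrix.mul_assoc]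
    rw [e1, ← Matrix.trace_transpose, Matrix.transpose_mul, Matrix.trace_mul_comm,
      ← Matrix.transpose_map, h2]
    simp [hL1]
  rw [map_deriv_mul, Matrix.mul_add, Matrix.trace_add, ← Matrix.mul_assoc, ← Matrix.mul_assoc,
    h1, Matrix.mul_assoc, h3, zero_add]

/-- resolvent -/
lemma resolvent {N : ℕ} (T A : Matrix (Fin N) (Fin N) ℝ) (hA : A * T = 1) :
    (Matrix.of fun i j => PowerSeries.mk fun n => (A ^ (n + 1)) i j) *
      (Matrix.of fun i j => PowerSeries.C (T i j) - (if i = j then (X : ℝ⟦X⟧) else 0)) = 1 := by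
  ext1 i j
  ext n
  simp only [Matrix.mul_apply, Matrix.of_apply, mul_sub, Finset.sum_sub_distrib, map_sub, map_sum,
    mul_ite, mul_zero, Finset.sum_ite_eq', Finset.mem_univ, if_true, PowerSeries.coeff_mul_C,
    PowerSeries.coeff_mk]
  have h : ∑ k, (A ^ (n + 1)) i k * T k j = (A ^ n) i j := by
    rw [← Matrix.mul_apply, pow_succ, Matrix.mul_assoc, hA, Matrix.mul_one]
  rw [h]
  cases n with
  | zero => simp [Matrix.one_apply]
  | succ n =>
    rw [PowerSeries.coeff_succ_mul_X, PowerSeries.coeff_mk, sub_self, Matrix.one_apply]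
    split_ifs <;> simp [PowerSeries.coeff_one]

end Aux8

/-- the new subtraction-free formula `J_M(B) = Σ_i G̃_i^{(M)}`, where
`J_M(B) = Tr((BᵀB)^{-M})`. Indices are 0-based: the paper's 1-based `g̃_i^{(M)}`
is `gt M (i-1)`, `G̃_i^{(M)}` is `Gt M (i-1)`; `B̌_i = 1/q_i` is `1 / q (i-1)`;
`F̃_i = e_{i-1}/q_i` is `e (i-2) / q (i-1)`. -/
theorem stmt_8 (N : ℕ) (hN : 0 < N) (q e : ℕ → ℝ)
    (hq : ∀ i, i < N → 0 < q i) (he : ∀ i, i + 1 < N → 0 < e i)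
    (B : Matrix (Fin N) (Fin N) ℝ)
    (hB : ∀ i j : Fin N, B i j =
      if (j : ℕ) = (i : ℕ) then Real.sqrt (q i)
      else if (j : ℕ) = (i : ℕ) + 1 then Real.sqrt (e i) else 0)
    (gt Gt : ℕ → ℕ → ℝ)
    (hgt11 : gt 1 0 = 0)
    (hGt11 : Gt 1 0 = 1 / q 0)
    (hgt1i : ∀ i, 0 < i → i < N → gt 1 i = e (i - 1) / q i * Gt 1 (i - 1))
    (hGt1i : ∀ i, 0 < i → i < N → Gt 1 i = gt 1 i + 1 / q i)
    (hgtM1 : ∀ M, 2 ≤ M → gt M 0 = 0)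
    (hgtMi : ∀ M, 2 ≤ M → ∀ i, 0 < i → i < N →
      gt M i = e (i - 1) / q i * gt M (i - 1) + Gt 1 (i - 1) * gt (M - 1) i
        + ∑ k ∈ Finset.Icc 2 (M - 1), gt k (i - 1) * gt (M - k) i)
    (hGtM : ∀ M, 2 ≤ M → ∀ i, i < N →
      Gt M i = M * gt M i + Gt 1 i * Gt (M - 1) i
        + ∑ k ∈ Finset.Icc 2 (M - 1), gt k i * Gt (M - k) i) :
    ∀ M, 1 ≤ M →
      Matrix.trace ((Bᵀ * B)⁻¹ ^ M) = ∑ i ∈ Finset.range N, Gt M i := by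
  classical
  -- generating functions
  let D : Derivation ℝ (PowerSeries ℝ) (PowerSeries ℝ) := PowerSeries.derivative ℝ
  let hc : ℕ → ℕ → ℝ := fun i n => if n = 0 then 0 else if n = 1 then Gt 1 i else gt n i
  let gc : ℕ → ℕ → ℝ := fun i n => if n = 0 then 0 else gt n i
  let Gc : ℕ → ℕ → ℝ := fun i n => if n = 0 then 0 else Gt n i
  let h : ℕ → PowerSeries ℝ := fun i => PowerSeries.mk (hc i)
  let g : ℕ → PowerSeries ℝ := fun i => PowerSeries.mk (gc i)
  let G : ℕ → PowerSeries ℝ := fun i => PowerSeries.mk (Gc i)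
  have hc0 : ∀ i, hc i 0 = 0 := fun i => rfl
  have gc0 : ∀ i, gc i 0 = 0 := fun i => rfl
  have Gc0 : ∀ i, Gc i 0 = 0 := fun i => rfl
  have hc1 : ∀ i, hc i 1 = Gt 1 i := fun i => rfl
  have hcM : ∀ i n, 2 ≤ n → hc i n = gt n i := fun i n hn => by
    simp only [hc]; rw [if_neg (by omega), if_neg (by omega)]
  have gcM : ∀ i n, 1 ≤ n → gc i n = gt n i := fun i n hn => by
    simp only [gc]; rw [if_neg (by omega)]
  have GcM : ∀ i n, 1 ≤ n → Gc i n = Gt n i := fun i n hn => by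
    simp only [Gc]; rw [if_neg (by omega)]
  have hX : ∀ (f : PowerSeries ℝ) (n : ℕ), 
      PowerSeries.coeff n (PowerSeries.X * D f) = n * PowerSeries.coeff n f := by
    intro f n
    cases n with
    | zero => simp
    | succ n =>
      rw [PowerSeries.coeff_succ_X_mul]
      simp only [D, PowerSeries.coeff_derivative]
      push_cast; ring
  -- (1) g = F h + h g
  have hg : ∀ i, i + 1 < N → g (i + 1) = PowerSeries.C (e i / q (i + 1)) * h i + h i * g (i + 1) := by
    intro i hi
    ext n
    rw [map_add, PowerSeries.coeff_C_mul]
    rcases (by omega : n = 0 ∨ n = 1 ∨ 2 ≤ n) with rfl | rfl | hn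
    · rw [Aux8.conv_coeff_zero _ _ (hc0 i)]
      simp [h, g, PowerSeries.coeff_mk, hc0, gc0, - PowerSeries.coeff_zero_eq_constantCoeff]
    · rw [Aux8.conv_coeff_one _ _ (hc0 i) (gc0 _)]
      simp only [h, g, PowerSeries.coeff_mk, hc1, gcM _ 1 le_rfl]
      rw [hgt1i (i + 1) (by omega) hi]; simp
    · rw [Aux8.conv_coeff _ _ (hc0 i) (gc0 _) n hn]
      simp only [h, g, PowerSeries.coeff_mk]
      rw [gcM _ _ (by omega), hcM _ _ hn, gcM _ _ (by omega), hc1,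
        hgtMi n hn (i + 1) (by omega) hi, Nat.add_sub_cancel, add_assoc]
      congr 2
      refine Finset.sum_congr rfl fun k hk => ?_
      rw [Finset.mem_Icc] at hk
      rw [hcM _ _ hk.1, gcM _ _ (by omega)]
  -- (2) h = g + X / q
  have hh : ∀ i, i < N → h i = g i + PowerSeries.C (1 / q i) * PowerSeries.X := by
    intro i hi
    ext n
    rw [map_add, PowerSeries.coeff_C_mul, PowerSeries.coeff_X]
    simp only [h, g, PowerSeries.coeff_mk]
    rcases (by omega : n = 0 ∨ n = 1 ∨ 2 ≤ n) with rfl | rfl | hn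
    · simp [hc0, gc0]
    · rw [hc1, gcM _ _ le_rfl]
      rcases Nat.eq_zero_or_pos i with rfl | h0
      · rw [hGt11, hgt11]; simp
      · rw [hGt1i i h0 hi]; simp
    · rw [hcM _ _ hn, gcM _ _ (by omega), if_neg (by omega)]; simp
  have hg0 : g 0 = 0 := by
    ext n
    simp only [g, PowerSeries.coeff_mk, map_zero]
    rcases (by omega : n = 0 ∨ n = 1 ∨ 2 ≤ n) with rfl | rfl | hn
    · rfl
    · rw [gcM _ _ le_rfl, hgt11]
    · rw [gcM _ _ (by omega), hgtM1 n hn]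
  -- (3) G = X D(h) + h G
  have hG : ∀ i, i < N → G i = PowerSeries.X * D (h i) + h i * G i := by
    intro i hi
    ext n
    rw [map_add, hX]
    rcases (by omega : n = 0 ∨ n = 1 ∨ 2 ≤ n) with rfl | rfl | hn
    · rw [Aux8.conv_coeff_zero _ _ (hc0 i)]
      simp [G, PowerSeries.coeff_mk, Gc0, - PowerSeries.coeff_zero_eq_constantCoeff]
    · rw [Aux8.conv_coeff_one _ _ (hc0 i) (Gc0 _)]
      simp only [h, G, PowerSeries.coeff_mk, hc1, GcM _ 1 le_rfl]
      simp
    · rw [Aux8.conv_coeff _ _ (hc0 i) (Gc0 _) n hn]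
      simp only [h, G, PowerSeries.coeff_mk]
      rw [GcM _ _ (by omega), hcM _ _ hn, GcM _ _ (by omega), hc1, hGtM n hn i hi, add_assoc]
      congr 2
      refine Finset.sum_congr rfl fun k hk => ?_
      rw [Finset.mem_Icc] at hk
      rw [hcM _ _ hk.1, GcM _ _ (by omega)]
  -- pivots
  let r : ℕ → PowerSeries ℝ := fun i => PowerSeries.C (q i) * (1 - h i)
  let u : ℕ → PowerSeries ℝ := fun i => (r i)⁻¹
  have hru : ∀ i, i < N → u i * r i = 1 := by
    intro i hi
    apply PowerSeries.inv_mul_cancel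
    have : PowerSeries.constantCoeff (h i) = 0 := by
      rw [← PowerSeries.coeff_zero_eq_constantCoeff_apply, PowerSeries.coeff_mk, hc0]
    simp only [r, map_mul, map_sub, PowerSeries.constantCoeff_C, map_one, this]
    simpa using (hq i hi).ne'
  have hr0 : r 0 = PowerSeries.C (q 0) - PowerSeries.X := by
    have hC : PowerSeries.C (q 0) * PowerSeries.C (1 / q 0) = 1 := by
      rw [← map_mul, mul_one_div_cancel (hq 0 hN).ne', map_one]
    simp only [r]
    rw [hh 0 hN, hg0]
    linear_combination (- PowerSeries.X) * hC
  have hrs : ∀ i, i + 1 < N → r (i + 1) + PowerSeries.C (q i * e i) * u i =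
      PowerSeries.C (q (i + 1)) + PowerSeries.C (e i) - PowerSeries.X := by
    intro i hi
    have hC : PowerSeries.C (q (i+1)) * PowerSeries.C (1 / q (i+1)) = 1 := by
      rw [← map_mul, mul_one_div_cancel (hq _ hi).ne', map_one]
    have hF : PowerSeries.C (q (i+1)) * PowerSeries.C (e i / q (i+1)) = PowerSeries.C (e i) := by
      rw [← map_mul, mul_div_cancel₀ _ (hq _ hi).ne']
    have hu := hru i (by omega)
    have h1 := hg i hi
    have h2 := hh (i + 1) hi
    have key : (r (i + 1) + PowerSeries.C (q i * e i) * u i) * r i =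
      (PowerSeries.C (q (i + 1)) + PowerSeries.C (e i) - PowerSeries.X) * r i := by
      have : (r (i + 1) + PowerSeries.C (q i * e i) * u i) * r i = 
        r (i + 1) * r i + PowerSeries.C (q i) * PowerSeries.C (e i) := by
        rw [map_mul]
        linear_combination (PowerSeries.C (q i) * PowerSeries.C (e i)) * hu
      rw [this]
      simp only [r]
      rw [h2]
      linear_combination (- PowerSeries.C (q (i+1)) * PowerSeries.C (q i)) * h1
        - PowerSeries.C (q i) * h i * hF 
        - PowerSeries.X * PowerSeries.C (q i) * (1 - h i) * hC
    calc _ = (r (i + 1) + PowerSeries.C (q i * e i) * u i) * r i * u i := by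
            rw [mul_assoc, mul_comm (r i), hu, mul_one]
      _ = _ := by rw [key, mul_assoc, mul_comm (r i), hu, mul_one]
  -- the matrix
  set T := Bᵀ * B with hT
  have hTij : ∀ i j : Fin N, T i j =
    if (i : ℕ) = j then q i + (if (i : ℕ) = 0 then 0 else e (i - 1))
    else if (j : ℕ) = i + 1 then Real.sqrt (q i) * Real.sqrt (e i)
    else if (i : ℕ) = j + 1 then Real.sqrt (e j) * Real.sqrt (q j) else 0 := by
    intro i j
    rw [hT, Matrix.mul_apply]
    simp only [Matrix.transpose_apply, hB]
    rw [Aux8.bidiag_mul (fun k => √(q k)) (fun k => √(e k)) (fun k => √(q k)) (fun k => √(e k)) i j,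
      Real.mul_self_sqrt (hq _ i.2).le]
    congr 2
    split_ifs with h0
    · rfl
    · exact Real.mul_self_sqrt (he _ (by have := i.2; omega)).le
  have hBdet : IsUnit B.det := by
    have hBt : B.BlockTriangular id := by
      intro i j hij
      have hij : (j : ℕ) < i := hij
      rw [hB, if_neg (by omega), if_neg (by omega)]
    rw [Matrix.det_of_upperTriangular hBt, isUnit_iff_ne_zero, Finset.prod_ne_zero_iff]
    intro i _
    rw [hB, if_pos rfl]
    exact (Real.sqrt_pos.2 (hq i i.2)).ne'
  have hTdet : IsUnit T.det := by
    rw [hT, Matrix.det_mul, Matrix.det_transpose]; exact hBdet.mul hBdet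
  have hA : T⁻¹ * T = 1 := Matrix.nonsing_inv_mul T hTdet
  let s : ℕ → PowerSeries ℝ := fun i => PowerSeries.C (√(q i) * √(e i))
  let L : Matrix (Fin N) (Fin N) (PowerSeries ℝ) := Matrix.of fun i k =>
    if (i : ℕ) = k then 1 else if (i : ℕ) = (k : ℕ) + 1 then s k * u k else 0
  let W : Matrix (Fin N) (Fin N) (PowerSeries ℝ) := Matrix.of fun k j =>
    if (j : ℕ) = k then r k else if (j : ℕ) = (k : ℕ) + 1 then s k else 0
  let V : Matrix (Fin N) (Fin N) (PowerSeries ℝ) :=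
    Matrix.of fun i j => PowerSeries.mk fun n => (T⁻¹ ^ (n + 1)) i j
  have hLW : L * W = Matrix.of fun i j : Fin N =>
      PowerSeries.C (T i j) - (if i = j then (PowerSeries.X : PowerSeries ℝ) else 0) := by
    ext1 i j
    rw [Matrix.mul_apply]
    simp only [L, W, Matrix.of_apply]
    rw [Aux8.bidiag_mul (fun k => 1) (fun k => s k * u k) r s i j, hTij]
    obtain ⟨i, hi⟩ := i
    obtain ⟨j, hj⟩ := j
    simp only [Fin.mk.injEq]
    by_cases hij : i = j
    · subst hij
      simp only [if_true]
      cases i with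
      | zero => simp [hr0]
      | succ i =>
        have hss : s i * s i = PowerSeries.C (q i * e i) := by
          simp only [s]
          rw [← map_mul]
          congr 1
          have h1 := Real.mul_self_sqrt (hq i (by omega)).le
          have h2 := Real.mul_self_sqrt (he i hi).le
          linear_combination (√(e i) * √(e i)) * h1 + q i * h2
        have := hrs i hi
        simp only [Nat.add_sub_cancel, Nat.add_eq_zero_iff, one_ne_zero, and_false, if_false,
          map_add]
        linear_combination this + u i * hss
    · by_cases h2 : j = i + 1
      · subst h2; simp [s]
      · by_cases h3 : i = j + 1
        · subst h3
          have := hru j hj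
          simp only [hij, h2, if_false, if_true, sub_zero]
          rw [mul_assoc, this, mul_one, mul_comm √(e j)]
        · simp [hij, h2, h3]
  have hV : V * (L * W) = 1 := by
    rw [hLW]; exact Aux8.resolvent T T⁻¹ hA
  have hLt : Lᵀ.BlockTriangular id := by
    intro i j hij
    have hij : (j : ℕ) < i := hij
    simp only [L, Matrix.transpose_apply, Matrix.of_apply]
    rw [if_neg (by omega), if_neg (by omega)]
  have hWt : W.BlockTriangular id := by
    intro i j hij
    have hij : (j : ℕ) < i := hij
    simp only [W, Matrix.of_apply]
    rw [if_neg (by omega), if_neg (by omega)]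
  have hWd : ∀ i, W i i = r i := fun i => by simp [W]
  have htr := Aux8.trace_LW D L W V (fun i => u i) hLt (fun i => by simp [L]) hWt hV
    (fun i => by rw [hWd]; exact hru i i.2)
  have hdS : (L * W).map D = -1 := by
    rw [hLW]
    ext1 i j
    simp only [Matrix.map_apply, Matrix.of_apply, map_sub, Matrix.neg_apply, Matrix.one_apply, D]
    split_ifs <;> simp [PowerSeries.derivative_C, PowerSeries.derivative_X]
  rw [hdS, mul_neg, mul_one, Matrix.trace_neg] at htr
  have hfin : PowerSeries.X * V.trace = ∑ i : Fin N, G i := by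
    have : V.trace = - ∑ i : Fin N, u i * D (W i i) := by rw [← htr, neg_neg]
    rw [this, mul_neg, Finset.mul_sum, ← Finset.sum_neg_distrib]
    refine Finset.sum_congr rfl fun i _ => ?_
    rw [hWd]
    have hD : D (r i) = - (PowerSeries.C (q i) * D (h i)) := by
      simp only [r, D, Derivation.leibniz, map_sub, PowerSeries.derivative_C, smul_eq_mul]
      simp
    have h1 := hG i i.2
    have h2 : u i * (PowerSeries.C (q i) * (1 - h i)) = 1 := hru i i.2
    rw [hD]
    linear_combination G i * h2 - u i * PowerSeries.C (q i) * h1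
  intro M hM
  obtain ⟨m, rfl⟩ : ∃ m, M = m + 1 := ⟨M - 1, by omega⟩
  have := congrArg (PowerSeries.coeff (m + 1)) hfin
  rw [PowerSeries.coeff_succ_X_mul, map_sum, Matrix.trace, map_sum] at this
  simp only [V, G, Matrix.diag_apply, Matrix.of_apply, PowerSeries.coeff_mk] at this
  rw [Matrix.trace, ← Fin.sum_univ_eq_sum_range (fun i => Gt (m + 1) i) N]
  simp only [Matrix.diag_apply]
  rw [this]
  exact Finset.sum_congr rfl fun i _ => GcM _ _ (by omega)
end

section
/- Let V = (B^⊤B)^{−1} with entries V_{i,j}. Define g_i^{(r)} by: g_N^{(r)} = 0 for all r ≥ 1; g_i^{(1)} = F_i·V_{i+1,i+1} for i = 1,…,N−1; and g_i^{(r)} = F_i·g_{i+1}^{(r)} + B̌_{i+1}·g_i^{(r−1)} + Σ_{k=1}^{r−1} g_{i+1}^{(k)}·g_i^{(r−k)} for i = 1,…,N−1 and r ≥ 2. Then for every i = 1,…,N and every integer M ≥ 2, g_i^{(M)} = Σ_{j_1=i+1}^{N} ⋯ Σ_{j_{M−1}=i+1}^{N} V_{i,j_1}·V_{j_1,j_2}·⋯·V_{j_{M−2},j_{M−1}}·V_{j_{M−1},i}.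 -/
open Matrix

namespace Stmt9

/-- projection onto indices `≥ n` -/
noncomputable def P (N n : ℕ) : Matrix (Fin N) (Fin N) ℝ :=
  Matrix.diagonal (fun j => if n ≤ (j : ℕ) then 1 else 0)

/-- `G V n m = V (P_n V)^m` -/
noncomputable def G {N : ℕ} (V : Matrix (Fin N) (Fin N) ℝ) (n m : ℕ) : Matrix (Fin N) (Fin N) ℝ :=
  V * (P N n * V) ^ m

/-- path through `j` from `a` to `b` -/
def path {N : ℕ} (m : ℕ) (a b : Fin N) (j : Fin m → Fin N) (t : ℕ) : Fin N :=
  if t = 0 then a else if h : 1 ≤ t ∧ t ≤ m then j ⟨t - 1, by omega⟩ else b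

lemma G_succ {N : ℕ} (V : Matrix (Fin N) (Fin N) ℝ) (n m : ℕ) (a b : Fin N) :
    G V n (m + 1) a b = ∑ x : Fin N, if n ≤ (x : ℕ) then V a x * G V n m x b else 0 := by
  have : G V n (m + 1) = V * (P N n * G V n m) := by
    simp only [G, pow_succ', Matrix.mul_assoc]
  rw [this, Matrix.mul_apply]
  refine Finset.sum_congr rfl fun x _ => ?_
  simp only [P, Matrix.diagonal_mul]
  split_ifs <;> simp

lemma path_cons {N : ℕ} (m : ℕ) (a b x : Fin N) (j : Fin m → Fin N) (t : ℕ) :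
    path (m + 1) a b (Fin.cons x j : Fin (m + 1) → Fin N) (t + 1) = path m x b j t := by
  unfold path
  rcases t with _ | t
  · simp
  · by_cases h : t + 1 ≤ m
    · have h1 : t + 1 + 1 ≤ m + 1 := by omega
      simp [h]
      have : (⟨t + 1, by omega⟩ : Fin (m + 1)) = Fin.succ ⟨t, by omega⟩ := rfl
      rw [this, Fin.cons_succ]
    · simp [h]

lemma G_eq_sum {N : ℕ} (V : Matrix (Fin N) (Fin N) ℝ) (n m : ℕ) (a b : Fin N) :
    G V n m a b = ∑ j : Fin m → Fin N, if (∀ k, n ≤ (j k : ℕ)) then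
      ∏ k ∈ Finset.range (m + 1), V (path m a b j k) (path m a b j (k + 1)) else 0 := by
  induction m generalizing a with
  | zero => simp [G, path]
  | succ m ih =>
    rw [G_succ, ← (Fin.consEquiv (fun _ : Fin (m + 1) => Fin N)).sum_comp, Fintype.sum_prod_type]
    refine Finset.sum_congr rfl fun x _ => ?_
    by_cases hx : n ≤ (x : ℕ)
    · rw [if_pos hx, ih, Finset.mul_sum]
      refine Finset.sum_congr rfl fun j _ => ?_
      simp only [Fin.consEquiv_apply, Fin.forall_fin_succ, Fin.cons_zero, Fin.cons_succ, hx, true_and]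
      split_ifs with h
      · rw [Finset.prod_range_succ' _ (m + 1)]
        rw [mul_comm]
        congr 1
        · refine Finset.prod_congr rfl fun k _ => ?_
          exact (congrArg₂ V (path_cons m a b x j k) (path_cons m a b x j (k + 1))).symm
      · simp
    · simp [Fin.consEquiv_apply, Fin.forall_fin_succ, hx]

lemma G_decomp {N : ℕ} (V : Matrix (Fin N) (Fin N) ℝ) (i : Fin N) (m : ℕ) :
    ∀ a b, G V i m a b = G V (i + 1) m a b +
      ∑ k ∈ Finset.range m, G V (i + 1) k a i * G V i (m - 1 - k) i b := by
  induction m with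
  | zero => simp [G]
  | succ m ih =>
    intro a b
    have h1 : ∀ x : Fin N, (if (i : ℕ) ≤ x then V a x * G V i m x b else 0)
        = (if (i : ℕ) + 1 ≤ x then V a x * G V i m x b else 0)
          + (if x = i then V a i * G V i m i b else 0) := by
      intro x
      by_cases hx : x = i
      · subst hx; simp
      · have : (x : ℕ) ≠ i := fun h => hx (Fin.ext h)
        by_cases h : (i : ℕ) ≤ x
        · have h2 : (i : ℕ) + 1 ≤ x := by omega
          rw [if_pos h, if_pos h2, if_neg hx, add_zero]
        · have h2 : ¬ (i : ℕ) + 1 ≤ x := by omega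
          rw [if_neg h, if_neg h2, if_neg hx, add_zero]
    rw [G_succ, Finset.sum_congr rfl fun x _ => h1 x, Finset.sum_add_distrib,
      Finset.sum_ite_eq' Finset.univ i, if_pos (Finset.mem_univ _), Finset.sum_range_succ']
    have h0 : G V (i + 1) 0 a i = V a i := by simp [G]
    rw [h0, ← add_assoc]
    congr 1
    rw [G_succ V (i + 1) m]
    have h3 : ∀ k ∈ Finset.range m, G V (i + 1) (k + 1) a i * G V i (m + 1 - 1 - (k + 1)) i b
        = ∑ x : Fin N, if (i : ℕ) + 1 ≤ x then
            V a x * (G V (i + 1) k x i * G V i (m - 1 - k) i b) else 0 := by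
      intro k _
      rw [G_succ, Finset.sum_mul, show m + 1 - 1 - (k + 1) = m - 1 - k by omega]
      refine Finset.sum_congr rfl fun x _ => ?_
      split_ifs <;> ring
    rw [Finset.sum_congr rfl h3, Finset.sum_comm, ← Finset.sum_add_distrib]
    refine Finset.sum_congr rfl fun x _ => ?_
    split_ifs with h
    · rw [ih x b, mul_add, Finset.mul_sum]
    · simp

lemma G_succ_right {N : ℕ} (V : Matrix (Fin N) (Fin N) ℝ) (n m : ℕ) (a b : Fin N) :
    G V n (m + 1) a b = ∑ x : Fin N, if n ≤ (x : ℕ) then G V n m a x * V x b else 0 := by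
  have : G V n (m + 1) = G V n m * (P N n * V) := by
    simp only [G, pow_succ, Matrix.mul_assoc]
  rw [this, Matrix.mul_apply]
  refine Finset.sum_congr rfl fun x _ => ?_
  simp only [P, Matrix.diagonal_mul]
  split_ifs <;> simp

lemma G_row {N : ℕ} (V : Matrix (Fin N) (Fin N) ℝ) (n : ℕ) (i i' : Fin N) (a : ℝ)
    (h : ∀ j : Fin N, n ≤ (j : ℕ) → V i j = a * V i' j) (m : ℕ) (j : Fin N) (hj : n ≤ (j : ℕ)) :
    G V n m i j = a * G V n m i' j := by
  cases m with
  | zero => simpa [G] using h j hj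
  | succ m =>
    rw [G_succ, G_succ, Finset.mul_sum]
    refine Finset.sum_congr rfl fun x _ => ?_
    split_ifs with hx
    · rw [h x hx, mul_assoc]
    · simp

lemma G_shift {N : ℕ} (V : Matrix (Fin N) (Fin N) ℝ) (n : ℕ) (i i' : Fin N) (a : ℝ)
    (h : ∀ j : Fin N, n ≤ (j : ℕ) → V i j = a * V i' j)
    (h' : ∀ j : Fin N, n ≤ (j : ℕ) → V j i = a * V j i') (m : ℕ) :
    G V n (m + 1) i i = a ^ 2 * G V n (m + 1) i' i' := by
  rw [G_succ_right, G_succ_right, Finset.mul_sum]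
  refine Finset.sum_congr rfl fun x _ => ?_
  split_ifs with hx
  · rw [G_row V n i i' a h m x hx, h' x hx]; ring
  · simp

lemma V_facts (N : ℕ) (q e : ℕ → ℝ)
    (hq : ∀ i, i < N → 0 < q i) (he : ∀ i, i + 1 < N → 0 < e i)
    (B : Matrix (Fin N) (Fin N) ℝ)
    (hB : ∀ i j : Fin N, B i j =
      if (j : ℕ) = (i : ℕ) then Real.sqrt (q i)
      else if (j : ℕ) = (i : ℕ) + 1 then Real.sqrt (e i) else 0)
    (V : Matrix (Fin N) (Fin N) ℝ) (hV : V = (Bᵀ * B)⁻¹) :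
    (∀ i j, V i j = V j i) ∧
    (∀ i j : Fin N, ∀ h : (i : ℕ) + 1 < N, i < j →
      V i j = - (√(e i) / √(q i)) * V ⟨i + 1, h⟩ j) ∧
    (∀ i : Fin N, ∀ h : (i : ℕ) + 1 < N,
      V i i = 1 / q i + e i / q i * V ⟨i + 1, h⟩ ⟨i + 1, h⟩) ∧
    (∀ i : Fin N, (i : ℕ) + 1 = N → V i i = 1 / q i) := by
  have hT : B.BlockTriangular id := by
    intro i j hij
    have hij : (j : ℕ) < i := hij
    rw [hB, if_neg (by omega), if_neg (by omega)]
  have hdet : B.det ≠ 0 := by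
    rw [Matrix.det_of_isUpperTriangular hT]
    refine Finset.prod_ne_zero_iff.2 fun i _ => ?_
    rw [hB, if_pos rfl]
    exact (Real.sqrt_pos.2 (hq i i.2)).ne'
  have hu : IsUnit B.det := isUnit_iff_ne_zero.2 hdet
  have hsym : ∀ i j, V i j = V j i := by
    have : Vᵀ = V := by
      rw [hV, Matrix.transpose_nonsing_inv, Matrix.transpose_mul, Matrix.transpose_transpose]
    intro i j
    conv_lhs => rw [← this]
    rfl
  have : Invertible B := Matrix.invertibleOfIsUnitDet B hu
  have hTi : B⁻¹.BlockTriangular id := Matrix.blockTriangular_inv_of_blockTriangular hT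
  have hBV : B * V = (B⁻¹)ᵀ := by
    rw [hV, Matrix.mul_inv_rev, ← Matrix.mul_assoc, Matrix.mul_nonsing_inv _ hu, Matrix.one_mul,
      Matrix.transpose_nonsing_inv]
  have hdiag : ∀ i, B⁻¹ i i = 1 / √(q i) := by
    intro i
    have h1 : (B * B⁻¹) i i = 1 := by rw [Matrix.mul_nonsing_inv _ hu]; simp
    rw [Matrix.mul_apply, Finset.sum_eq_single i] at h1
    · rw [hB, if_pos rfl] at h1
      have := (Real.sqrt_pos.2 (hq i i.2)).ne'
      field_simp
      linarith
    · intro k _ hk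
      rcases lt_or_gt_of_ne hk with h | h
      · rw [hT h, zero_mul]
      · rw [hTi h, mul_zero]
    · simp
  have hrow : ∀ i j : Fin N, ∀ h : (i : ℕ) + 1 < N,
      (B * V) i j = √(q i) * V i j + √(e i) * V ⟨i + 1, h⟩ j := by
    intro i j h
    rw [Matrix.mul_apply, Finset.sum_eq_add i ⟨i + 1, h⟩]
    · rw [hB, hB, if_pos rfl]; simp
    · intro h; have := congrArg Fin.val h; simp at this
    · rintro k _ ⟨h1, h2⟩
      rw [hB, if_neg (fun h => h1 (Fin.ext h)), if_neg (fun h => h2 (Fin.ext h)), zero_mul]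
    · simp
    · simp
  have hoff : ∀ i j : Fin N, ∀ h : (i : ℕ) + 1 < N, i < j →
      V i j = - (√(e i) / √(q i)) * V ⟨i + 1, h⟩ j := by
    intro i j h hij
    have h1 := hrow i j h
    rw [hBV, Matrix.transpose_apply, hTi hij] at h1
    have := (Real.sqrt_pos.2 (hq i i.2)).ne'
    field_simp
    linarith
  refine ⟨hsym, hoff, ?_, ?_⟩
  · intro i h
    have h1 := hrow i i h
    rw [hBV, Matrix.transpose_apply, hdiag, hsym ⟨i + 1, h⟩ i,
      hoff i ⟨i + 1, h⟩ h (by simp [Fin.lt_def])] at h1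
    have hq0 := hq i i.2
    have hs := Real.sqrt_pos.2 hq0
    have h2 := Real.sq_sqrt hq0.le
    have h3 := Real.sq_sqrt (he i h).le
    rw [← h2, ← h3]
    have := hs.ne'
    field_simp
    field_simp at h1
    linarith
  · intro i h
    have h1 : (B * V) i i = √(q i) * V i i := by
      rw [Matrix.mul_apply, Finset.sum_eq_single i]
      · rw [hB, if_pos rfl]
      · intro k _ hk
        rw [hB, if_neg (fun h => hk (Fin.ext h)), if_neg (by omega), zero_mul]
      · simp
    rw [hBV, Matrix.transpose_apply, hdiag] at h1
    have hq0 := hq i i.2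
    have hs := Real.sqrt_pos.2 hq0
    have h2 := Real.sq_sqrt hq0.le
    have := hs.ne'
    rw [← h2]
    field_simp
    field_simp at h1
    linarith

end Stmt9

/-- matrix-theoretic interpretation of the quantities `g_i^{(M)}`:
`g_i^{(M)} = Σ_{j_1>i} ⋯ Σ_{j_{M-1}>i} V_{i,j_1} V_{j_1,j_2} ⋯ V_{j_{M-1},i}`,
where `V = (BᵀB)⁻¹`. Indices are 0-based: the paper's 1-based `g_i^{(r)}` is
`g r (i-1)`; `B̌_i = 1/q_i` is `1 / q (i-1)`; `F_i = e_i/q_i` is `e (i-1) / q (i-1)`;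
the paper's range `i+1 ≤ j_k ≤ N` becomes `i < (j k : ℕ)`. The chain product is
encoded via the sequence `c` with `c 0 = c M = i` and `c t = j_t` for `1 ≤ t ≤ M-1`. -/
theorem stmt_9 (N : ℕ) (hN : 0 < N) (q e : ℕ → ℝ)
    (hq : ∀ i, i < N → 0 < q i) (he : ∀ i, i + 1 < N → 0 < e i)
    (B : Matrix (Fin N) (Fin N) ℝ)
    (hB : ∀ i j : Fin N, B i j =
      if (j : ℕ) = (i : ℕ) then Real.sqrt (q i)
      else if (j : ℕ) = (i : ℕ) + 1 then Real.sqrt (e i) else 0)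
    (V : Matrix (Fin N) (Fin N) ℝ) (hV : V = (Bᵀ * B)⁻¹)
    (g : ℕ → ℕ → ℝ)
    (hgN : ∀ r, 1 ≤ r → g r (N - 1) = 0)
    (hg1 : ∀ i (h1 : i + 1 < N),
      g 1 i = e i / q i * V ⟨i + 1, by omega⟩ ⟨i + 1, by omega⟩)
    (hgr : ∀ r, 2 ≤ r → ∀ i, i + 1 < N →
      g r i = e i / q i * g r (i + 1) + 1 / q (i + 1) * g (r - 1) i
        + ∑ k ∈ Finset.Icc 1 (r - 1), g k (i + 1) * g (r - k) i) :
    ∀ i (hi : i < N), ∀ M, 2 ≤ M →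
      g M i =
        ∑ j ∈ Finset.univ.filter (fun j : Fin (M - 1) → Fin N => ∀ k, i < (j k : ℕ)),
          (fun c : ℕ → Fin N => ∏ k ∈ Finset.range M, V (c k) (c (k + 1)))
            (fun t => if h : 1 ≤ t ∧ t ≤ M - 1 then j ⟨t - 1, by omega⟩ else ⟨i, hi⟩) := by
  obtain ⟨hsym, hoff, hdiag, hlast⟩ := Stmt9.V_facts N q e hq he B hB V hV
  -- the shift identity
  have hshift : ∀ (i : Fin N) (h : (i : ℕ) + 1 < N) (m : ℕ),
      Stmt9.G V (i + 1) (m + 1) i i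
        = e i / q i * Stmt9.G V (i + 1) (m + 1) ⟨i + 1, h⟩ ⟨i + 1, h⟩ := by
    intro i h m
    have h1 : ∀ j : Fin N, (i : ℕ) + 1 ≤ (j : ℕ) →
        V i j = - (√(e i) / √(q i)) * V ⟨i + 1, h⟩ j := fun j hj =>
      hoff i j h (by rw [Fin.lt_def]; omega)
    rw [Stmt9.G_shift V (i + 1) i ⟨i + 1, h⟩ _ h1
      (fun j hj => by rw [hsym j i, hsym j, h1 j hj]) m]
    rw [neg_sq, div_pow, Real.sq_sqrt (he i h).le, Real.sq_sqrt (hq i i.2).le]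
  have key : ∀ d i (hi : i < N), i + 1 + d = N →
      (V ⟨i, hi⟩ ⟨i, hi⟩ = 1 / q i + g 1 i) ∧
      ∀ m, g (m + 2) i = Stmt9.G V (i + 1) (m + 1) ⟨i, hi⟩ ⟨i, hi⟩ := by
    intro d
    induction d with
    | zero =>
      intro i hi hd
      have hi' : i = N - 1 := by omega
      have hg0 : ∀ r, 1 ≤ r → g r i = 0 := by rw [hi']; exact hgN
      refine ⟨?_, fun m => ?_⟩
      · rw [hlast ⟨i, hi⟩ hd, hg0 1 le_rfl, add_zero]
      · rw [hg0 _ (by omega), Stmt9.G_succ]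
        symm
        refine Finset.sum_eq_zero fun x _ => ?_
        rw [if_neg (by omega)]
    | succ d ih =>
      intro i hi hd
      have h : i + 1 < N := by omega
      obtain ⟨ih1, ih2⟩ := ih (i + 1) h (by omega)
      have hW : ∀ m, g (m + 1) i
          = e i / q i * Stmt9.G V (i + 1) m ⟨i + 1, h⟩ ⟨i + 1, h⟩ := by
        intro m
        induction m using Nat.strong_induction_on with
        | _ m ihm =>
          cases m with
          | zero => rw [hg1 i h]; simp [Stmt9.G]
          | succ m =>
            have hd := Stmt9.G_decomp V ⟨i + 1, h⟩ (m + 1) ⟨i + 1, h⟩ ⟨i + 1, h⟩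
            simp only at hd
            rw [hgr (m + 1 + 1) (by omega) i h, hd, ih2 m, mul_add, add_assoc]
            congr 1
            have h2 : ∑ k ∈ Finset.Icc 1 (m + 1 + 1 - 1), g k (i + 1) * g (m + 1 + 1 - k) i
                = ∑ k ∈ Finset.range (m + 1), g (k + 1) (i + 1) * g (m - k + 1) i := by
              have h6 := Finset.sum_Ico_add' (fun k => g k (i + 1) * g (m + 1 + 1 - k) i) 0 (m + 1) 1
              rw [Finset.range_eq_Ico]
              refine Eq.trans ?_ (h6.symm.trans (Finset.sum_congr rfl fun k hk => ?_))
              · refine Finset.sum_congr ?_ fun _ _ => rfl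
                ext k
                simp only [Finset.mem_Icc, Finset.mem_Ico]
                omega
              · rw [Finset.mem_Ico] at hk
                have h7 : m + 1 + 1 - (k + 1) = m - k + 1 := by omega
                simp only [h7]
            rw [h2, Finset.sum_range_succ', Finset.sum_range_succ', mul_add, Finset.mul_sum]
            have h3 : Stmt9.G V (i + 1 + 1) 0 ⟨i + 1, h⟩ ⟨i + 1, h⟩
                = 1 / q (i + 1) + g 1 (i + 1) := by rw [← ih1]; simp [Stmt9.G]
            have h4 : ∀ k ∈ Finset.range m, g (k + 1 + 1) (i + 1) * g (m - (k + 1) + 1) i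
                = e i / q i * (Stmt9.G V (i + 1 + 1) (k + 1) ⟨i + 1, h⟩ ⟨i + 1, h⟩ *
                  Stmt9.G V (i + 1) (m + 1 - 1 - (k + 1)) ⟨i + 1, h⟩ ⟨i + 1, h⟩) := by
              intro k hk
              rw [ih2 k, ihm (m - (k + 1)) (by omega)]
              simp only [Nat.add_sub_cancel]
              ring
            rw [Finset.sum_congr rfl h4, h3]
            have h5 := ihm m (by omega)
            simp only [Nat.add_sub_cancel, Nat.sub_zero, zero_add]
            rw [h5]
            ring
      refine ⟨?_, fun m => ?_⟩
      · rw [hdiag ⟨i, hi⟩ h, hg1 i h]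
      · rw [hW (m + 1), hshift ⟨i, hi⟩ h m]
  intro i hi M hM
  obtain ⟨m, rfl⟩ : ∃ m, M = m + 2 := ⟨M - 2, by omega⟩
  rw [(key (N - 1 - i) i hi (by omega)).2 m, Stmt9.G_eq_sum, Finset.sum_filter]
  have hp : ∀ (j : Fin (m + 1) → Fin N) t, Stmt9.path (m + 1) ⟨i, hi⟩ ⟨i, hi⟩ j t =
      if h : 1 ≤ t ∧ t ≤ m + 1 then j ⟨t - 1, by omega⟩ else ⟨i, hi⟩ := by
    intro j t
    unfold Stmt9.path
    by_cases ht : t = 0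
    · subst ht; simp
    · rw [if_neg ht]
  simp only [hp]
  rfl
end

section
/- Define h̃_i^{(p)} by: h̃_N^{(1)} = 1/q_N; h̃_i^{(1)} = F_i·h̃_{i+1}^{(1)} + 1/q_i for i = 1,…,N−1; h̃_N^{(p)} = 0 for p ≥ 2; and h̃_i^{(p)} = F_i·(h̃_{i+1}^{(p)} + p·h̃_{i+1}^{(1)}·h̃_{i+1}^{(p−1)}) + Σ_{k=1}^{p−2} C(p,k)·h̃_{i+1}^{(k)}·h̃_i^{(p−k)} for i = 1,…,N−1 and p ≥ 2. Define g_i^{(r)} by: g_N^{(r)} = 0 for all r ≥ 1; g_i^{(1)} = F_i·V_{i+1,i+1} for i = 1,…,N−1, where V = (B^⊤B)^{−1}; and g_i^{(r)} = F_i·g_{i+1}^{(r)} + B̌_{i+1}·g_i^{(r−1)} + Σ_{k=1}^{r−1} g_{i+1}^{(k)}·g_i^{(r−k)} for i = 1,…,N−1 and r ≥ 2. Then for every i = 1,…,N and every integer M ≥ 2, h̃_i^{(M)} = M!·g_i^{(M)}. -/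
open Matrix

theorem aux_mul (N : ℕ) (q e : ℕ → ℝ)
    (B : Matrix (Fin N) (Fin N) ℝ)
    (hB : ∀ i j : Fin N, B i j =
      if (j : ℕ) = (i : ℕ) then Real.sqrt (q i)
      else if (j : ℕ) = (i : ℕ) + 1 then Real.sqrt (e i) else 0)
    (A : Matrix (Fin N) (Fin N) ℝ) (i j : Fin N) :
    (B * A) i j = Real.sqrt (q i) * A i j +
      if h : (i : ℕ) + 1 < N then Real.sqrt (e i) * A ⟨i + 1, h⟩ j else 0 := by
  rw [Matrix.mul_apply]
  have h1 : ∀ k : Fin N, B i k * A k j = (if k = i then Real.sqrt (q i) * A k j else 0) +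
      (if (k : ℕ) = i + 1 then Real.sqrt (e i) * A k j else 0) := by
    intro k
    rw [hB]
    by_cases h : k = i
    · subst h; simp
    · have h' : (k : ℕ) ≠ i := fun hh => h (Fin.ext hh)
      simp [h, h']
  rw [Finset.sum_congr rfl (fun k _ => h1 k), Finset.sum_add_distrib]
  congr 1
  · simp
  · split_ifs with h
    · rw [Finset.sum_eq_single (⟨i + 1, h⟩ : Fin N)]
      · simp
      · intro b _ hb
        rw [if_neg]
        intro hh
        exact hb (Fin.ext hh)
      · simp
    · apply Finset.sum_eq_zero
      intro k _
      rw [if_neg]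
      have := k.2
      omega

theorem aux_V (N : ℕ) (q e : ℕ → ℝ)
    (hq : ∀ i, i < N → 0 < q i) (he : ∀ i, i + 1 < N → 0 < e i)
    (B : Matrix (Fin N) (Fin N) ℝ)
    (hB : ∀ i j : Fin N, B i j =
      if (j : ℕ) = (i : ℕ) then Real.sqrt (q i)
      else if (j : ℕ) = (i : ℕ) + 1 then Real.sqrt (e i) else 0)
    (V : Matrix (Fin N) (Fin N) ℝ) (hV : V = (Bᵀ * B)⁻¹) (i : Fin N) :
    V i i = 1 / q i +
      if h : (i : ℕ) + 1 < N then e i / q i * V ⟨i + 1, h⟩ ⟨i + 1, h⟩ else 0 := by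
  have hT : B.BlockTriangular id := by
    intro a b hab
    have hab' : (b : ℕ) < a := hab
    rw [hB, if_neg (by omega), if_neg (by omega)]
  have hdet : IsUnit B.det := by
    rw [Matrix.det_of_upperTriangular hT]
    apply IsUnit.mk0
    apply Finset.prod_ne_zero_iff.2
    intro a _
    rw [hB, if_pos rfl]
    exact (Real.sqrt_pos.2 (hq a a.2)).ne'
  haveI : Invertible B := B.invertibleOfIsUnitDet hdet
  have hX : (B⁻¹).BlockTriangular id := Matrix.blockTriangular_inv_of_blockTriangular hT
  have hV2 : V = B⁻¹ * (B⁻¹)ᵀ := by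
    rw [hV, Matrix.mul_inv_rev, Matrix.transpose_nonsing_inv]
  have hBV : B * V = (B⁻¹)ᵀ := by
    rw [hV2, ← Matrix.mul_assoc, Matrix.mul_nonsing_inv _ hdet, Matrix.one_mul]
  have hsym : Vᵀ = V := by
    rw [hV2, Matrix.transpose_mul, Matrix.transpose_transpose]
  have hBX : B * B⁻¹ = 1 := Matrix.mul_nonsing_inv _ hdet
  have hqi := hq i i.2
  have hs := Real.sqrt_pos.2 hqi
  have hss := Real.mul_self_sqrt hqi.le
  have e1 := aux_mul N q e B hB V i i
  have e2 := aux_mul N q e B hB (B⁻¹) i i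
  rw [hBV, Matrix.transpose_apply] at e1
  rw [hBX, Matrix.one_apply_eq] at e2
  by_cases h : (i : ℕ) + 1 < N
  · have e3 := aux_mul N q e B hB V i ⟨i + 1, h⟩
    have hx0 : B⁻¹ ⟨i + 1, h⟩ i = 0 := hX (show i < ⟨i + 1, h⟩ from Nat.lt_succ_self _)
    rw [hBV, Matrix.transpose_apply, hx0] at e3
    have hs2 : V i ⟨i + 1, h⟩ = V ⟨i + 1, h⟩ i := by
      conv_lhs => rw [← hsym]
      rfl
    rw [hs2] at e3
    simp only [h, dif_pos] at e1 e2 e3 ⊢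
    rw [hx0] at e2
    have hee := Real.mul_self_sqrt (he i h).le
    have : q i * V i i = 1 + e i * V ⟨i + 1, h⟩ ⟨i + 1, h⟩ := by
      rw [← hss, ← hee]
      linear_combination (-√(q i)) * e1 - e2 + √(e i) * e3
    field_simp
    linarith
  · simp only [h, dif_neg, not_false_iff, add_zero] at e1 e2 ⊢
    have : q i * V i i = 1 := by
      rw [← hss]
      linear_combination (-√(q i)) * e1 - e2
    field_simp
    linarith

/-- the relationship `h̃_i^{(M)} = M! · g_i^{(M)}` for `M ≥ 2`.
Indices are 0-based: the paper's 1-based `h̃_i^{(p)}` is `ht p (i-1)`,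
`g_i^{(r)}` is `g r (i-1)`; `B̌_i = 1/q_i` is `1 / q (i-1)`;
`F_i = e_i/q_i` is `e (i-1) / q (i-1)`; `V = (BᵀB)⁻¹`. -/
theorem stmt_10 (N : ℕ) (hN : 0 < N) (q e : ℕ → ℝ)
    (hq : ∀ i, i < N → 0 < q i) (he : ∀ i, i + 1 < N → 0 < e i)
    (B : Matrix (Fin N) (Fin N) ℝ)
    (hB : ∀ i j : Fin N, B i j =
      if (j : ℕ) = (i : ℕ) then Real.sqrt (q i)
      else if (j : ℕ) = (i : ℕ) + 1 then Real.sqrt (e i) else 0)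
    (V : Matrix (Fin N) (Fin N) ℝ) (hV : V = (Bᵀ * B)⁻¹)
    (ht : ℕ → ℕ → ℝ)
    (hht1a : ht 1 (N - 1) = 1 / q (N - 1))
    (hht1b : ∀ i, i + 1 < N → ht 1 i = e i / q i * ht 1 (i + 1) + 1 / q i)
    (hhtp0 : ∀ p, 2 ≤ p → ht p (N - 1) = 0)
    (hhtp : ∀ p, 2 ≤ p → ∀ i, i + 1 < N →
      ht p i = e i / q i * (ht p (i + 1) + p * ht 1 (i + 1) * ht (p - 1) (i + 1))
        + ∑ k ∈ Finset.Icc 1 (p - 2), (p.choose k : ℝ) * ht k (i + 1) * ht (p - k) i)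
    (g : ℕ → ℕ → ℝ)
    (hgN : ∀ r, 1 ≤ r → g r (N - 1) = 0)
    (hg1 : ∀ i (h1 : i + 1 < N),
      g 1 i = e i / q i * V ⟨i + 1, by omega⟩ ⟨i + 1, by omega⟩)
    (hgr : ∀ r, 2 ≤ r → ∀ i, i + 1 < N →
      g r i = e i / q i * g r (i + 1) + 1 / q (i + 1) * g (r - 1) i
        + ∑ k ∈ Finset.Icc 1 (r - 1), g k (i + 1) * g (r - k) i) :
    ∀ i, i < N → ∀ M, 2 ≤ M → ht M i = (Nat.factorial M : ℝ) * g M i := by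
  -- diagonal entries of V
  have hVd : ∀ d i, ∀ h : i < N, i + d + 1 = N → V ⟨i, h⟩ ⟨i, h⟩ = ht 1 i := by
    intro d
    induction d with
    | zero =>
      intro i h hd
      have := aux_V N q e hq he B hB V hV ⟨i, h⟩
      rw [this, dif_neg (by simp; omega)]
      have : i = N - 1 := by omega
      subst this
      simp [hht1a]
    | succ d ih =>
      intro i h hd
      have h1 : i + 1 < N := by omega
      have := aux_V N q e hq he B hB V hV ⟨i, h⟩
      rw [this, dif_pos (by simpa using h1)]
      have h2 := ih (i + 1) h1 (by omega)
      simp only [h2]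
      rw [hht1b i h1]
      ring
  have hg1' : ∀ i, i + 1 < N → g 1 i = e i / q i * ht 1 (i + 1) := by
    intro i h1
    rw [hg1 i h1, hVd (N - 1 - (i + 1)) (i + 1) h1 (by omega)]
  have hgh : ∀ i, i < N → 1 / q i + g 1 i = ht 1 i := by
    intro i h
    by_cases h1 : i + 1 < N
    · rw [hg1' i h1, hht1b i h1]; ring
    · have : i = N - 1 := by omega
      subst this
      rw [hgN 1 le_rfl, hht1a, add_zero]
  have key : ∀ d i, i + d + 1 = N → ∀ M, 2 ≤ M → ht M i = (Nat.factorial M : ℝ) * g M i := by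
    intro d
    induction d with
    | zero =>
      intro i hd M hM
      have : i = N - 1 := by omega
      subst this
      rw [hhtp0 M hM, hgN M (by omega), mul_zero]
    | succ d ih =>
      intro i hd M
      have h1 : i + 1 < N := by omega
      have ih' := ih (i + 1) (by omega)
      induction M using Nat.strong_induction_on with
      | _ M ihM =>
      intro hM
      -- normalized values at the next index
      obtain ⟨H, hH⟩ : ∃ H : ℕ → ℝ, ∀ k, H k = if k = 1 then ht 1 (i + 1) else g k (i + 1) :=
        ⟨_, fun _ => rfl⟩
      have hHh : ∀ k, 1 ≤ k → ht k (i + 1) = (Nat.factorial k : ℝ) * H k := by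
        intro k hk
        rw [hH]
        split_ifs with h
        · subst h; simp
        · exact ih' k (by omega)
      obtain ⟨m, rfl⟩ : ∃ m, M = m + 2 := ⟨M - 2, by omega⟩
      have hG : g (m + 2) i = e i / q i * g (m + 2) (i + 1)
          + ∑ k ∈ Finset.Icc 1 (m + 1), H k * g (m + 2 - k) i := by
        rw [hgr (m + 2) hM i h1]
        have a1 : m + 2 - 1 = m + 1 := by omega
        rw [a1, add_assoc]
        congr 1
        rw [← Finset.add_sum_Ioc_eq_sum_Icc (by omega : 1 ≤ m + 1),
          ← Finset.add_sum_Ioc_eq_sum_Icc (by omega : 1 ≤ m + 1), ← add_assoc, a1, ← add_mul,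
          hgh (i + 1) h1]
        congr 1
        · rw [hH, if_pos rfl]
        · apply Finset.sum_congr rfl
          intro k hk
          rw [Finset.mem_Ioc] at hk
          rw [hH, if_neg (by omega)]
      rw [Finset.sum_Icc_succ_top (by omega)] at hG
      have a2 : m + 2 - (m + 1) = 1 := by omega
      rw [a2, hg1' i h1] at hG
      rw [hhtp (m + 2) hM i h1, hG, ih' (m + 2) hM]
      have a1 : m + 2 - 1 = m + 1 := by omega
      have a3 : m + 2 - 2 = m := by omega
      rw [a1, a3, hHh (m + 1) (by omega)]
      have hsum : ∑ k ∈ Finset.Icc 1 m, ((m + 2).choose k : ℝ) * ht k (i + 1) * ht (m + 2 - k) i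
          = (Nat.factorial (m + 2) : ℝ) * ∑ k ∈ Finset.Icc 1 m, H k * g (m + 2 - k) i := by
        rw [Finset.mul_sum]
        apply Finset.sum_congr rfl
        intro k hk
        rw [Finset.mem_Icc] at hk
        rw [hHh k hk.1, ihM (m + 2 - k) (by omega) (by omega)]
        have hc := Nat.choose_mul_factorial_mul_factorial (show k ≤ m + 2 by omega)
        rw [← hc]
        push_cast
        ring
      rw [hsum, Nat.factorial_succ (m + 1)]
      push_cast
      ring
  intro i hi
  exact key (N - 1 - i) i (by omega)
end
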